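/- arXiv:1904.01925 — 10 statements merged into one kernel-verified Lean document; each statement's English description precedes it below -/
import Mathlib

section
/- Let n, s, t be natural numbers with 1 ≤ s ≤ t ≤ n, and assume t ≥ 2s and s ≥ n − t. Then the number of monochromatic Schur triples on [n] under the block coloring R^s B^{t−s} R^{n−t} is exactly M(n,s,t) = s(s−1)/2 + (t−2s)(t−2s−1)/2 + (n−t)(n−t−1). -/
/-- The number of monochromatic Schur triples `(x, y, z) ∈ [n]³` with `x + y = z`
under the block coloring `R^s B^(t-s) R^(n-t)` of `[n] = {1, …, n}`
(an integer `i ∈ [n]` is red iff `i ≤ s` or `t < i`, blue otherwise). -/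
def mstCount (n s t : ℕ) : ℕ :=
  ((Finset.Icc 1 n ×ˢ Finset.Icc 1 n ×ˢ Finset.Icc 1 n).filter
    (fun p => p.1 + p.2.1 = p.2.2 ∧
      (((p.1 ≤ s ∨ t < p.1) ∧ (p.2.1 ≤ s ∨ t < p.2.1) ∧ (p.2.2 ≤ s ∨ t < p.2.2)) ∨
       ((s < p.1 ∧ p.1 ≤ t) ∧ (s < p.2.1 ∧ p.2.1 ≤ t) ∧ (s < p.2.2 ∧ p.2.2 ≤ t))))).card

def triS (a b m : ℕ) : Finset (ℕ × ℕ × ℕ) :=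
  ((Finset.range m).sigma (fun i => Finset.range i)).image
    (fun q : (_ : ℕ) × ℕ => (q.2 + 1 + a, q.1 - q.2 + b, q.1 + 1 + a + b))

theorem triS_card (a b m : ℕ) : (triS a b m).card = m * (m - 1) / 2 := by
  unfold triS
  rw [Finset.card_image_of_injOn]
  · rw [Finset.card_sigma]
    simp only [Finset.card_range]
    exact Finset.sum_range_id m
  · rintro ⟨i, j⟩ _ ⟨k, l⟩ _ h
    simp only [Prod.mk.injEq] at h
    obtain rfl : i = k := by omega
    obtain rfl : j = l := by omega
    rfl

theorem triS_mem (a b m x y z : ℕ) :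
    (x, y, z) ∈ triS a b m ↔ a < x ∧ b < y ∧ x + y = z ∧ z ≤ m + a + b := by
  unfold triS
  simp only [Finset.mem_image, Finset.mem_sigma, Finset.mem_range, Prod.mk.injEq]
  constructor
  · rintro ⟨⟨i, j⟩, h, h'⟩
    simp only at h h'
    omega
  · intro h
    refine ⟨⟨z - 1 - a - b, x - 1 - a⟩, ?_, ?_⟩
    · simp only
      omega
    · simp only
      omega

theorem exact_count_block_coloring (n s t : ℕ) (hs : 1 ≤ s) (hst : s ≤ t) (htn : t ≤ n)
    (h2s : 2 * s ≤ t) (hnt : n - t ≤ s) :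
    mstCount n s t =
      s * (s - 1) / 2 + (t - 2 * s) * (t - 2 * s - 1) / 2 + (n - t) * (n - t - 1) := by
  have key : mstCount n s t =
      (((triS 0 0 s ∪ triS s s (t - 2 * s)) ∪ triS t 0 (n - t)) ∪ triS 0 t (n - t)).card := by
    unfold mstCount
    congr 1
    ext ⟨x, y, z⟩
    simp only [Finset.mem_filter, Finset.mem_product, Finset.mem_Icc, Finset.mem_union, triS_mem]
    omega
  have ev : 2 ∣ (n - t) * (n - t - 1) := (Nat.even_mul_pred_self (n - t)).two_dvd
  rw [key, Finset.card_union_of_disjoint, Finset.card_union_of_disjoint,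
    Finset.card_union_of_disjoint]
  · simp only [triS_card]
    omega
  all_goals
    rw [Finset.disjoint_left]
    rintro ⟨x, y, z⟩
    simp only [Finset.mem_union, triS_mem]
    omega
end

section
/- Fix n ∈ ℕ and set s₀ = ⌊(4n+2)/11⌋ and t₀ = ⌊10n/11⌋. Then for all integers s, t with 0 ≤ s ≤ t ≤ n, t ≥ 2s, and s ≥ n − t, one has M(n,s,t) ≥ M(n,s₀,t₀); that is, (s₀,t₀) minimizes the number of monochromatic Schur triples among all block colorings satisfying these constraints. -/
def triP (m : ℕ) : Finset (ℕ × ℕ) :=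
  (Finset.range m).biUnion (fun j => (Finset.range j).image (fun i => (i, j)))

theorem mem_triP (m : ℕ) (p : ℕ × ℕ) : p ∈ triP m ↔ p.1 < p.2 ∧ p.2 < m := by
  obtain ⟨i, j⟩ := p
  simp only [triP, Finset.mem_biUnion, Finset.mem_range, Finset.mem_image, Prod.mk.injEq]
  constructor
  · rintro ⟨a, ha, b, hb, rfl, rfl⟩
    exact ⟨hb, ha⟩
  · rintro ⟨h1, h2⟩
    exact ⟨j, h2, i, h1, rfl, rfl⟩

theorem card_triP (m : ℕ) : ((triP m).card : ℤ) * 2 = (m : ℤ) * m - m := by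
  have h : (triP m).card = ∑ j ∈ Finset.range m, j := by
    unfold triP
    rw [Finset.card_biUnion]
    · apply Finset.sum_congr rfl
      intro j _
      rw [Finset.card_image_of_injective _ (fun a b h => (Prod.mk.inj h).1), Finset.card_range]
    · intro a _ b _ hab
      rw [Function.onFun, Finset.disjoint_left]
      intro p hp hq
      simp only [Finset.mem_image] at hp hq
      obtain ⟨_, _, rfl⟩ := hp
      obtain ⟨_, _, h⟩ := hq
      exact hab (Prod.mk.inj h).2.symm
  rw [h]
  clear h
  induction m with
  | zero => simp
  | succ k ih =>
    rw [Finset.sum_range_succ]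
    push_cast at ih ⊢
    linarith

theorem mst_formula (n s t : ℕ) (htn : t ≤ n) (h2s : 2 * s ≤ t) (hnt : n ≤ s + t) :
    mstCount n s t = (triP s).card + (triP (n - t)).card + (triP (n - t)).card
      + (triP (t - 2 * s)).card := by
  let f1 : ℕ × ℕ → ℕ × ℕ × ℕ := fun p => (p.1 + 1, p.2 - p.1, p.2 + 1)
  let f2 : ℕ × ℕ → ℕ × ℕ × ℕ := fun p => (p.2 - p.1, t + 1 + p.1, t + 1 + p.2)
  let f3 : ℕ × ℕ → ℕ × ℕ × ℕ := fun p => (t + 1 + p.1, p.2 - p.1, t + 1 + p.2)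
  let f4 : ℕ × ℕ → ℕ × ℕ × ℕ := fun p => (s + 1 + p.1, s + (p.2 - p.1), 2 * s + 1 + p.2)
  have c1 : ((triP s).image f1).card = (triP s).card := by
    apply Finset.card_image_of_injective
    rintro ⟨a, b⟩ ⟨c, d⟩ h
    simp only [f1, Prod.mk.injEq] at h ⊢
    omega
  have c2 : ((triP (n - t)).image f2).card = (triP (n - t)).card := by
    apply Finset.card_image_of_injective
    rintro ⟨a, b⟩ ⟨c, d⟩ h
    simp only [f2, Prod.mk.injEq] at h ⊢
    omega
  have c3 : ((triP (n - t)).image f3).card = (triP (n - t)).card := by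
    apply Finset.card_image_of_injective
    rintro ⟨a, b⟩ ⟨c, d⟩ h
    simp only [f3, Prod.mk.injEq] at h ⊢
    omega
  have c4 : ((triP (t - 2 * s)).image f4).card = (triP (t - 2 * s)).card := by
    apply Finset.card_image_of_injective
    rintro ⟨a, b⟩ ⟨c, d⟩ h
    simp only [f4, Prod.mk.injEq] at h ⊢
    omega
  have d1 : Disjoint ((triP s).image f1) ((triP (n - t)).image f2) := by
    rw [Finset.disjoint_left]
    intro p hp hq
    simp only [Finset.mem_image, mem_triP] at hp hq
    obtain ⟨⟨a, b⟩, h, rfl⟩ := hp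
    obtain ⟨⟨c, d⟩, h', e⟩ := hq
    simp only [f1, f2, Prod.mk.injEq] at h h' e
    omega
  have d2 : Disjoint ((triP s).image f1 ∪ (triP (n - t)).image f2)
      ((triP (n - t)).image f3) := by
    rw [Finset.disjoint_left]
    intro p hp hq
    simp only [Finset.mem_union, Finset.mem_image, mem_triP] at hp hq
    obtain ⟨⟨c, d⟩, h', rfl⟩ := hq
    rcases hp with ⟨⟨a, b⟩, h, e⟩ | ⟨⟨a, b⟩, h, e⟩ <;>
    · simp only [f1, f2, f3, Prod.mk.injEq] at h h' e
      omega
  have d3 : Disjoint ((triP s).image f1 ∪ (triP (n - t)).image f2 ∪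
      (triP (n - t)).image f3) ((triP (t - 2 * s)).image f4) := by
    rw [Finset.disjoint_left]
    intro p hp hq
    simp only [Finset.mem_union, Finset.mem_image, mem_triP] at hp hq
    obtain ⟨⟨c, d⟩, h', rfl⟩ := hq
    rcases hp with (⟨⟨a, b⟩, h, e⟩ | ⟨⟨a, b⟩, h, e⟩) | ⟨⟨a, b⟩, h, e⟩ <;>
    · simp only [f1, f2, f3, f4, Prod.mk.injEq] at h h' e
      omega
  rw [← c1, ← c4]
  nth_rewrite 1 [← c2]
  rw [← c3, ← Finset.card_union_of_disjoint d1, ← Finset.card_union_of_disjoint d2,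
    ← Finset.card_union_of_disjoint d3]
  unfold mstCount
  congr 1
  ext ⟨x, y, z⟩
  simp only [Finset.mem_filter, Finset.mem_product, Finset.mem_Icc, Finset.mem_union,
    Finset.mem_image, mem_triP]
  constructor
  · rintro ⟨hb, hz, hc⟩
    by_cases hB : s < z ∧ z ≤ t
    · right
      refine ⟨(x - s - 1, z - 2 * s - 1), ?_, ?_⟩
      · dsimp only; omega
      · simp only [f4, Prod.mk.injEq]; omega
    · left
      by_cases hzs : z ≤ s
      · left; left
        refine ⟨(x - 1, z - 1), ?_, ?_⟩
        · dsimp only; omega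
        · simp only [f1, Prod.mk.injEq]; omega
      · by_cases hx : x ≤ s
        · left; right
          refine ⟨(y - t - 1, z - t - 1), ?_, ?_⟩
          · dsimp only; omega
          · simp only [f2, Prod.mk.injEq]; omega
        · right
          refine ⟨(x - t - 1, z - t - 1), ?_, ?_⟩
          · dsimp only; omega
          · simp only [f3, Prod.mk.injEq]; omega
  · rintro (((⟨⟨a, b⟩, h, e⟩ | ⟨⟨a, b⟩, h, e⟩) | ⟨⟨a, b⟩, h, e⟩) | ⟨⟨a, b⟩, h, e⟩) <;>
    · simp only [f1, f2, f3, f4, Prod.mk.injEq] at h e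
      omega

theorem mst_formula' (n s t : ℕ) (htn : t ≤ n) (h2s : 2 * s ≤ t) (hnt : n ≤ s + t) :
    (mstCount n s t : ℤ) * 2 = (s * s - s : ℤ) + 2 * ((n - t) * (n - t) - (n - t))
      + ((t - 2 * s) * (t - 2 * s) - (t - 2 * s)) := by
  rw [mst_formula n s t htn h2s hnt]
  have h1 := card_triP s
  have h2 := card_triP (n - t)
  have h3 := card_triP (t - 2 * s)
  push_cast [Nat.cast_sub htn, Nat.cast_sub h2s] at h1 h2 h3 ⊢
  linarith

theorem int_sq_bound (a : ℤ) (h : a * a - a ≤ 14) : -3 ≤ a ∧ a ≤ 4 := by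
  constructor <;> nlinarith

theorem int_sq_nonneg (a : ℤ) : 0 ≤ a * a - a := by
  rcases le_or_gt a 0 with h | h <;> nlinarith

theorem small_min (r a c a0 c0 : ℤ) (hr0 : 0 ≤ r) (hr : r ≤ 10)
    (ha0 : a0 = (4 * r + 2) / 11) (hc0 : c0 = r - 10 * r / 11) :
    (a0 * a0 - a0) + 2 * (c0 * c0 - c0) + ((r - c0 - 2 * a0) * (r - c0 - 2 * a0) - (r - c0 - 2 * a0))
    ≤ (a * a - a) + 2 * (c * c - c) + ((r - c - 2 * a) * (r - c - 2 * a) - (r - c - 2 * a)) := by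
  by_contra hlt
  push Not at hlt
  have hb := int_sq_nonneg (r - c - 2 * a)
  have hA := int_sq_nonneg a
  have hC := int_sq_nonneg c
  have hbd : (a0 * a0 - a0) + 2 * (c0 * c0 - c0) +
      ((r - c0 - 2 * a0) * (r - c0 - 2 * a0) - (r - c0 - 2 * a0)) ≤ 14 := by
    subst ha0 hc0
    interval_cases r <;> norm_num
  obtain ⟨a1, a2⟩ := int_sq_bound a (by linarith)
  obtain ⟨c1, c2⟩ := int_sq_bound c (by linarith)
  clear hb hA hC hbd
  subst ha0 hc0
  interval_cases r <;> norm_num at hlt <;> interval_cases a <;> interval_cases c <;> omega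

/-- With `s₀ = ⌊(4n+2)/11⌋` and `t₀ = ⌊10n/11⌋`, the pair `(s₀, t₀)` minimizes
`M(n,s,t)` among all `0 ≤ s ≤ t ≤ n` with `t ≥ 2s` and `s ≥ n - t`. -/
theorem block_coloring_minimizer (n : ℕ) (s t : ℕ) (hst : s ≤ t) (htn : t ≤ n)
    (h2s : 2 * s ≤ t) (hnt : n - t ≤ s) :
    mstCount n ((4 * n + 2) / 11) (10 * n / 11) ≤ mstCount n s t := by
  by_cases h1 : n = 1
  · subst h1
    have : mstCount 1 ((4 * 1 + 2) / 11) (10 * 1 / 11) = 0 := by decide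
    omega
  by_cases h2 : n = 2
  · subst h2
    have : mstCount 2 ((4 * 2 + 2) / 11) (10 * 2 / 11) = 0 := by decide
    omega
  have e1 := mst_formula' n s t htn h2s (by omega)
  have e2 := mst_formula' n ((4 * n + 2) / 11) (10 * n / 11) (by omega) (by omega) (by omega)
  obtain ⟨k, r, hr, hn⟩ : ∃ k r : ℕ, r ≤ 10 ∧ n = 11 * k + r :=
    ⟨n / 11, n % 11, by omega, by omega⟩
  have hm := small_min r (s - 4 * k) (n - t - k) _ _ (by omega) (by omega) rfl rfl
  have hs0 : (((4 * n + 2) / 11 : ℕ) : ℤ) = 4 * k + (4 * (r : ℤ) + 2) / 11 := by omega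
  have ht0 : ((10 * n / 11 : ℕ) : ℤ) = 10 * k + 10 * (r : ℤ) / 11 := by omega
  rw [hs0, ht0] at e2
  have hn' : (n : ℤ) = 11 * k + r := by omega
  rw [hn'] at e1 e2 hm
  generalize (4 * (r : ℤ) + 2) / 11 = A at *
  generalize 10 * (r : ℤ) / 11 = C at *
  zify
  linarith
end

section
/- The polynomial p(i,j) = 5i + 5i² − 3j − 4ij + 3j² is nonnegative for all integer lattice points (i,j) ∈ ℤ². -/
/-- The polynomial `p(i,j) = 5i + 5i² − 3j − 4ij + 3j²` is nonnegative at all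
integer lattice points `(i,j) ∈ ℤ²`. -/
theorem quadratic_nonneg_on_lattice (i j : ℤ) :
    0 ≤ 5 * i + 5 * i ^ 2 - 3 * j - 4 * i * j + 3 * j ^ 2 := by
  have hs := sq_nonneg (6 * j - 3 - 4 * i)
  rcases (by omega : 1 ≤ i ∨ i = 0 ∨ i = -1 ∨ i ≤ -2) with h | h | h | h
  · nlinarith
  · subst h
    rcases (by omega : 1 ≤ j ∨ j ≤ 0) with h | h <;> nlinarith
  · subst h
    rcases (by omega : 0 ≤ j ∨ j ≤ -1) with h | h <;> nlinarith
  · nlinarith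
end

section
/- For every n ∈ ℕ with n ≥ 1, the minimal number of monochromatic Schur triples that can be attained under any 2-coloring of [n] is M(n) = ⌊(n² − 4n + 6)/11⌋; that is, every 2-coloring χ of [n] admits at least ⌊(n² − 4n + 6)/11⌋ monochromatic Schur triples, and there exists a 2-coloring attaining exactly this number. -/
/-- The number of monochromatic Schur triples `(x, y, z) ∈ [n]³` with `x + y = z`
under the 2-coloring `χ` of `[n] = {1, …, n}` (colors encoded as `Bool`). -/
def mstCountChi (n : ℕ) (χ : ℕ → Bool) : ℕ :=
  ((Finset.Icc 1 n ×ˢ Finset.Icc 1 n ×ˢ Finset.Icc 1 n).filter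
    (fun p => p.1 + p.2.1 = p.2.2 ∧ χ p.1 = χ p.2.1 ∧ χ p.2.1 = χ p.2.2)).card

section
open Finset


theorem walk_lip (F : ℕ → ℤ) (hs : ∀ j, F (j+1) = F j + 1 ∨ F (j+1) = F j - 1) (a d : ℕ) :
    F (a+d) ≤ F a + d ∧ F a - d ≤ F (a+d) := by
  induction d with
  | zero => simp
  | succ d ih =>
    have := hs (a+d)
    rw [← add_assoc]
    push_cast
    omega

theorem walk_last (F : ℕ → ℤ) (hs : ∀ j, F (j+1) = F j + 1 ∨ F (j+1) = F j - 1) (v : ℤ)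
    (h0 : F 0 ≤ v) (m : ℕ) (hm : v ≤ F m) :
    ∃ t, t ≤ m ∧ F t = v ∧ ∀ j, t < j → j ≤ m → v < F j := by
  induction m with
  | zero => exact ⟨0, le_refl _, by omega, fun j h1 h2 => by omega⟩
  | succ m ih =>
    by_cases h : F (m+1) = v
    · exact ⟨m+1, le_refl _, h, fun j h1 h2 => by omega⟩
    · have := hs m
      obtain ⟨t, ht, hv, hj⟩ := ih (by omega)
      refine ⟨t, by omega, hv, fun j h1 h2 => ?_⟩
      rcases Nat.lt_or_ge m j with h3 | h3
      · have : j = m+1 := by omega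
        subst this
        omega
      · exact hj j h1 h3

theorem walk_area (G : ℕ → ℤ) (h0 : G 0 = 0)
    (hs : ∀ j, G (j+1) = G j + 1 ∨ G (j+1) = G j - 1) (l : ℕ) :
    4 * ∑ j ∈ range l, |G j| ≤ ((l:ℤ) + |G l|)^2 - 2 * |G l| * (|G l| + 1) ∧ |G l| ≤ l := by
  induction l with
  | zero => simp [h0]
  | succ l ih =>
    obtain ⟨h1, h2⟩ := ih
    rw [sum_range_succ]
    have h3 : |G (l+1)| = |G l| + 1 ∨ |G (l+1)| = |G l| - 1 := by
      have := hs l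
      grind
    have h4 := abs_nonneg (G l)
    push_cast
    rcases h3 with h3 | h3 <;> rw [h3] <;> constructor <;> nlinarith

theorem ind_sum (a b : ℤ) (u : ℕ) :
    ∑ j ∈ range u, (if a < (j:ℤ) ∧ (j:ℤ) < b then (1:ℤ) else 0)
      ≤ max 0 (min ((u:ℤ)-1) (b-1) - a) ∨ a < -1 := by
  induction u with
  | zero => simp
  | succ u ih =>
    rw [sum_range_succ]
    push_cast
    split_ifs <;> omega

theorem tent (u : ℕ) (L : ℕ) : ∀ a b : ℤ, 0 ≤ a → b - a ≤ L →
    4 * ∑ j ∈ range u, max 0 (min ((j:ℤ) - a) (b - j)) ≤ (L:ℤ)^2 := by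
  induction L using Nat.twoStepInduction with
  | zero =>
    intro a b ha h
    rw [sum_eq_zero]
    · simp
    · intro j _
      push_cast at h
      omega
  | one =>
    intro a b ha h
    rw [sum_eq_zero]
    · simp
    · intro j _
      push_cast at h
      omega
  | more L ih _ =>
    intro a b ha h
    have h1 := ih (a+1) (b-1) (by omega) (by push_cast at h; omega)
    have h2 : ∑ j ∈ range u, max 0 (min ((j:ℤ) - a) (b - j))
        = ∑ j ∈ range u, max 0 (min ((j:ℤ) - (a+1)) (b - 1 - j))
          + ∑ j ∈ range u, (if a < (j:ℤ) ∧ (j:ℤ) < b then (1:ℤ) else 0) := by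
      rw [← sum_add_distrib]
      apply sum_congr rfl
      intro j _
      split_ifs <;> omega
    have h3 := ind_sum a b u
    have h4 : ∑ j ∈ range u, (if a < (j:ℤ) ∧ (j:ℤ) < b then (1:ℤ) else 0) ≤ (L:ℤ) + 1 := by
      push_cast at h
      omega
    rw [h2]
    push_cast
    nlinarith

theorem min_sum (k : ℤ) (hk : 0 ≤ k) (u : ℕ) :
    2 * ∑ j ∈ range u, min k ((u:ℤ) - j)
      ≤ 2 * k * u - k * (k-1) + max (k-u) 0 * (max (k-u) 0 - 1) := by
  induction u with
  | zero => simp [max_eq_left hk]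
  | succ u ih =>
    rw [sum_range_succ']
    have : ∑ j ∈ range u, min k (((u+1:ℕ):ℤ) - ((j+1:ℕ):ℤ)) = ∑ j ∈ range u, min k ((u:ℤ) - j) := by
      apply sum_congr rfl
      intro j _
      push_cast
      congr 1
      ring
    rw [this]
    push_cast
    rcases le_or_gt k u with h | h
    · rw [max_eq_right (by omega)] at ih ⊢
      rw [min_eq_left (by omega)]
      nlinarith
    · rw [max_eq_left (by omega)] at ih ⊢
      rw [min_eq_right (by omega)]
      nlinarith

theorem seg_mid (P : ℕ → ℤ) (hs : ∀ j, P (j+1) = P j + 1 ∨ P (j+1) = P j - 1) (h0 : P 0 = 0)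
    (k : ℤ) (hk : 0 ≤ k) (u : ℕ) (hu : P u = k) (hpos : ∀ j, j ≤ u → 0 ≤ P j) (L : ℕ)
    (hL : (u:ℤ) - 3 * k ≤ L) :
    4 * ∑ j ∈ range u, |P j - k| ≤ 4 * k * u - 2 * k * (k-1) + (L:ℤ)^2 := by
  have hku : k ≤ u := by
    have := (walk_lip P hs 0 u).1
    simp only [zero_add] at this
    omega
  have h1 : ∑ j ∈ range u, |P j - k| ≤ ∑ j ∈ range u, (min k ((u:ℤ) - j)
      + max 0 (min ((j:ℤ) - 2*k) ((u:ℤ) - k - j))) := by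
    apply sum_le_sum
    intro j hj
    rw [mem_range] at hj
    have e1 := (walk_lip P hs 0 j).1
    have e2 := walk_lip P hs j (u-j)
    have e3 := hpos j hj.le
    simp only [zero_add] at e1
    rw [show j + (u-j) = u by omega, hu, Nat.cast_sub hj.le] at e2
    rcases abs_cases (P j - k) with ⟨e, _⟩ | ⟨e, _⟩ <;> rw [e] <;> omega
  rw [sum_add_distrib] at h1
  have h2 := min_sum k hk u
  rw [max_eq_right (by omega)] at h2
  have h3 := tent u L (2*k) (u-k) (by omega) (by omega)
  linarith

theorem seg_low (P : ℕ → ℤ) (hs : ∀ j, P (j+1) = P j + 1 ∨ P (j+1) = P j - 1) (h0 : P 0 = 0)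
    (k : ℤ) (hk : 1 ≤ k) (l : ℕ) (hl : P l < k) (hpos : ∀ j, 0 < j → j ≤ l → 0 < P j) (L : ℕ)
    (hL : (l:ℤ) - 3 * k + 1 ≤ L) (N : ℕ) (hN : N ≤ l + 1) :
    4 * ∑ j ∈ range N, |P j - k| ≤ 4 + 4 * (k-1) * N + (L:ℤ)^2 := by
  have h1 : ∑ j ∈ range N, |P j - k| ≤ ∑ j ∈ range N, ((if j = 0 then 1 else 0) + (k-1)
      + max 0 (min ((j:ℤ) - (2*k-1)) ((l:ℤ) - k - j))) := by
    apply sum_le_sum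
    intro j hj
    rw [mem_range] at hj
    have e1 := (walk_lip P hs 0 j).1
    have e2 := walk_lip P hs j (l-j)
    simp only [zero_add] at e1
    rw [show j + (l-j) = l by omega, Nat.cast_sub (by omega)] at e2
    by_cases hj0 : j = 0
    · subst hj0
      rw [h0]
      simp
      rw [abs_of_nonneg (by omega)]
      omega
    · have e3 := hpos j (by omega) (by omega)
      rw [if_neg hj0]
      rcases abs_cases (P j - k) with ⟨e, _⟩ | ⟨e, _⟩ <;> rw [e] <;> omega
  rw [sum_add_distrib, sum_add_distrib] at h1
  have h3 := tent N L (2*k-1) (l-k) (by omega) (by omega)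
  have h4 : ∑ j ∈ range N, (if j = 0 then (1:ℤ) else 0) ≤ 1 := by
    rw [sum_ite_eq' (range N) 0]
    split_ifs <;> simp
  simp only [sum_const, card_range, nsmul_eq_mul] at h1
  linarith

theorem poly1 (n m k t A th : ℤ) (hth : th = 0 ∨ th = 1) (hn : n = 2*m+th) (h1 : 11*k ≤ n+2)
    (h2 : n+2 ≤ 11*k+10) (hk : 0 ≤ k) (ht : k+1 ≤ t) (htm : t ≤ m) (hA : 0 ≤ A) :
    -3*n^2+n-32 ≤ 22*A^2 - 11*(t^2+((m-t)+A)^2-2*A*(A+1)+4*th*A) := by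
  have e1 : 0 ≤ (t-k-1)*(m-t) := mul_nonneg (by linarith) (by linarith)
  have e2 := sq_nonneg (3*A-(m-t)+1-2*th)
  have e3 : 0 ≤ k * (11*k+10-(n+2)) := mul_nonneg hk (by linarith)
  have e4 : 0 ≤ k * (n+2-11*k) := mul_nonneg hk (by linarith)
  have e5 : 0 ≤ (11*k+10-(n+2)) * (n+2-11*k) := mul_nonneg (by linarith) (by linarith)
  have e6 : 0 ≤ (t-k-1)*k := mul_nonneg (by linarith) (by linarith)
  have e7 : 0 ≤ (m-t)*k := mul_nonneg (by linarith) (by linarith)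
  have e8 : 0 ≤ (t-k-1)*(11*k+10-(n+2)) := mul_nonneg (by linarith) (by linarith)
  have e9 : 0 ≤ (m-t)*(11*k+10-(n+2)) := mul_nonneg (by linarith) (by linarith)
  have e10 : 0 ≤ (t-k-1)*(n+2-11*k) := mul_nonneg (by linarith) (by linarith)
  have e11 : 0 ≤ (m-t)*(n+2-11*k) := mul_nonneg (by linarith) (by linarith)
  have e12 := sq_nonneg (t-k-1)
  have e13 := sq_nonneg (m-t)
  have e14 := sq_nonneg k
  rcases hth with rfl | rfl <;> subst hn
  · linarith only [e12,e13,e14,e1,e2,e3,e4,e5,e6,e7,e8,e9,e10,e11,h1,h2,hk,ht,htm]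
  · linarith only [e12,e13,e14,e1,e2,e3,e4,e5,e6,e7,e8,e9,e10,e11,h1,h2,hk,ht,htm]

theorem poly2 (n m k t u a L th : ℤ) (hth : th = 0 ∨ th = 1) (hn : n = 2*m+th) (h1 : 11*k ≤ n+2)
    (h2 : n+2 ≤ 11*k+10) (hk : 1 ≤ k) (ht0 : 0 ≤ t) (ht : t ≤ k) (htm : t + u ≤ m) (hu : k ≤ u)
    (hL : (L = 0 ∧ u ≤ 3*k) ∨ (L = u - 3*k ∧ 3*k ≤ u)) :
    -3*n^2+n-32 ≤ 22*(a^2-2*k^2) - 11*(4*k*t+t^2+(4*k*u-2*k*(k-1)+L^2)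
      +((m-t-u)+a)^2-2*a*(a+1)+4*th*a) := by
  have e2 := sq_nonneg (3*a-(m-t-u)+1-2*th)
  have e3 : 0 ≤ k * (11*k+10-(n+2)) := mul_nonneg (by linarith) (by linarith)
  have e4 : 0 ≤ k * (n+2-11*k) := mul_nonneg (by linarith) (by linarith)
  have e5 : 0 ≤ (11*k+10-(n+2)) * (n+2-11*k) := mul_nonneg (by linarith) (by linarith)
  have f1 : 0 ≤ t*(k-t) := mul_nonneg (by linarith) (by linarith)
  have f2 : 0 ≤ t*(u-k) := mul_nonneg (by linarith) (by linarith)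
  have f3 : 0 ≤ (k-t)*(u-k) := mul_nonneg (by linarith) (by linarith)
  have f4 : 0 ≤ t*(m-t-u) := mul_nonneg (by linarith) (by linarith)
  have f5 : 0 ≤ (u-k)*(m-t-u) := mul_nonneg (by linarith) (by linarith)
  have f6 : 0 ≤ t*(11*k+10-(n+2)) := mul_nonneg (by linarith) (by linarith)
  have f7 : 0 ≤ t*(n+2-11*k) := mul_nonneg (by linarith) (by linarith)
  have f8 : 0 ≤ (u-k)*(11*k+10-(n+2)) := mul_nonneg (by linarith) (by linarith)
  have f9 : 0 ≤ (u-k)*(n+2-11*k) := mul_nonneg (by linarith) (by linarith)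
  have f10 : 0 ≤ (u-k)*k := mul_nonneg (by linarith) (by linarith)
  have f11 : 0 ≤ t*k := mul_nonneg (by linarith) (by linarith)
  have f12 : 0 ≤ t*(k-1) := mul_nonneg (by linarith) (by linarith)
  have f13 : 0 ≤ (u-k)*(k-1) := mul_nonneg (by linarith) (by linarith)
  have f14 := sq_nonneg t
  have f15 := sq_nonneg (u-k)
  have f16 := sq_nonneg (k-1)
  have f17 : 0 ≤ (k-1)*(11*k+10-(n+2)) := mul_nonneg (by linarith) (by linarith)
  have f18 : 0 ≤ (k-1)*(n+2-11*k) := mul_nonneg (by linarith) (by linarith)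
  have f19 := sq_nonneg (m-t-u)
  rcases hL with ⟨rfl, h⟩ | ⟨rfl, h⟩
  · have g1 : 0 ≤ (u-k)*(3*k-u) := mul_nonneg (by linarith) (by linarith)
    have g2 : 0 ≤ t*(3*k-u) := mul_nonneg (by linarith) (by linarith)
    rcases hth with rfl | rfl <;> subst hn
    · linarith only [f12,f13,f14,f15,f16,f17,f18,f19,e2,e3,e4,e5,f1,f2,f3,f4,f5,f6,f7,f8,f9,f10,f11,g1,g2,h,h1,h2,hk,ht,htm,hu,ht0]
    · linarith only [f12,f13,f14,f15,f16,f17,f18,f19,e2,e3,e4,e5,f1,f2,f3,f4,f5,f6,f7,f8,f9,f10,f11,g1,g2,h,h1,h2,hk,ht,htm,hu,ht0]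
  · have g1 : 0 ≤ (u-3*k)*(m-t-u) := mul_nonneg (by linarith) (by linarith)
    have g2 : 0 ≤ t*(u-3*k) := mul_nonneg (by linarith) (by linarith)
    have g3 : 0 ≤ k*(u-3*k) := mul_nonneg (by linarith) (by linarith)
    have g5 : 0 ≤ (u-3*k)*(11*k+10-(n+2)) := mul_nonneg (by linarith) (by linarith)
    have g6 : 0 ≤ (u-3*k)*(n+2-11*k) := mul_nonneg (by linarith) (by linarith)
    have g7 : 0 ≤ (u-3*k)*(k-1) := mul_nonneg (by linarith) (by linarith)
    have g8 := sq_nonneg (u-3*k)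
    have g9 : 0 ≤ (m-t-u)*(k-1) := mul_nonneg (by linarith) (by linarith)
    have g10 : 0 ≤ (m-t-u)*(n+2-11*k) := mul_nonneg (by linarith) (by linarith)
    have g11 : 0 ≤ (m-t-u)*(11*k+10-(n+2)) := mul_nonneg (by linarith) (by linarith)
    have g4 : 0 ≤ (k-t)*(u-3*k) := mul_nonneg (by linarith) (by linarith)
    rcases hth with rfl | rfl <;> subst hn
    · rcases eq_or_lt_of_le hk with rfl | hk2
      · have hm5 : 5 ≤ m := by omega
        have hm9 : m ≤ 9 := by omega
        have hu9 : u ≤ 9 := by omega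
        interval_cases t <;> interval_cases m <;> (try omega) <;> interval_cases u <;> (try omega) <;> 
          linarith only [e2]
      · have k1 : 0 ≤ (k-2)*(u-3*k) := mul_nonneg (by linarith) (by linarith)
        have k2 : 0 ≤ (k-2)*(m-t-u) := mul_nonneg (by linarith) (by linarith)
        have k3 : 0 ≤ (k-2)*t := mul_nonneg (by linarith) (by linarith)
        have k4 := sq_nonneg (k-2)
        have k5 : 0 ≤ (k-2)*(11*k+10-(2*m+0+2)) := mul_nonneg (by linarith) (by linarith)
        have k6 : 0 ≤ (k-2)*(2*m+0+2-11*k) := mul_nonneg (by linarith) (by linarith)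
        linarith only [k1,k2,k3,k4,k5,k6,hk2,f12,f13,f14,f15,f16,f17,f18,f19,e2,e3,e4,e5,f1,f2,f3,f4,f5,f6,f7,f8,f9,f10,f11,g1,g2,g3,g4,g5,g6,g7,g8,g9,g10,g11,h,h1,h2,hk,ht,htm,hu,ht0]
    · linarith only [f12,f13,f14,f15,f16,f17,f18,f19,e2,e3,e4,e5,f1,f2,f3,f4,f5,f6,f7,f8,f9,f10,f11,g1,g2,g3,g4,g5,g6,g7,g8,g9,g10,g11,h,h1,h2,hk,ht,htm,hu,ht0]

theorem poly3 (n m k t A L th : ℤ) (hth : th = 0 ∨ th = 1) (hn : n = 2*m+th) (h1 : 11*k ≤ n+2)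
    (h2 : n+2 ≤ 11*k+10) (hk : 1 ≤ k) (ht0 : 0 ≤ t) (ht : t ≤ k) (htm : t ≤ m) 
    (hL : (L = 0 ∧ m-t-3*k+1 ≤ 0) ∨ (L = m-t-3*k+1 ∧ 0 ≤ m-t-3*k+1)) :
    -3*n^2+n-32 ≤ 22*(A^2-2*k*A-k^2) - 11*(4*k*t+t^2+(4+4*(k-1)*(m-t+th)+L^2)) := by
  have e2 := sq_nonneg (A-k)
  have e3 : 0 ≤ k * (11*k+10-(n+2)) := mul_nonneg (by linarith) (by linarith)
  have e4 : 0 ≤ k * (n+2-11*k) := mul_nonneg (by linarith) (by linarith)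
  have e5 : 0 ≤ (11*k+10-(n+2)) * (n+2-11*k) := mul_nonneg (by linarith) (by linarith)
  have f1 : 0 ≤ t*(k-t) := mul_nonneg (by linarith) (by linarith)
  have f6 : 0 ≤ t*(11*k+10-(n+2)) := mul_nonneg (by linarith) (by linarith)
  have f7 : 0 ≤ t*(n+2-11*k) := mul_nonneg (by linarith) (by linarith)
  have f11 : 0 ≤ t*k := mul_nonneg (by linarith) (by linarith)
  have f12 : 0 ≤ (k-1)*(k-1) := mul_nonneg (by linarith) (by linarith)
  have f13 : 0 ≤ (k-1)*(11*k+10-(n+2)) := mul_nonneg (by linarith) (by linarith)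
  have f14 : 0 ≤ (k-1)*(n+2-11*k) := mul_nonneg (by linarith) (by linarith)
  rcases hL with ⟨rfl, h⟩ | ⟨rfl, h⟩
  · rcases hth with rfl | rfl <;> subst hn
    · nlinarith only [e2,e3,e4,e5,f1,f6,f7,f11,f12,f13,f14,h,h1,h2,hk,ht,htm,ht0]
    · nlinarith only [e2,e3,e4,e5,f1,f6,f7,f11,f12,f13,f14,h,h1,h2,hk,ht,htm,ht0]
  · rcases hth with rfl | rfl <;> subst hn
    · nlinarith only [e2,e3,e4,e5,f1,f6,f7,f11,f12,f13,f14,h,h1,h2,hk,ht,htm,ht0]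
    · nlinarith only [e2,e3,e4,e5,f1,f6,f7,f11,f12,f13,f14,h,h1,h2,hk,ht,htm,ht0]

theorem poly0 (n m A th : ℤ) (hth : th = 0 ∨ th = 1) (hn : n = 2*m+th) (hm : 0 ≤ m)
    (h2 : n ≤ 8) :
    -3*n^2+n-32 ≤ 22*A^2 - 11*((m+A)^2-2*A*(A+1)+4*th*A) := by
  have e2 := sq_nonneg (3*A-m+1-2*th)
  have hm4 : m ≤ 4 := by omega
  rcases hth with rfl | rfl <;> subst hn <;> interval_cases m <;> (try omega) <;> linarith only [e2]

theorem sum_N (f : ℕ → ℤ) (m th : ℕ) (hth : th = 0 ∨ th = 1) :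
    ∑ j ∈ range (m+th), f j = ∑ j ∈ range m, f j + th * f m := by
  rcases hth with rfl | rfl
  · simp
  · simp [sum_range_succ]

theorem walk_main (F : ℕ → ℤ) (h0 : F 0 = 0)
    (hs : ∀ j, F (j+1) = F j + 1 ∨ F (j+1) = F j - 1) (n m th : ℕ) (hth : th = 0 ∨ th = 1)
    (hn : n = 2*m+th) (hA : 0 ≤ F m) :
    ∃ k : ℤ, -3*(n:ℤ)^2+n-32 ≤
      22 * ((F m)^2 - 2*k*F m - k^2 - 2 * ∑ j ∈ range (m+th), |F j - k|) := by
  have hth' : (th:ℤ) = 0 ∨ (th:ℤ) = 1 := by omega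
  have hn' : (n:ℤ) = 2*m+th := by omega
  rcases Nat.lt_or_ge 8 n with h8 | h8
  swap
  · refine ⟨0, ?_⟩
    have h1 := (walk_area F h0 hs m).1
    have h2 := poly0 n m (F m) th hth' hn' (by omega) (by omega)
    rw [sum_N _ m th hth]
    simp only [sub_zero]
    rw [abs_of_nonneg hA] at h1 ⊢
    linarith
  obtain ⟨t, htm, hFt, hafter⟩ := walk_last F hs 0 (by omega) m hA
  obtain ⟨k, hkdef⟩ : ∃ k : ℤ, k = ((n:ℤ)+2)/11 := ⟨_, rfl⟩
  have hk1 : 11*k ≤ n+2 := by omega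
  have hk2 : (n:ℤ)+2 ≤ 11*k+10 := by omega
  have hk0 : 1 ≤ k := by omega
  have ha1 := (walk_area F h0 hs t).1
  rw [hFt] at ha1
  simp only [abs_zero, add_zero, mul_zero, zero_mul, sub_zero] at ha1
  obtain ⟨l, rfl⟩ : ∃ l, m = t + l := ⟨m - t, by omega⟩
  by_cases hc : k + 1 ≤ t
  · refine ⟨0, ?_⟩
    have h2 := (walk_area (fun j => F (t+j)) (by simpa using hFt) (fun j => hs (t+j)) l).1
    have h3 := poly1 n (t+l:ℕ) k t (F (t+l)) th hth' hn' hk1 hk2 (by omega) hc (by omega) hA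
    rw [sum_N _ _ th hth, sum_range_add]
    simp only [sub_zero]
    rw [abs_of_nonneg hA] at h2 ⊢
    push_cast at h3
    rw [add_sub_cancel_left] at h3
    linarith
  have hpre : 4 * ∑ j ∈ range t, |F j - k| ≤ 4*k*t + t^2 := by
    have : ∑ j ∈ range t, |F j - k| ≤ ∑ j ∈ range t, (|F j| + k) := by
      apply sum_le_sum
      intro j _
      have := abs_sub (F j) k
      rwa [abs_of_nonneg (by omega : 0 ≤ k)] at this
    rw [sum_add_distrib] at this
    simp only [sum_const, card_range, nsmul_eq_mul] at this
    linarith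
  by_cases hAk : k ≤ F (t+l)
  · obtain ⟨σ, hσm, hFσ, hafter2⟩ := walk_last F hs k (by omega) (t+l) hAk
    have htσ : t ≤ σ := by
      by_contra h
      have := hafter2 t (by omega) (by omega)
      omega
    obtain ⟨u, rfl⟩ : ∃ u, σ = t + u := ⟨σ - t, by omega⟩
    obtain ⟨v, rfl⟩ : ∃ v, l = u + v := ⟨l - u, by omega⟩
    refine ⟨k, ?_⟩
    have hku : k ≤ u := by
      have := (walk_lip F hs t u).1
      omega
    have hL : ∃ L : ℕ, (((L:ℤ) = 0 ∧ (u:ℤ) ≤ 3*k) ∨ ((L:ℤ) = u - 3*k ∧ 3*k ≤ u)) := by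
      rcases le_or_gt (u:ℤ) (3*k) with h | h
      · exact ⟨0, Or.inl ⟨rfl, h⟩⟩
      · exact ⟨(u - 3*k).toNat, Or.inr ⟨by omega, by omega⟩⟩
    obtain ⟨L, hL⟩ := hL
    have hmid := seg_mid (fun j => F (t+j)) (fun j => hs (t+j)) (by simpa using hFt) k (by omega)
      u hFσ (fun j hj => by
        rcases Nat.eq_zero_or_pos j with rfl | hj0
        · simp [hFt]
        · exact (hafter (t+j) (by omega) (by omega)).le) L (by omega)
    have hend := (walk_area (fun j => F (t+u+j) - k) (by simp [hFσ])
      (fun j => by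
        have := hs (t+u+j)
        rw [← add_assoc]
        omega) v).1
    have hp := poly2 n (t+(u+v):ℕ) k t u (F (t+(u+v)) - k) L th hth' hn' hk1 hk2 hk0 (by omega)
      (by omega) (by omega) hku hL
    rw [sum_N _ _ th hth, sum_range_add, sum_range_add]
    simp only [← add_assoc] at hend hp hAk ⊢
    rw [abs_of_nonneg (by omega)] at hend ⊢
    push_cast at hp
    rw [show (t:ℤ) + u + v - t - u = v by ring] at hp
    linarith
  · refine ⟨k, ?_⟩
    have hL : ∃ L : ℕ, (((L:ℤ) = 0 ∧ ((t+l:ℕ):ℤ)-t-3*k+1 ≤ 0) ∨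
        ((L:ℤ) = ((t+l:ℕ):ℤ)-t-3*k+1 ∧ 0 ≤ ((t+l:ℕ):ℤ)-t-3*k+1)) := by
      rcases le_or_gt (((t+l:ℕ):ℤ)-t-3*k+1) 0 with h | h
      · exact ⟨0, Or.inl ⟨rfl, h⟩⟩
      · exact ⟨(((t+l:ℕ):ℤ)-t-3*k+1).toNat, Or.inr ⟨by omega, by omega⟩⟩
    obtain ⟨L, hL⟩ := hL
    have hlow := seg_low (fun j => F (t+j)) (fun j => hs (t+j)) (by simpa using hFt) k hk0
      l (by simpa using hAk) (fun j hj0 hj => hafter (t+j) (by omega) (by omega)) L (by omega)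
      (l+th) (by omega)
    have hp := poly3 n (t+l:ℕ) k t (F (t+l)) L th hth' hn' hk1 hk2 hk0 (by omega)
      (by omega) (by omega) hL
    rw [add_assoc, sum_range_add]
    push_cast at hp hlow
    rw [show (t:ℤ) + l - t = l by ring] at hp
    linarith

theorem abel (s : ℕ → ℤ) (F : ℕ → ℤ) (h0 : F 0 = 0) (hF : ∀ j, F (j+1) = F j + s (j+1)) (n : ℕ)
    (t : ℕ) (ht : t ≤ n) :
    ∑ i ∈ range t, s (i+1) * F (n-1-i) = F t * F (n-t) + ∑ j ∈ range t, F j * s (n-j) := by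
  induction t with
  | zero => simp [h0]
  | succ t ih =>
    rw [sum_range_succ, sum_range_succ, ih (by omega), hF t]
    have := hF (n-t-1)
    rw [show n-t-1+1 = n-t by omega] at this
    rw [this, show n-1-t = n-t-1 by omega, show n-(t+1) = n-t-1 by omega]
    ring

theorem refl_sum (s : ℕ → ℤ) (F : ℕ → ℤ) (n : ℕ) (t : ℕ) (ht : t ≤ n) :
    ∑ j ∈ range (n-t), F j * s (n-j) + ∑ i ∈ range t, s (i+1) * F (n-1-i)
      = ∑ j ∈ range n, F j * s (n-j) := by
  induction t with
  | zero => simp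
  | succ t ih =>
    rw [← ih (by omega), sum_range_succ]
    rw [show n - t = (n-(t+1)) + 1 by omega, sum_range_succ, show n-1-t = n-(t+1) by omega,
      show n - (n-(t+1)) = t+1 by omega]
    ring

theorem tail_sum (s : ℕ → ℤ) (F : ℕ → ℤ) (hF : ∀ j, F (j+1) = F j + s (j+1)) (n : ℕ)
    (t : ℕ) (ht : t ≤ n) : F n = F (n-t) + ∑ j ∈ range t, s (n-j) := by
  induction t with
  | zero => simp
  | succ t ih =>
    rw [sum_range_succ, ih (by omega)]
    have := hF (n-(t+1))
    rw [show n-(t+1)+1 = n-t by omega] at this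
    rw [this]
    ring

theorem Q_lower (s : ℕ → ℤ) (hs : ∀ i, s i = 1 ∨ s i = -1) (F : ℕ → ℤ) (h0 : F 0 = 0)
    (hF : ∀ j, F (j+1) = F j + s (j+1)) (n : ℕ) :
    -3*(n:ℤ)^2+n-32 ≤ 22 * ((F n)^2 + ∑ i ∈ range n, s (i+1) * F (n-1-i)) := by
  wlog hA : 0 ≤ F (n/2) generalizing s F
  · have := this (fun i => - s i) (fun i => by have := hs i; omega) (fun i => - F i)
      (by simp [h0]) (fun j => by rw [hF]; ring) (by omega)
    simpa using this
  obtain ⟨m, th, hth, hn⟩ : ∃ m th, (th = 0 ∨ th = 1) ∧ n = 2*m+th :=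
    ⟨n/2, n%2, by omega, by omega⟩
  rw [show n/2 = m by omega] at hA
  obtain ⟨k, hk⟩ := walk_main F h0 (fun j => by have := hs (j+1); rw [hF]; omega) n m th hth hn hA
  have hE : ∑ i ∈ range n, s (i+1) * F (n-1-i)
      = (F m)^2 + 2 * ∑ j ∈ range (m+th), F j * s (n-j) := by
    have a1 := abel s F h0 hF n n le_rfl
    have a2 := refl_sum s F n m (by omega)
    have a3 := abel s F h0 hF n m (by omega)
    rw [Nat.sub_self, h0, mul_zero, zero_add] at a1
    rw [a1, ← a2, a3, show n - m = m + th by omega]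
    rcases hth with rfl | rfl
    · simp
      ring
    · rw [sum_range_succ, hF m, show n - m = m + 1 by omega]
      ring
  have hT := tail_sum s F hF n (m+th) (by omega)
  rw [show n - (m+th) = m by omega] at hT
  have hsum : -∑ j ∈ range (m+th), |F j - k| ≤
      ∑ j ∈ range (m+th), F j * s (n-j) - k * ∑ j ∈ range (m+th), s (n-j) := by
    rw [mul_sum, ← sum_sub_distrib, ← sum_neg_distrib]
    apply sum_le_sum
    intro j _
    have e1 := neg_abs_le (F j - k)
    have e2 := le_abs_self (F j - k)
    rcases hs (n-j) with h | h <;> rw [h] <;> linarith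
  rw [hE]
  have hsq := sq_nonneg (F n + k)
  set C := ∑ j ∈ range (m+th), s (n-j)
  rw [hT] at hsq ⊢
  nlinarith

theorem mst_eq (n : ℕ) (χ : ℕ → Bool) : mstCountChi n χ =
    ∑ i ∈ range n, ∑ j ∈ range (n-1-i),
      if χ (i+1) = χ (j+1) ∧ χ (j+1) = χ (i+j+2) then 1 else 0 := by
  rw [sum_sigma', ← card_filter]
  unfold mstCountChi
  apply card_nbij' (fun p => ⟨p.1-1, p.2.1-1⟩) (fun q => (q.1+1, q.2+1, q.1+q.2+2))
  · rintro ⟨x, y, z⟩ h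
    simp only [coe_filter, mem_product, mem_Icc, Set.mem_ofPred_eq, mem_sigma, mem_range] at h ⊢
    obtain ⟨⟨hx, hy, hz⟩, h1, h2, h3⟩ := h
    refine ⟨⟨by omega, by omega⟩, ?_⟩
    rw [show x-1+1 = x by omega, show y-1+1=y by omega, show x-1+(y-1)+2 = z by omega]
    exact ⟨h2, h3⟩
  · rintro ⟨i, j⟩ h
    simp only [coe_filter, mem_product, mem_Icc, Set.mem_ofPred_eq, mem_sigma, mem_range] at h ⊢
    obtain ⟨⟨hx, hy⟩, h1, h2⟩ := h
    exact ⟨by omega, by omega, h1, h2⟩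
  · rintro ⟨x, y, z⟩ h
    simp only [coe_filter, mem_product, mem_Icc, Set.mem_ofPred_eq] at h
    simp only [Prod.mk.injEq]
    omega
  · rintro ⟨i, j⟩ h
    simp

theorem mst_formula_s4 (n : ℕ) (χ : ℕ → Bool) (s F : ℕ → ℤ)
    (hs : ∀ i, s i = if χ i then 1 else -1) (h0 : F 0 = 0)
    (hF : ∀ j, F (j+1) = F j + s (j+1)) :
    8 * (mstCountChi n χ : ℤ) = (n:ℤ)^2 - 3*n
      + 2 * ((F n)^2 + ∑ i ∈ range n, s (i+1) * F (n-1-i)) := by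
  have hs1 : ∀ i, s i = 1 ∨ s i = -1 := fun i => by rw [hs]; split_ifs <;> simp
  have hFs : ∀ a t, ∑ j ∈ range t, s (a+j+1) = F (a+t) - F a := by
    intro a t
    induction t with
    | zero => simp
    | succ t ih =>
      rw [sum_range_succ, ih, ← add_assoc, hF]
      ring
  have hFs0 : ∀ t, ∑ j ∈ range t, s (j+1) = F t := by
    intro t
    have := hFs 0 t
    simpa [h0] using this
  have e4 : 4 * (mstCountChi n χ : ℤ) = ∑ i ∈ range n, ∑ j ∈ range (n-1-i),
      (1 + s (i+1) * s (j+1) + s (i+1) * s (i+j+2) + s (j+1) * s (i+j+2)) := by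
    rw [mst_eq]
    push_cast
    rw [mul_sum]
    apply sum_congr rfl
    intro i _
    rw [mul_sum]
    apply sum_congr rfl
    intro j _
    rw [hs, hs, hs]
    cases χ (i+1) <;> cases χ (j+1) <;> cases χ (i+j+2) <;> simp
  simp only [sum_add_distrib] at e4
  have c1 : ∑ i ∈ range n, ∑ j ∈ range (n-1-i), s (j+1) * s (i+j+2)
      = ∑ i ∈ range n, ∑ j ∈ range (n-1-i), s (i+1) * s (i+j+2) := by
    rw [sum_comm' (t' := range n) (s' := fun j => range (n-1-j))]
    · apply sum_congr rfl
      intro i _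
      apply sum_congr rfl
      intro j _
      rw [add_comm j i]
    · intro x y
      simp only [mem_range]
      omega
  have c2 : ∑ i ∈ range n, ∑ j ∈ range (n-1-i), s (i+1) * s (i+j+2)
      = ∑ i ∈ range n, s (i+1) * (F n - F (i+1)) := by
    apply sum_congr rfl
    intro i hi
    rw [mem_range] at hi
    rw [← mul_sum]
    have := hFs (i+1) (n-1-i)
    rw [show i+1+(n-1-i) = n by omega] at this
    rw [← this]
    congr 1
    apply sum_congr rfl
    intro j _
    congr 1
    ring
  have c3 : ∀ t, 2 * ∑ i ∈ range t, s (i+1) * F (i+1) = (F t)^2 + t := by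
    intro t
    induction t with
    | zero => simp [h0]
    | succ t ih =>
      rw [sum_range_succ, mul_add, ih, hF]
      push_cast
      rcases hs1 (t+1) with h | h <;> rw [h] <;> ring
  have c4 : ∑ i ∈ range n, s (i+1) * (F n - F (i+1))
      = F n * F n - ∑ i ∈ range n, s (i+1) * F (i+1) := by
    simp only [mul_sub]
    rw [sum_sub_distrib, ← sum_mul, hFs0]
  have c5 : ∑ i ∈ range n, ∑ j ∈ range (n-1-i), s (i+1) * s (j+1)
      = ∑ i ∈ range n, s (i+1) * F (n-1-i) := by
    apply sum_congr rfl
    intro i _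
    rw [← mul_sum, hFs0]
  have c6 : 2 * ∑ i ∈ range n, ∑ j ∈ range (n-1-i), (1:ℤ) = (n:ℤ)^2 - n := by
    simp only [sum_const, card_range, nsmul_eq_mul, mul_one]
    rw [sum_range_reflect (fun i => (i:ℤ)) n]
    clear * -
    induction n with
    | zero => simp
    | succ n ih =>
      rw [sum_range_succ, mul_add, ih]
      push_cast
      ring
  have c7 := c3 n
  rw [c1, c2, c4, c5] at e4
  linarith

theorem mst_lower (n : ℕ) (χ : ℕ → Bool) : (n:ℤ)^2 - 4*n - 4 ≤ 11 * (mstCountChi n χ : ℤ) := by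
  have h := mst_formula_s4 n χ (fun i => if χ i then 1 else -1)
    (fun t => ∑ j ∈ range t, if χ (j+1) then 1 else -1) (fun i => rfl) (by simp)
    (fun j => by rw [sum_range_succ])
  have h2 := Q_lower (fun i => if χ i then 1 else -1) (fun i => by split_ifs <;> simp)
    (fun t => ∑ j ∈ range t, if χ (j+1) then 1 else -1) (by simp)
    (fun j => by rw [sum_range_succ]) n
  linarith

theorem pairs_card (r : ℕ) :
    2 * ((range r).sigma (fun i => range (r-1-i))).card = r * (r-1) := by
  rw [card_sigma]
  simp only [card_range]
  rw [sum_range_reflect (fun i => i) r, mul_comm, Finset.sum_range_id_mul_two]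

theorem mst_upper (n a b : ℕ) (hab : 2*a ≤ b) (hbn : b ≤ n) :
    2 * mstCountChi n (fun x => decide (a < x ∧ x ≤ b)) ≤
      a*(a-1) + (b-2*a)*(b-2*a-1) + 2*((n-b)*(n-b-1)) := by
  classical
  let P : ℕ → Finset (Σ _ : ℕ, ℕ) := fun r => (range r).sigma (fun i => range (r-1-i))
  let g : ℕ → ℕ → (Σ _ : ℕ, ℕ) → ℕ × ℕ × ℕ := fun u v q => (q.1+1+u, q.2+1+v, q.1+1+u+(q.2+1+v))
  have hsub : ((Finset.Icc 1 n ×ˢ Finset.Icc 1 n ×ˢ Finset.Icc 1 n).filter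
    (fun p => p.1 + p.2.1 = p.2.2 ∧ (fun x => decide (a < x ∧ x ≤ b)) p.1
      = (fun x => decide (a < x ∧ x ≤ b)) p.2.1 ∧ (fun x => decide (a < x ∧ x ≤ b)) p.2.1
      = (fun x => decide (a < x ∧ x ≤ b)) p.2.2)) ⊆
      ((P a).image (g 0 0) ∪ (P (b-2*a)).image (g a a)) ∪
      ((P (n-b)).image (g 0 b) ∪ (P (n-b)).image (g b 0)) := by
    rintro ⟨x, y, z⟩ h
    simp only [mem_filter, mem_product, mem_Icc, decide_eq_decide] at h
    obtain ⟨⟨hx, hy, hz⟩, h1, h2, h3⟩ := h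
    have key : ∀ r u v, u < x → v < y → x + y ≤ r + u + v → (x,y,z) ∈ (P r).image (g u v) := by
      intro r u v hu hv hr
      rw [mem_image]
      refine ⟨⟨x-1-u, y-1-v⟩, ?_, ?_⟩
      · simp only [P, mem_sigma, mem_range]
        omega
      · simp only [g, Prod.mk.injEq]
        omega
    simp only [mem_union]
    by_cases hxa : a < x ∧ x ≤ b
    · exact Or.inl (Or.inr (key _ _ _ (by omega) (by omega) (by omega)))
    · rcases le_or_gt x a with hx1 | hx1
      · rcases le_or_gt y a with hy1 | hy1
        · exact Or.inl (Or.inl (key _ _ _ (by omega) (by omega) (by omega)))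
        · exact Or.inr (Or.inl (key _ _ _ (by omega) (by omega) (by omega)))
      · exact Or.inr (Or.inr (key _ _ _ (by omega) (by omega) (by omega)))
  have hc := card_le_card hsub
  have u1 := card_union_le ((P a).image (g 0 0) ∪ (P (b-2*a)).image (g a a))
    ((P (n-b)).image (g 0 b) ∪ (P (n-b)).image (g b 0))
  have u2 := card_union_le ((P a).image (g 0 0)) ((P (b-2*a)).image (g a a))
  have u3 := card_union_le ((P (n-b)).image (g 0 b)) ((P (n-b)).image (g b 0))
  have i1 := card_image_le (s := P a) (f := g 0 0)
  have i2 := card_image_le (s := P (b-2*a)) (f := g a a)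
  have i3 := card_image_le (s := P (n-b)) (f := g 0 b)
  have i4 := card_image_le (s := P (n-b)) (f := g b 0)
  have p1 : 2 * (P a).card = _ := pairs_card a
  have p2 : 2 * (P (b-2*a)).card = _ := pairs_card (b-2*a)
  have p3 : 2 * (P (n-b)).card = _ := pairs_card (n-b)
  unfold mstCountChi
  omega

theorem cast_tri (a : ℕ) : ((a*(a-1) : ℕ) : ℤ) = (a:ℤ)*((a:ℤ)-1) := by
  cases a <;> simp

theorem exists_good (n : ℕ) : ∃ χ : ℕ → Bool,
    11 * (mstCountChi n χ : ℤ) ≤ (n:ℤ)^2 - 4*n + 6 := by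
  obtain ⟨q, r, hr, rfl⟩ : ∃ q r, r < 11 ∧ n = 11*q+r := ⟨n/11, n%11, by omega, by omega⟩
  have main : ∀ a d e : ℕ, 11*q+r = 2*a+d+e →
      11*((a:ℤ)*(a-1) + (e:ℤ)*(e-1) + 2*((d:ℤ)*(d-1)))
        ≤ 2*(((11*q+r:ℕ):ℤ)^2 - 4*((11*q+r:ℕ):ℤ) + 6) →
      ∃ χ : ℕ → Bool,
        11 * (mstCountChi (11*q+r) χ : ℤ) ≤ ((11*q+r:ℕ):ℤ)^2 - 4*((11*q+r:ℕ):ℤ) + 6 := by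
    intro a d e h1 h2
    refine ⟨fun x => decide (a < x ∧ x ≤ 2*a+e), ?_⟩
    · have := mst_upper (11*q+r) a (2*a+e) (by omega) (by omega)
      rw [show 2*a+e-2*a = e by omega, show 11*q+r-(2*a+e) = d by omega] at this
      generalize mstCountChi (11*q+r) (fun x => decide (a < x ∧ x ≤ 2*a+e)) = w at this ⊢
      zify at this
      have c1 := cast_tri a
      have c2 := cast_tri e
      have c3 := cast_tri d
      push_cast at c1 c2 c3 this h2 ⊢
      rw [c1, c2, c3] at this
      linarith
  interval_cases r
  · exact main (4*q) q (2*q) (by ring) (by push_cast; nlinarith)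
  · exact main (4*q) q (2*q+1) (by ring) (by push_cast; nlinarith)
  · exact main (4*q) (q+1) (2*q+1) (by ring) (by push_cast; nlinarith)
  · exact main (4*q+1) q (2*q+1) (by ring) (by push_cast; nlinarith)
  · exact main (4*q+1) (q+1) (2*q+1) (by ring) (by push_cast; nlinarith)
  · exact main (4*q+1) (q+1) (2*q+2) (by ring) (by push_cast; nlinarith)
  · exact main (4*q+2) (q+1) (2*q+1) (by ring) (by push_cast; nlinarith)
  · exact main (4*q+2) (q+1) (2*q+2) (by ring) (by push_cast; nlinarith)
  · exact main (4*q+3) (q+1) (2*q+1) (by ring) (by push_cast; nlinarith)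
  · exact main (4*q+3) (q+1) (2*q+2) (by ring) (by push_cast; nlinarith)
  · exact main (4*q+3) (q+1) (2*q+3) (by ring) (by push_cast; nlinarith)

end

/-- For every `n ≥ 1`, every 2-coloring of `[n]` admits at least
`⌊(n² − 4n + 6)/11⌋` monochromatic Schur triples, and some 2-coloring attains
exactly this number; i.e. `M(n) = ⌊(n² − 4n + 6)/11⌋`. -/
theorem min_monochromatic_schur_triples (n : ℕ) (hn : 1 ≤ n) :
    (∀ χ : ℕ → Bool, (n ^ 2 - 4 * n + 6) / 11 ≤ mstCountChi n χ) ∧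
    (∃ χ : ℕ → Bool, mstCountChi n χ = (n ^ 2 - 4 * n + 6) / 11) := by
  have low : ∀ χ : ℕ → Bool, (n ^ 2 - 4 * n + 6) / 11 ≤ mstCountChi n χ := by
    intro χ
    have h := mst_lower n χ
    rcases Nat.lt_or_ge n 4 with h4 | h4
    · interval_cases n <;> norm_num
    · have h5 : 4 * n ≤ n ^ 2 := by nlinarith
      have h6 : ((n ^ 2 : ℕ) : ℤ) = (n:ℤ)^2 := by push_cast; rfl
      rw [← h6] at h
      generalize n ^ 2 = w at *
      omega
  refine ⟨low, ?_⟩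
  obtain ⟨χ, h⟩ := exists_good n
  refine ⟨χ, le_antisymm ?_ (low χ)⟩
  rcases Nat.lt_or_ge n 4 with h4 | h4
  · interval_cases n <;> norm_num at h ⊢ <;> omega
  · have h5 : 4 * n ≤ n ^ 2 := by nlinarith
    have h6 : ((n ^ 2 : ℕ) : ℤ) = (n:ℤ)^2 := by push_cast; rfl
    rw [← h6] at h
    generalize n ^ 2 = w at *
    omega
end

section
/- The real quadratic function A(s,t) = 5s²/2 + 3t²/2 − 2st − 2t + 1 attains its global minimum over ℝ² at the unique point (s,t) = (4/11, 10/11), and the minimum value is A(4/11, 10/11) = 1/11. -/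
/-- The quadratic `A(s,t) = 5s²/2 + 3t²/2 − 2st − 2t + 1` attains its global
minimum over `ℝ²` at the unique point `(4/11, 10/11)`, with minimum value `1/11`. -/
theorem area_function_min :
    (5 * (4 / 11 : ℝ) ^ 2 / 2 + 3 * (10 / 11 : ℝ) ^ 2 / 2 -
        2 * (4 / 11) * (10 / 11) - 2 * (10 / 11) + 1 = 1 / 11) ∧
    ∀ s t : ℝ, (s, t) ≠ ((4 / 11 : ℝ), (10 / 11 : ℝ)) →
      1 / 11 < 5 * s ^ 2 / 2 + 3 * t ^ 2 / 2 - 2 * s * t - 2 * t + 1 := by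
  refine ⟨by norm_num, fun s t h => ?_⟩
  have key : 5 * s ^ 2 / 2 + 3 * t ^ 2 / 2 - 2 * s * t - 2 * t + 1 - 1 / 11 =
      5 / 2 * ((s - 4 / 11) - 2 / 5 * (t - 10 / 11)) ^ 2 + 11 / 10 * (t - 10 / 11) ^ 2 := by ring
  by_cases ht : t = 10 / 11
  · have hs : s - 4 / 11 ≠ 0 := fun hs => h (by rw [ht, sub_eq_zero.mp hs])
    have h1 : 0 < (s - 4 / 11) ^ 2 := by positivity
    subst ht
    nlinarith
  · have ht' : t - 10 / 11 ≠ 0 := sub_ne_zero.mpr ht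
    have h1 : 0 < (t - 10 / 11) ^ 2 := by positivity
    have h2 := sq_nonneg ((s - 4 / 11) - 2 / 5 * (t - 10 / 11))
    linarith
end

section
/- Let α₈ be the unique real root of a³ + a² − 3 in the interval [1,2] (α₈ ≈ 1.174559). For every real a ≥ α₈ and all real s, t with 0 ≤ s ≤ t ≤ 1, the area A(s,t,a) satisfies A(s,t,a) ≥ 1/(2a(a² + 2a + 3)), and equality holds at s₀ = (a+1)/(a² + 2a + 3), t₀ = (a² + 2a + 2)/(a² + 2a + 3). -/
/-- The area `A(s,t,a)` of the region
`Ω = {(x,y) : (x, y, x+ay) ∈ ([0,s] ∪ (t,1])³ ∨ (x, y, x+ay) ∈ (s,t]³}`,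
measuring the asymptotic proportion of monochromatic generalized Schur triples
under the block coloring with red blocks `[0,s]`, `(t,1]` and blue block `(s,t]`. -/
noncomputable def areaA (a s t : ℝ) : ℝ :=
  (MeasureTheory.volume {p : ℝ × ℝ |
    ((p.1 ∈ Set.Icc 0 s ∪ Set.Ioc t 1) ∧ (p.2 ∈ Set.Icc 0 s ∪ Set.Ioc t 1) ∧
      (p.1 + a * p.2 ∈ Set.Icc 0 s ∪ Set.Ioc t 1)) ∨
    (p.1 ∈ Set.Ioc s t ∧ p.2 ∈ Set.Ioc s t ∧ p.1 + a * p.2 ∈ Set.Ioc s t)}).toReal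

lemma cs3 (a s u v : ℝ) (ha : 1 ≤ a) (h : 1 ≤ (1+a)*s+u+v) :
    1 ≤ (a^2+2*a+3) * (s^2+u^2+v^2) := by
  nlinarith [sq_nonneg ((1+a)*u - s), sq_nonneg ((1+a)*v - s), sq_nonneg (u-v), sq_nonneg ((1+a)*s+u+v-1)]

lemma cs2 (a t w : ℝ) (ha : 1 ≤ a) (h : 1 ≤ (1+a)*t+w) :
    1 ≤ (a^2+2*a+2) * (t^2+w^2) := by
  nlinarith [sq_nonneg ((1+a)*w - t), sq_nonneg ((1+a)*t+w-1)]

lemma conc (c b d L R t : ℝ) (hc : 0 ≤ c) (h1 : L ≤ t) (h2 : t ≤ R)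
    (hL : 0 ≤ -c*L^2 + b*L + d) (hR : 0 ≤ -c*R^2 + b*R + d) : 0 ≤ -c*t^2 + b*t + d := by
  rcases eq_or_lt_of_le (h1.trans h2) with h | h
  · have : t = L := by linarith
    rw [this]; exact hL
  · have h3 : 0 < R - L := by linarith
    have : 0 ≤ (R-L) * (-c*t^2 + b*t + d) := by
      have e : (R-L) * (-c*t^2 + b*t + d) = (R-t)*(-c*L^2 + b*L + d) + (t-L)*(-c*R^2 + b*R + d)
        + c * ((R-L)*((t-L)*(R-t))) := by ring
      rw [e]
      have := sub_nonneg.2 h1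
      have := sub_nonneg.2 h2
      positivity
    exact nonneg_of_mul_nonneg_right this h3

lemma auxR (a t w : ℝ) (ha : 1 ≤ a) (h1 : 1 ≤ (1+a)*t) (hk : 0 ≤ (2*a+1)*t-a)
    (h3 : a*((2*a+1)*t-a) ≤ (2+2*a)*(1-t)) :
    (2+2*a) ≤ (a^2+2*a+3) * ((2+2*a)*(t^2+w^2) - ((2*a+1)*t-a)^2) := by
  have hD : 0 < a^2+2*a+3 := by positivity
  have hN : 0 < 2*a^2+3*a+2 := by positivity
  obtain ⟨b, rfl⟩ : ∃ b, a = 1 + b := ⟨a-1, by ring⟩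
  have hb : 0 ≤ b := by linarith
  generalize haa : 1 + b = a at *
  set R := (a^2+2*a+2)/(2*a^2+3*a+2) with hR
  have hRt : t ≤ R := by rw [hR, le_div_iff₀ hN]; nlinarith
  have val : ∀ x n, 0 < n → (2+2*a)*n^2 ≤ (a^2+2*a+3)*((2+2*a)*x^2 - ((2*a+1)*x-a*n)^2) →
      0 ≤ -((a^2+2*a+3)*(4*a^2+2*a-1))*(x/n)^2 + ((a^2+2*a+3)*(2*a*(2*a+1)))*(x/n) + (-(a^2+2*a+3)*a^2-(2+2*a)) := by
    intro x n hn h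
    have : -((a^2+2*a+3)*(4*a^2+2*a-1))*(x/n)^2 + ((a^2+2*a+3)*(2*a*(2*a+1)))*(x/n) + (-(a^2+2*a+3)*a^2-(2+2*a))
      = ((a^2+2*a+3)*((2+2*a)*x^2 - ((2*a+1)*x-a*n)^2) - (2+2*a)*n^2)/n^2 := by
      field_simp; ring
    rw [this]
    exact div_nonneg (by linarith) (by positivity)
  have vR := val (a^2+2*a+2) (2*a^2+3*a+2) hN (by
    subst haa
    rw [← sub_nonneg]
    ring_nf
    positivity)
  have hc : 0 ≤ (a^2+2*a+3)*(4*a^2+2*a-1) := mul_nonneg hD.le (by nlinarith)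
  have fin : 0 ≤ -((a^2+2*a+3)*(4*a^2+2*a-1))*t^2 + ((a^2+2*a+3)*(2*a*(2*a+1)))*t + (-(a^2+2*a+3)*a^2-(2+2*a)) := by
    rcases le_total (a^2) (a+1) with h | h
    · refine conc _ _ _ (1/(1+a)) R t hc ?_ hRt ?_ vR
      · rw [div_le_iff₀ (by linarith)]; linarith
      · apply val 1 (1+a) (by linarith)
        have hy : (1+a-a^2)^2 ≤ 1+a-a^2 := by
          have y0 : 0 ≤ 1+a-a^2 := by linarith
          have y1 : 1+a-a^2 ≤ 1 := by nlinarith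
          nlinarith
        have h8 : (a^2+2*a+3)*(1+a-a^2) ≤ 2*(2+2*a) := by
          subst haa
          rw [← sub_nonneg]; ring_nf; positivity
        have := mul_le_mul_of_nonneg_left hy hD.le
        nlinarith
    · refine conc _ _ _ (a/(2*a+1)) R t hc ?_ hRt ?_ vR
      · rw [div_le_iff₀ (by linarith)]; linarith
      · apply val a (2*a+1) (by linarith)
        have h9 : (2*a+1)^2 ≤ (a^2+2*a+3)*a^2 := by
          have := mul_le_mul_of_nonneg_left h (sq_nonneg a)
          have := mul_le_mul_of_nonneg_left h (by linarith : 0 ≤ 3*a)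
          nlinarith
        have := mul_le_mul_of_nonneg_left h9 (by linarith : 0 ≤ 2+2*a)
        nlinarith
  have hw := mul_nonneg hD.le (mul_nonneg (by linarith : 0 ≤ 2+2*a) (sq_nonneg w))
  nlinarith

lemma auxL (a t w : ℝ) (ha : 1 ≤ a) (ht : 0 ≤ t) (hw : 0 ≤ w) (hw1 : 1 - (1+a)*t ≤ w)
    (h1 : (1+a)*t ≤ 1) (hk : 0 ≤ (2*a+1)*t-a) (h2 : 1 ≤ (a^2+2*a+2) * (t^2+w^2)) :
    (2+2*a) ≤ (a^2+2*a+3) * ((2+2*a)*(t^2+w^2) - ((2*a+1)*t-a)^2) := by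
  have hD : 0 < a^2+2*a+3 := by positivity
  rcases le_total a (7/5) with h | h
  · have hww : (1 - (1+a)*t)^2 ≤ w^2 := by
      apply pow_le_pow_left₀ (by linarith) hw1
    have : 0 ≤ (a^2+2*a+3) * ((2+2*a)*(t^2+(1 - (1+a)*t)^2) - ((2*a+1)*t-a)^2) - (2+2*a) := by
      obtain ⟨b, rfl⟩ : ∃ b, a = 1 + b := ⟨a-1, by ring⟩
      have hb : 0 ≤ b := by linarith
      have hb1 : b ≤ 2/5 := by linarith
      set q2 := (2+2*(1+b))*(1+(1+(1+b))^2)-(2*(1+b)+1)^2 with hq2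
      set q1 := -2*(2+2*(1+b))*(1+(1+b))+2*(1+b)*(2*(1+b)+1) with hq1
      set D := (1+b)^2+2*(1+b)+3 with hDD
      have q2p : 0 < q2 := by
        have : q2 = 2*b^3+8*b^2+14*b+11 := by rw [hq2]; ring
        rw [this]; positivity
      have disc : 0 ≤ 4*q2*(D*((2+2*(1+b))-(1+b)^2)-(2+2*(1+b))) - D*q1^2 := by
        have e : 4*q2*(D*((2+2*(1+b))-(1+b)^2)-(2+2*(1+b))) - D*q1^2 =
            16+104*b+80*b^2-176*b^3-320*b^4-208*b^5-64*b^6-8*b^7 := by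
          rw [hq2, hq1, hDD]; ring
        rw [e]
        have p2 : b^2 ≤ (2/5)^2 := pow_le_pow_left₀ hb hb1 2
        have p3 : b^3 ≤ (2/5)^3 := pow_le_pow_left₀ hb hb1 3
        have p4 : b^4 ≤ (2/5)^4 := pow_le_pow_left₀ hb hb1 4
        have p5 : b^5 ≤ (2/5)^5 := pow_le_pow_left₀ hb hb1 5
        have p6 : b^6 ≤ (2/5)^6 := pow_le_pow_left₀ hb hb1 6
        have r2 := mul_le_mul_of_nonneg_left p2 hb
        have r3 := mul_le_mul_of_nonneg_left p3 hb
        have r4 := mul_le_mul_of_nonneg_left p4 hb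
        have r5 := mul_le_mul_of_nonneg_left p5 hb
        have r6 := mul_le_mul_of_nonneg_left p6 hb
        nlinarith [sq_nonneg b]
      have : 0 ≤ (4*q2) * (D * ((2+2*(1+b))*(t^2+(1 - (1+(1+b))*t)^2) - ((2*(1+b)+1)*t-(1+b))^2) - (2+2*(1+b))) := by
        have e : (4*q2) * (D * ((2+2*(1+b))*(t^2+(1 - (1+(1+b))*t)^2) - ((2*(1+b)+1)*t-(1+b))^2) - (2+2*(1+b)))
          = D*(2*q2*t+q1)^2 + (4*q2*(D*((2+2*(1+b))-(1+b)^2)-(2+2*(1+b))) - D*q1^2) := by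
          rw [hq1, hq2]; ring
        rw [e]; positivity
      exact nonneg_of_mul_nonneg_right this (by linarith)
    have := mul_nonneg hD.le (mul_nonneg (by linarith : 0 ≤ 2+2*a) (sub_nonneg.2 hww))
    nlinarith
  · have hy : ((2*a+1)*t-a)*(1+a) ≤ 1+a-a^2 := by nlinarith
    have hy0 : 0 ≤ 1+a-a^2 := le_trans (mul_nonneg hk (by linarith)) hy
    have ha2 : a ≤ 17/10 := by nlinarith
    have hy1 : 1+a-a^2 ≤ 11/25 := by nlinarith
    have hy2 : ((2*a+1)*t-a)*(1+a) ≤ 11/25 := by linarith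
    set k := (2*a+1)*t-a
    have hk2 : k ≤ 11/60 := by nlinarith
    have hk3 : k^2 ≤ (11/60)^2 := pow_le_pow_left₀ hk hk2 2
    have hT : 0 ≤ t^2+w^2 := by positivity
    have hT1 : 1/9 ≤ t^2+w^2 := by nlinarith
    have hDk : (a^2+2*a+3) * k^2 ≤ 10*(11/60)^2 := by
      apply mul_le_mul (by nlinarith) hk3 (sq_nonneg _) (by norm_num)
    have h7 := mul_le_mul_of_nonneg_left h2 (by linarith : 0 ≤ 2+2*a)
    have h8 := mul_le_mul_of_nonneg_left hT1 (by linarith : 0 ≤ 2+2*a)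
    nlinarith

/-- u ≥ 0 case -/
lemma caseB1 (a s t w : ℝ) (ha : 1 ≤ a) (hs : 0 ≤ s) (ht : 0 ≤ t) (hw : 0 ≤ w)
    (hw1 : 1 - (1+a)*t ≤ w) (hv : a * s ≤ 1 - t) (hu : (1+a)*s ≤ t) :
    1 ≤ (a^2+2*a+3) * (s^2 + (t-(1+a)*s)^2 + 2*a*s*(1-t) - a^2*s^2 + w^2) := by
  have hD : 0 < a^2+2*a+3 := by positivity
  have hG : s^2 + (t-(1+a)*s)^2 + 2*a*s*(1-t) - a^2*s^2 + w^2
    = (2+2*a)*s^2 - 2*((2*a+1)*t-a)*s + t^2 + w^2 := by ring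
  rw [hG]
  have h2 := cs2 a t w ha (by linarith)
  rcases le_total ((2*a+1)*t - a) 0 with hk | hk
  · have h1 : 0 ≤ (2+2*a)*s^2 - 2*((2*a+1)*t-a)*s := by
      have := mul_nonneg (neg_nonneg.mpr hk) hs
      nlinarith [sq_nonneg s]
    nlinarith [mul_nonneg hD.le h1, sq_nonneg t, sq_nonneg w]
  have hE : 0 < 2+2*a := by linarith
  have hsq : (2+2*a) * ((2+2*a)*s^2 - 2*((2*a+1)*t-a)*s) ≥ -((2*a+1)*t-a)^2 := by
    nlinarith [sq_nonneg ((2+2*a)*s - ((2*a+1)*t-a))]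
  -- enough
  have key : (2+2*a) ≤ (a^2+2*a+3) * ((2+2*a)*(t^2+w^2) - ((2*a+1)*t-a)^2) →
      1 ≤ (a^2+2*a+3) * ((2+2*a)*s^2 - 2*((2*a+1)*t-a)*s + t^2 + w^2) := by
    intro h
    have : (2+2*a) * 1 ≤ (2+2*a) * ((a^2+2*a+3) * ((2+2*a)*s^2 - 2*((2*a+1)*t-a)*s + t^2 + w^2)) := by
      nlinarith [mul_le_mul_of_nonneg_left hsq hD.le]
    exact le_of_mul_le_mul_left this hE
  rcases le_total 1 ((1+a)*t) with h1 | h1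
  · rcases le_total ((2+2*a)*(1-t)) (a*((2*a+1)*t-a)) with h3 | h3
    · -- decreasing
      set r := (1-t)/a with hr
      have har : a * r = 1 - t := by rw [hr]; field_simp
      have hsr : s ≤ r := by rw [hr, le_div_iff₀ (by linarith)]; linarith
      have hrk : (2+2*a)*r ≤ (2*a+1)*t-a := by
        rw [← har] at h3
        have : a * ((2+2*a)*r) ≤ a*((2*a+1)*t-a) := by linarith
        exact le_of_mul_le_mul_left this (by linarith)
      have hc := cs3 a r (t-(1+a)*r) (1-t) ha (by linarith)
      have hge : (2+2*a)*r^2 - 2*((2*a+1)*t-a)*r ≤ (2+2*a)*s^2 - 2*((2*a+1)*t-a)*s := by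
        have := mul_nonneg (sub_nonneg.2 hsr) (sub_nonneg.2 hrk)
        nlinarith [mul_nonneg hE.le (sq_nonneg (r-s))]
      have he : r^2 + (t-(1+a)*r)^2 + (1-t)^2 = (2+2*a)*r^2 - 2*((2*a+1)*t-a)*r + t^2 := by
        have : t = 1 - a*r := by linarith
        rw [this]; ring
      rw [he] at hc
      refine hc.trans (mul_le_mul_of_nonneg_left ?_ hD.le)
      nlinarith [sq_nonneg w]
    · apply key
      apply auxR a t w ha h1 hk h3
  · apply key
    exact auxL a t w ha ht hw hw1 h1 hk h2

lemma caseB (a s t w u : ℝ) (ha : 1 ≤ a) (hs : 0 ≤ s) (ht : 0 ≤ t) (hw : 0 ≤ w)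
    (hw1 : 1 - (1+a)*t ≤ w) (hv : a * s ≤ 1 - t) (hu : u = max (t - (1+a)*s) 0) :
    1 ≤ (a^2+2*a+3) * (s^2 + u^2 + 2*a*s*(1-t) - a^2*s^2 + w^2) := by
  rcases le_total ((1+a)*s) t with h | h
  · rw [hu, max_eq_left (by linarith)]
    exact caseB1 a s t w ha hs ht hw hw1 hv h
  · rw [hu, max_eq_right (by linarith)]
    set r := t/(1+a) with hr
    have har : (1+a) * r = t := by rw [hr]; field_simp
    have hr0 : 0 ≤ r := by positivity
    have hrs : r ≤ s := by rw [hr, div_le_iff₀ (by linarith)]; linarith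
    have := caseB1 a r t w ha hr0 ht hw hw1 (by nlinarith) har.le
    refine this.trans (mul_le_mul_of_nonneg_left ?_ (by positivity))
    have h5 : 0 ≤ (s-r) * (2*a*(1-t) - (a^2-1)*(s+r)) := by
      apply mul_nonneg (by linarith)
      nlinarith [mul_nonneg (by linarith : 0 ≤ a) (sub_nonneg.2 hv), mul_nonneg (by linarith : 0 ≤ a) (sub_nonneg.2 hrs), sq_nonneg a, mul_nonneg (by positivity : 0 ≤ a^2) (sub_nonneg.2 hrs)]
    rw [har]
    nlinarith
open MeasureTheory Set
def TO (a p q c m : ℝ) : Set (ℝ×ℝ) := {z | (q < z.2 ∧ z.2 < q+m) ∧ p < z.1 ∧ z.1 < p + c - a*(z.2-q)}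
def TC (a p q c m : ℝ) : Set (ℝ×ℝ) := {z | (q ≤ z.2 ∧ z.2 ≤ q+m) ∧ p ≤ z.1 ∧ z.1 ≤ p + c - a*(z.2-q)}

lemma measTO (a p q c m : ℝ) : MeasurableSet (TO a p q c m) := by
  apply IsOpen.measurableSet
  simp only [TO, ofPred_and]
  refine IsOpen.inter (IsOpen.inter ?_ ?_) (IsOpen.inter ?_ ?_)
  all_goals apply isOpen_lt <;> fun_prop
lemma measTC (a p q c m : ℝ) : MeasurableSet (TC a p q c m) := by
  apply IsClosed.measurableSet
  simp only [TC, ofPred_and]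
  refine IsClosed.inter (IsClosed.inter ?_ ?_) (IsClosed.inter ?_ ?_)
  all_goals apply isClosed_le <;> fun_prop

lemma integ (a q c m : ℝ) (ha : 0 ≤ a) (hm : 0 ≤ m) (h : a*m ≤ c) :
    ∫⁻ y in Icc q (q+m), ENNReal.ofReal (c - a*(y-q)) = ENNReal.ofReal (c*m - a*m^2/2) := by
  rw [← ofReal_integral_eq_lintegral_ofReal]
  · congr 1
    rw [integral_Icc_eq_integral_Ioc, ← intervalIntegral.integral_of_le (by linarith)]
    have : ∀ y ∈ Set.uIcc q (q+m), HasDerivAt (fun y => c*y - a*(y-q)^2/2) (c - a*(y-q)) y := by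
      intro y _
      have h1 := (hasDerivAt_id y).const_mul c
      have h2 := ((((hasDerivAt_id y).sub_const q).pow 2).const_mul a).div_const 2
      have h3 : HasDerivAt (fun y => c*y - a*(y-q)^2/2) _ y := h1.sub h2
      refine h3.congr_deriv ?_
      simp only [id, Nat.cast_ofNat]; ring
    rw [intervalIntegral.integral_eq_sub_of_hasDerivAt this]
    · ring
    · apply Continuous.intervalIntegrable; fun_prop
  · apply Continuous.integrableOn_Icc; fun_prop
  · refine (ae_restrict_iff' measurableSet_Icc).2 (Filter.Eventually.of_forall ?_)
    intro y hy
    simp only [Pi.zero_apply]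
    nlinarith [hy.1, hy.2]

lemma volTC (a p q c m : ℝ) (ha : 0 ≤ a) (hm : 0 ≤ m) (h : a*m ≤ c) :
    volume (TC a p q c m) = ENNReal.ofReal (c*m - a*m^2/2) := by
  rw [Measure.volume_eq_prod, Measure.prod_apply_symm (measTC a p q c m), ← integ a q c m ha hm h,
    ← lintegral_indicator measurableSet_Icc]
  congr 1; ext y
  by_cases hy : y ∈ Icc q (q+m)
  · rw [indicator_of_mem hy]
    have : (fun x => (x,y)) ⁻¹' TC a p q c m = Icc p (p + c - a*(y-q)) := by
      ext x; simp only [TC, mem_preimage, mem_ofPred_eq, mem_Icc]; exact ⟨fun h => h.2, fun h => ⟨hy, h⟩⟩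
    rw [this, Real.volume_Icc]; congr 1; ring
  · rw [indicator_of_notMem hy]
    have : (fun x => (x,y)) ⁻¹' TC a p q c m = ∅ := by
      ext x; simp only [TC, mem_preimage, mem_ofPred_eq, mem_empty_iff_false, iff_false]; exact fun h => hy h.1
    rw [this, measure_empty]

lemma volTO (a p q c m : ℝ) (ha : 0 ≤ a) (hm : 0 ≤ m) (h : a*m ≤ c) :
    volume (TO a p q c m) = ENNReal.ofReal (c*m - a*m^2/2) := by
  rw [Measure.volume_eq_prod, Measure.prod_apply_symm (measTO a p q c m), ← integ a q c m ha hm h,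
    ← setLIntegral_congr (Ioo_ae_eq_Icc (a := q) (b := q+m)),
    ← lintegral_indicator measurableSet_Ioo]
  congr 1; ext y
  by_cases hy : y ∈ Ioo q (q+m)
  · rw [indicator_of_mem hy]
    have : (fun x => (x,y)) ⁻¹' TO a p q c m = Ioo p (p + c - a*(y-q)) := by
      ext x; simp only [TO, mem_preimage, mem_ofPred_eq, mem_Ioo]; exact ⟨fun h => h.2, fun h => ⟨hy, h⟩⟩
    rw [this, Real.volume_Ioo]; congr 1; ring
  · rw [indicator_of_notMem hy]
    have : (fun x => (x,y)) ⁻¹' TO a p q c m = ∅ := by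
      ext x; simp only [TO, mem_preimage, mem_ofPred_eq, mem_empty_iff_false, iff_false]; exact fun h => hy h.1
    rw [this, measure_empty]

lemma tri (a p q c : ℝ) (ha : 1 ≤ a) (hc : 0 ≤ c) :
    volume (TO a p q c (c/a)) = ENNReal.ofReal (c^2/(2*a)) := by
  rw [volTO a p q c (c/a) (by linarith) (by positivity) (by field_simp; exact le_refl _)]
  congr 1; field_simp; ring

lemma triC (a p q c : ℝ) (ha : 1 ≤ a) (hc : 0 ≤ c) :
    volume (TC a p q c (c/a)) = ENNReal.ofReal (c^2/(2*a)) := by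
  rw [volTC a p q c (c/a) (by linarith) (by positivity) (by field_simp; exact le_refl _)]
  congr 1; field_simp; ring

lemma lower (a s t m : ℝ) (ha : 1 ≤ a) (hs : 0 ≤ s) (hst : s ≤ t) (ht : t ≤ 1)
    (hm : 0 ≤ m) (hms : m ≤ s) (hmv : a * m ≤ 1 - t) :
    s^2/(2*a) + (max (t-(1+a)*s) 0)^2/(2*a) + ((1-t)*m - a*m^2/2) +
      (max (1-(1+a)*t) 0)^2/(2*a) ≤ areaA a s t := by
  set u := max (t-(1+a)*s) 0 with hu
  set w := max (1-(1+a)*t) 0 with hw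
  have hu0 : 0 ≤ u := le_max_right _ _
  have hw0 : 0 ≤ w := le_max_right _ _
  have a0 : 0 < a := by linarith
  have v1 := tri a 0 0 s ha hs
  have v2 := tri a s s u ha hu0
  have v3 := volTO a t 0 (1-t) m a0.le hm hmv
  have v4 := tri a t t w ha hw0
  -- coordinate facts
  have m1 : ∀ z ∈ TO a 0 0 s (s/a), 0 < z.1 ∧ z.1 < s ∧ 0 < z.2 ∧ z.2 < s ∧ z.1 + a*z.2 < s := by
    rintro ⟨x, y⟩ ⟨⟨h1, h2⟩, h3, h4⟩
    simp only at *
    have : y ≤ a*y := by nlinarith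
    refine ⟨h3, ?_, h1, ?_, ?_⟩ <;> linarith
  have m2 : ∀ z ∈ TO a s s u (u/a), s < z.1 ∧ z.1 < t ∧ s < z.2 ∧ z.2 < t ∧ s < z.1 + a*z.2 ∧ z.1 + a*z.2 < t := by
    rintro ⟨x, y⟩ ⟨⟨h1, h2⟩, h3, h4⟩
    simp only at *
    have h5 : y ≤ a*y := by nlinarith
    have h6 : 0 < a*(y-s) := mul_pos a0 (by linarith)
    have h7 : u = t-(1+a)*s := by
      rcases max_choice (t-(1+a)*s) 0 with h | h
      · rw [hu, h]
      · exfalso; rw [hu, h] at h4; linarith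
    rw [h7] at h4
    have h8 : s ≤ a*s := by nlinarith
    refine ⟨h3, ?_, h1, ?_, ?_, ?_⟩ <;> nlinarith
  have m3 : ∀ z ∈ TO a t 0 (1-t) m, t < z.1 ∧ z.1 < 1 ∧ 0 < z.2 ∧ z.2 < s ∧ t < z.1 + a*z.2 ∧ z.1 + a*z.2 < 1 := by
    rintro ⟨x, y⟩ ⟨⟨h1, h2⟩, h3, h4⟩
    simp only at *
    have h6 : 0 < a*y := mul_pos a0 h1
    refine ⟨h3, ?_, h1, ?_, ?_, ?_⟩ <;> linarith
  have m4 : ∀ z ∈ TO a t t w (w/a), t < z.1 ∧ z.1 < 1 ∧ t < z.2 ∧ z.2 < 1 ∧ t < z.1 + a*z.2 ∧ z.1 + a*z.2 < 1 := by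
    rintro ⟨x, y⟩ ⟨⟨h1, h2⟩, h3, h4⟩
    simp only at *
    have h5 : y ≤ a*y := by nlinarith
    have h6 : 0 < a*(y-t) := mul_pos a0 (by linarith)
    have h7 : w = 1-(1+a)*t := by
      rcases max_choice (1-(1+a)*t) 0 with h | h
      · rw [hw, h]
      · exfalso; rw [hw, h] at h4; linarith
    rw [h7] at h4
    have h8 : t ≤ a*t := by nlinarith
    refine ⟨h3, ?_, h1, ?_, ?_, ?_⟩ <;> nlinarith
  have d34 : Disjoint (TO a t 0 (1-t) m) (TO a t t w (w/a)) := by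
    rw [Set.disjoint_left]; intro z h1 h2
    have := m3 z h1; have := m4 z h2; linarith
  have d2 : Disjoint (TO a s s u (u/a)) (TO a t 0 (1-t) m ∪ TO a t t w (w/a)) := by
    rw [Set.disjoint_left]; rintro z h1 (h2 | h2)
    · have := m2 z h1; have := m3 z h2; linarith
    · have := m2 z h1; have := m4 z h2; linarith
  have d1 : Disjoint (TO a 0 0 s (s/a)) (TO a s s u (u/a) ∪ (TO a t 0 (1-t) m ∪ TO a t t w (w/a))) := by
    rw [Set.disjoint_left]; rintro z h1 (h2 | h2 | h2)
    · have := m1 z h1; have := m2 z h2; linarith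
    · have := m1 z h1; have := m3 z h2; linarith
    · have := m1 z h1; have := m4 z h2; linarith
  have hp3 : 0 ≤ (1-t)*m - a*m^2/2 := by nlinarith
  have vol : volume (TO a 0 0 s (s/a) ∪ (TO a s s u (u/a) ∪ (TO a t 0 (1-t) m ∪ TO a t t w (w/a)))) =
      ENNReal.ofReal (s^2/(2*a) + u^2/(2*a) + ((1-t)*m - a*m^2/2) + w^2/(2*a)) := by
    rw [measure_union d1 ((measTO _ _ _ _ _).union ((measTO _ _ _ _ _).union (measTO _ _ _ _ _))),
      measure_union d2 ((measTO _ _ _ _ _).union (measTO _ _ _ _ _)),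
      measure_union d34 (measTO _ _ _ _ _), v1, v2, v3, v4,
      ← ENNReal.ofReal_add hp3 (by positivity), ← ENNReal.ofReal_add (by positivity) (by positivity),
      ← ENNReal.ofReal_add (by positivity) (by positivity)]
    congr 1; ring
  unfold areaA
  rw [← ENNReal.ofReal_le_iff_le_toReal, ← vol]
  · apply measure_mono
    rintro z (h | h | h | h)
    · have := m1 z h
      left
      refine ⟨Or.inl ⟨?_, ?_⟩, Or.inl ⟨?_, ?_⟩, Or.inl ⟨?_, ?_⟩⟩ <;> nlinarith
    · have := m2 z h
      right
      refine ⟨⟨?_, ?_⟩, ⟨?_, ?_⟩, ⟨?_, ?_⟩⟩ <;> linarith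
    · have := m3 z h
      left
      refine ⟨Or.inr ⟨?_, ?_⟩, Or.inl ⟨?_, ?_⟩, Or.inr ⟨?_, ?_⟩⟩ <;> linarith
    · have := m4 z h
      left
      refine ⟨Or.inr ⟨?_, ?_⟩, Or.inr ⟨?_, ?_⟩, Or.inr ⟨?_, ?_⟩⟩ <;> linarith
  · have hsub : ∀ r ∈ Icc 0 s ∪ Ioc t 1, r ∈ Icc (0:ℝ) 1 := by
      rintro r (h | h)
      · exact ⟨h.1, by linarith [h.2]⟩
      · exact ⟨by linarith [h.1], h.2⟩
    have hsub2 : ∀ r ∈ Ioc s t, r ∈ Icc (0:ℝ) 1 := by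
      rintro r h
      exact ⟨by linarith [h.1], by linarith [h.2]⟩
    refine ne_top_of_le_ne_top (b := volume (Icc (0:ℝ) 1 ×ˢ Icc (0:ℝ) 1)) ?_ (measure_mono ?_)
    · exact (isCompact_Icc.prod isCompact_Icc).measure_lt_top.ne
    · rintro z (h | h)
      · exact ⟨hsub _ h.1, hsub _ h.2.1⟩
      · exact ⟨hsub2 _ h.1, hsub2 _ h.2.1⟩

lemma lowerBound (a s t : ℝ) (ha : 1 ≤ a) (hs : 0 ≤ s) (hst : s ≤ t) (ht : t ≤ 1) :
    1 / (2 * a * (a ^ 2 + 2 * a + 3)) ≤ areaA a s t := by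
  have hD : 0 < a^2+2*a+3 := by positivity
  have a0 : 0 < a := by linarith
  have fin : ∀ X, 1 ≤ (a^2+2*a+3) * (2*a*X) → 1 / (2 * a * (a ^ 2 + 2 * a + 3)) ≤ X := by
    intro X h
    rw [div_le_iff₀ (by positivity)]; linarith
  rcases le_total (1-t) (a*s) with h | h
  · refine (fin _ ?_).trans (lower a s t ((1-t)/a) ha hs hst ht (div_nonneg (by linarith) a0.le) (by rw [div_le_iff₀ a0]; linarith) (by field_simp; exact le_refl _))
    have e : 2*a*(s^2/(2*a) + (max (t-(1+a)*s) 0)^2/(2*a) + ((1-t)*((1-t)/a) - a*((1-t)/a)^2/2) +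
      (max (1-(1+a)*t) 0)^2/(2*a)) = s^2 + (max (t-(1+a)*s) 0)^2 + (1-t)^2 + (max (1-(1+a)*t) 0)^2 := by
      field_simp; ring
    rw [e]
    have := cs3 a s (max (t-(1+a)*s) 0) (1-t) ha (by linarith [le_max_left (t-(1+a)*s) 0])
    refine this.trans (mul_le_mul_of_nonneg_left ?_ hD.le)
    linarith [sq_nonneg (max (1-(1+a)*t) 0)]
  · refine (fin _ ?_).trans (lower a s t s ha hs hst ht hs le_rfl h)
    have e : 2*a*(s^2/(2*a) + (max (t-(1+a)*s) 0)^2/(2*a) + ((1-t)*s - a*s^2/2) +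
      (max (1-(1+a)*t) 0)^2/(2*a)) = s^2 + (max (t-(1+a)*s) 0)^2 + 2*a*s*(1-t) - a^2*s^2 + (max (1-(1+a)*t) 0)^2 := by
      field_simp; ring
    rw [e]
    exact caseB a s t _ _ ha hs (hs.trans hst) (le_max_right _ _) (le_max_left _ _) h rfl

lemma upper (a s t : ℝ) (ha : 1 ≤ a) (hs : 0 ≤ s) (ht : t ≤ 1)
    (hu : 0 ≤ t - (1+a)*s) (hat : 1 ≤ a*t) :
    areaA a s t ≤ s^2/(2*a) + (t-(1+a)*s)^2/(2*a) + (1-t)^2/(2*a) := by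
  have a0 : 0 < a := by linarith
  unfold areaA
  apply ENNReal.toReal_le_of_le_ofReal (by positivity)
  rw [ENNReal.ofReal_add (by positivity) (by positivity), ENNReal.ofReal_add (by positivity) (by positivity),
    ← triC a 0 0 s ha hs, ← triC a s s _ ha hu, ← triC a t 0 (1-t) ha (by linarith)]
  refine le_trans (measure_mono ?_) ((measure_union_le (TC a 0 0 s (s/a) ∪ TC a s s (t-(1+a)*s) ((t-(1+a)*s)/a)) (TC a t 0 (1-t) ((1-t)/a))).trans
    (add_le_add_left (measure_union_le _ _) _))
  have mk : ∀ p q c x y, q ≤ y → p ≤ x → x + a*y ≤ p + a*q + c → (x,y) ∈ TC a p q c (c/a) := by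
    intro p q c x y h1 h2 h3
    refine ⟨⟨h1, ?_⟩, h2, ?_⟩
    · have : y - q ≤ c/a := by rw [le_div_iff₀ a0]; linarith
      simp only; linarith
    · simp only; linarith
  have st : s ≤ t := by nlinarith
  rintro ⟨x, y⟩ (⟨hx, hy, hz⟩ | ⟨hx, hy, hz⟩)
  · simp only at hx hy hz
    have y0 : 0 ≤ y := by rcases hy with h | h <;> linarith [h.1]
    have x0 : 0 ≤ x := by rcases hx with h | h <;> linarith [h.1]
    have z1 : x + a*y ≤ 1 := by rcases hz with h | h <;> linarith [h.2]
    rcases hx with hx | hx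
    · rcases hy with hy | hy
      · rcases hz with hz | hz
        · exact Or.inl (Or.inl (mk _ _ _ _ _ y0 x0 (by linarith [hz.2])))
        · exfalso
          have := mul_le_mul_of_nonneg_left hy.2 a0.le
          linarith [hx.2, hz.1]
      · exfalso
        have := mul_lt_mul_of_pos_left hy.1 a0
        linarith
    · exact Or.inr (mk _ _ _ _ _ y0 hx.1.le (by linarith))
  · exact Or.inl (Or.inr (mk _ _ _ _ _ hy.1.le hx.1.le (by linarith [hz.2])))

theorem area_min_large_a (α : ℝ) (hα : α ∈ Set.Icc (1 : ℝ) 2)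
    (hroot : α ^ 3 + α ^ 2 - 3 = 0) (a : ℝ) (ha : α ≤ a) :
    (∀ s t : ℝ, 0 ≤ s → s ≤ t → t ≤ 1 →
      1 / (2 * a * (a ^ 2 + 2 * a + 3)) ≤ areaA a s t) ∧
    areaA a ((a + 1) / (a ^ 2 + 2 * a + 3)) ((a ^ 2 + 2 * a + 2) / (a ^ 2 + 2 * a + 3)) =
      1 / (2 * a * (a ^ 2 + 2 * a + 3)) := by
  have α1 := hα.1
  have a1 : 1 ≤ a := α1.trans ha
  have a0 : 0 < a := by linarith
  have hD : 0 < a^2+2*a+3 := by positivity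
  refine ⟨fun s t hs hst ht => lowerBound a s t a1 hs hst ht, le_antisymm ?_ ?_⟩
  · have h3 : α^3 ≤ a^3 := pow_le_pow_left₀ (by linarith) ha 3
    have h2 : α^2 ≤ a^2 := pow_le_pow_left₀ (by linarith) ha 2
    refine (upper a _ _ a1 (by positivity) ?_ ?_ ?_).trans (le_of_eq ?_)
    · rw [div_le_one hD]; linarith
    · have : (a ^ 2 + 2 * a + 2) / (a ^ 2 + 2 * a + 3) - (1+a)*((a + 1) / (a ^ 2 + 2 * a + 3)) = 1/(a ^ 2 + 2 * a + 3) := by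
        field_simp; ring
      rw [this]; positivity
    · rw [mul_div_assoc', le_div_iff₀ hD]; nlinarith
    · field_simp; ring
  · apply lowerBound a _ _ a1 (by positivity)
    · exact div_le_div_of_nonneg_right (by nlinarith) hD.le
    · rw [div_le_one hD]; linarith
end

section
/- Let α₈ be the unique real root of a³ + a² − 3 in the interval [1,2] (α₈ ≈ 1.174559). For every real a with 1 ≤ a ≤ α₈ and all real s, t with 0 ≤ s ≤ t ≤ 1, the area A(s,t,a) satisfies A(s,t,a) ≥ (a⁴ − a² − 2a + 4)/(2a(a⁴ + 2a³ + 3a² + 2a + 3)), and equality holds at s₀ = (a+1)²/(a⁴ + 2a³ + 3a² + 2a + 3), t₀ = (a+1)(a² + 2a + 2)/(a⁴ + 2a³ + 3a² + 2a + 3). -/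
open MeasureTheory Set

def tri_s7 (a p q r : ℝ) : Set (ℝ × ℝ) := {z | p < z.1 ∧ q < z.2 ∧ z.1 + a * z.2 ≤ r}

lemma tri_meas (a p q r : ℝ) : MeasurableSet (tri_s7 a p q r) := by
  have : tri_s7 a p q r = {z : ℝ × ℝ | p < z.1} ∩ ({z : ℝ × ℝ | q < z.2} ∩
      {z : ℝ × ℝ | z.1 + a * z.2 ≤ r}) := rfl
  rw [this]
  refine (measurableSet_lt ?_ ?_).inter ((measurableSet_lt ?_ ?_).inter (measurableSet_le ?_ ?_)) <;> fun_prop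

lemma tri_vol (a p q r : ℝ) (ha : 0 < a) :
    volume (tri_s7 a p q r) = ENNReal.ofReal ((max 0 (r - p - a * q)) ^ 2 / (2 * a)) := by
  rw [Measure.volume_eq_prod, Measure.prod_apply (tri_meas a p q r)]
  have hs : ∀ x : ℝ, volume (Prod.mk x ⁻¹' tri_s7 a p q r) =
      (Ioc p (r - a * q)).indicator (fun x => ENNReal.ofReal ((r - x) / a - q)) x := by
    intro x
    by_cases hx : x ∈ Ioc p (r - a * q)
    · rw [indicator_of_mem hx]
      have : Prod.mk x ⁻¹' tri_s7 a p q r = Ioc q ((r - x) / a) := by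
        ext y
        simp only [tri_s7, mem_preimage, mem_ofPred_eq, mem_Ioc, le_div_iff₀ ha]
        constructor
        · rintro ⟨_, h1, h2⟩; exact ⟨h1, by linarith⟩
        · rintro ⟨h1, h2⟩; exact ⟨hx.1, h1, by linarith⟩
      rw [this, Real.volume_Ioc]
    · rw [indicator_of_notMem hx]
      have : Prod.mk x ⁻¹' tri_s7 a p q r = ∅ := by
        ext y
        simp only [tri_s7, mem_preimage, mem_ofPred_eq, mem_empty_iff_false, iff_false]
        rintro ⟨h0, h1, h2⟩
        exact hx ⟨h0, by nlinarith⟩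
      rw [this, measure_empty]
  simp_rw [hs]
  rw [lintegral_indicator measurableSet_Ioc]
  rcases le_total (r - a * q) p with h | h
  · rw [Ioc_eq_empty (by linarith), max_eq_left (by linarith)]; simp
  · rw [max_eq_right (by linarith), ← ofReal_integral_eq_lintegral_ofReal]
    · rw [← intervalIntegral.integral_of_le h]
      congr 1
      have : ∀ x ∈ uIcc p (r - a * q),
          HasDerivAt (fun x => - (r - x) ^ 2 / (2 * a) - q * x) ((r - x) / a - q) x := by
        intro x _
        have h1 := ((hasDerivAt_id x).const_sub r).pow 2
        have h2 := (h1.neg.div_const (2 * a)).sub ((hasDerivAt_id x).const_mul q)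
        refine h2.congr_deriv ?_
        simp; field_simp
      rw [intervalIntegral.integral_eq_sub_of_hasDerivAt this]
      · field_simp; ring
      · apply Continuous.intervalIntegrable; fun_prop
    · exact (by fun_prop : Continuous fun x => (r - x) / a - q).integrableOn_Ioc
    · refine (ae_restrict_iff' measurableSet_Ioc).2 (Filter.Eventually.of_forall fun x hx => ?_)
      have : q ≤ (r - x) / a := by rw [le_div_iff₀ ha]; linarith [hx.2]
      simp; linarith

noncomputable def T (a u : ℝ) : ℝ := (max 0 u) ^ 2 / (2 * a)

noncomputable def ti (a p q r : ℝ) : ℝ × ℝ → ℝ := (tri_s7 a p q r).indicator (fun _ => (1:ℝ))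

lemma ti_int (a p q r : ℝ) (ha : 0 < a) : Integrable (ti a p q r) := by
  refine (integrable_indicator_iff (tri_meas a p q r)).2 (integrableOn_const ?_)
  rw [tri_vol a p q r ha]; exact ENNReal.ofReal_ne_top

lemma ti_integral (a p q r : ℝ) (ha : 0 < a) : ∫ z, ti a p q r z = T a (r - p - a * q) := by
  unfold ti
  rw [integral_indicator_const _ (tri_meas a p q r), measureReal_def, tri_vol a p q r ha,
    ENNReal.toReal_ofReal (by positivity)]
  simp [T]

lemma hasInt (a p q r : ℝ) (ha : 0 < a) :
    Integrable (ti a p q r) ∧ ∫ z, ti a p q r z = T a (r - p - a * q) :=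
  ⟨ti_int a p q r ha, ti_integral a p q r ha⟩

lemma add_aux {f g : ℝ × ℝ → ℝ} {u v : ℝ} (hf : Integrable f ∧ ∫ z, f z = u)
    (hg : Integrable g ∧ ∫ z, g z = v) :
    Integrable (fun z => f z + g z) ∧ ∫ z, (f z + g z) = u + v :=
  ⟨hf.1.add hg.1, by rw [integral_add hf.1 hg.1, hf.2, hg.2]⟩

lemma sub_aux {f g : ℝ × ℝ → ℝ} {u v : ℝ} (hf : Integrable f ∧ ∫ z, f z = u)
    (hg : Integrable g ∧ ∫ z, g z = v) :
    Integrable (fun z => f z - g z) ∧ ∫ z, (f z - g z) = u - v :=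
  ⟨hf.1.sub hg.1, by rw [integral_sub hf.1 hg.1, hf.2, hg.2]⟩

def Om (a s t : ℝ) : Set (ℝ × ℝ) := {p : ℝ × ℝ |
    ((p.1 ∈ Set.Icc 0 s ∪ Set.Ioc t 1) ∧ (p.2 ∈ Set.Icc 0 s ∪ Set.Ioc t 1) ∧
      (p.1 + a * p.2 ∈ Set.Icc 0 s ∪ Set.Ioc t 1)) ∨
    (p.1 ∈ Set.Ioc s t ∧ p.2 ∈ Set.Ioc s t ∧ p.1 + a * p.2 ∈ Set.Ioc s t)}

lemma Om_meas (a s t : ℝ) : MeasurableSet (Om a s t) := by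
  have hC : MeasurableSet (Set.Icc 0 s ∪ Set.Ioc t 1) := measurableSet_Icc.union measurableSet_Ioc
  have hB : MeasurableSet (Set.Ioc s t) := measurableSet_Ioc
  have h3 : Measurable (fun p : ℝ × ℝ => p.1 + a * p.2) := by fun_prop
  exact ((measurable_fst hC).inter ((measurable_snd hC).inter (h3 hC))).union
    ((measurable_fst hB).inter ((measurable_snd hB).inter (h3 hB)))

lemma indic (a s t : ℝ) (ha : 1 ≤ a) (hs : 0 ≤ s) (hst : s ≤ t) (ht : t ≤ 1) (z : ℝ × ℝ)
    (hx : z.1 ≠ 0) (hy : z.2 ≠ 0) :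
    (Om a s t).indicator (fun _ => (1:ℝ)) z =
      ti a 0 0 s z + ti a 0 0 1 z - ti a s 0 1 z - ti a 0 s 1 z + ti a s s 1 z
      + ti a t 0 1 z + ti a 0 t 1 z - ti a s t 1 z - ti a t s 1 z + ti a t t 1 z
      - ti a 0 0 t z + ti a s 0 t z + ti a 0 s t z := by
  obtain ⟨x, y⟩ := z
  simp only at hx hy
  simp only [ti, Om, tri_s7, indicator_apply, mem_setOf_eq, mem_union, mem_Icc, mem_Ioc]
  rcases lt_or_gt_of_ne hx with hx | hx
  · have h1 : ¬ 0 ≤ x := not_le.2 hx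
    have h2 : ¬ 0 < x := by linarith
    have h3 : ¬ s < x := by linarith
    have h4 : ¬ t < x := by linarith
    simp [h1, h2, h3, h4]
  rcases lt_or_gt_of_ne hy with hy | hy
  · have h1 : ¬ 0 ≤ y := not_le.2 hy
    have h2 : ¬ 0 < y := by linarith
    have h3 : ¬ s < y := by linarith
    have h4 : ¬ t < y := by linarith
    simp [h1, h2, h3, h4]
  have hzx : x < x + a * y := by nlinarith
  have hzy : y < x + a * y := by nlinarith
  generalize x + a * y = w at *
  have hw : 0 ≤ w := by linarith
  have cut : ∀ u : ℝ, (¬ s < u ∧ ¬ t < u ∧ u ≤ s ∧ u ≤ t ∧ u ≤ 1) ∨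
      (s < u ∧ ¬ t < u ∧ ¬ u ≤ s ∧ u ≤ t ∧ u ≤ 1) ∨
      (s < u ∧ t < u ∧ ¬ u ≤ s ∧ ¬ u ≤ t ∧ u ≤ 1) ∨
      (s < u ∧ t < u ∧ ¬ u ≤ s ∧ ¬ u ≤ t ∧ ¬ u ≤ 1) := by
    intro u
    rcases le_or_gt u s with h | h
    · left; refine ⟨?_, ?_, ?_, ?_, ?_⟩ <;> linarith
    rcases le_or_gt u t with h' | h'
    · right; left; refine ⟨?_, ?_, ?_, ?_, ?_⟩ <;> linarith
    rcases le_or_gt u 1 with h'' | h''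
    · right; right; left; refine ⟨?_, ?_, ?_, ?_, ?_⟩ <;> linarith
    · right; right; right; refine ⟨?_, ?_, ?_, ?_, ?_⟩ <;> linarith
  rcases cut w with ⟨c1, c2, c3, c4, c5⟩ | ⟨c1, c2, c3, c4, c5⟩ | ⟨c1, c2, c3, c4, c5⟩ | ⟨c1, c2, c3, c4, c5⟩ <;>
  rcases cut x with ⟨d1, d2, d3, d4, d5⟩ | ⟨d1, d2, d3, d4, d5⟩ | ⟨d1, d2, d3, d4, d5⟩ | ⟨d1, d2, d3, d4, d5⟩ <;>
  (try (exfalso; linarith)) <;>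
  rcases cut y with ⟨e1, e2, e3, e4, e5⟩ | ⟨e1, e2, e3, e4, e5⟩ | ⟨e1, e2, e3, e4, e5⟩ | ⟨e1, e2, e3, e4, e5⟩ <;>
  (try (exfalso; linarith)) <;>
  simp only [hx, hy, hx.le, hy.le, hw, c1, c2, c3, c4, c5, d1, d2, d3, d4, d5, e1, e2, e3, e4, e5, and_true, true_and, and_false, false_and, or_false, or_true, false_or, true_or, if_true, if_false, and_self, or_self] <;> norm_num

lemma area_eq (a s t : ℝ) (ha : 1 ≤ a) (hs : 0 ≤ s) (hst : s ≤ t) (ht : t ≤ 1) :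
    areaA a s t = T a s + T a 1 - T a (1 - s) - T a (1 - a * s) + T a (1 - s - a * s)
      + T a (1 - t) + T a (1 - a * t) - T a (1 - s - a * t) - T a (1 - t - a * s)
      + T a (1 - t - a * t) - T a t + T a (t - s) + T a (t - a * s) := by
  have ha0 : 0 < a := by linarith
  have h0 : areaA a s t = ∫ z, (Om a s t).indicator (fun _ => (1:ℝ)) z := by
    rw [integral_indicator_const _ (Om_meas a s t), measureReal_def]
    simp [areaA, Om]
  have hnx : ∀ᵐ z : ℝ × ℝ, z.1 ≠ 0 := by
    have : volume (({0} : Set ℝ) ×ˢ (univ : Set ℝ)) = 0 := by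
      rw [Measure.volume_eq_prod, Measure.prod_prod]; simp
    refine measure_mono_null ?_ this
    intro z hz; simpa using hz
  have hny : ∀ᵐ z : ℝ × ℝ, z.2 ≠ 0 := by
    have : volume ((univ : Set ℝ) ×ˢ ({0} : Set ℝ)) = 0 := by
      rw [Measure.volume_eq_prod, Measure.prod_prod]; simp
    refine measure_mono_null ?_ this
    intro z hz; simpa using hz
  rw [h0, integral_congr_ae (g := fun z => ti a 0 0 s z + ti a 0 0 1 z - ti a s 0 1 z
      - ti a 0 s 1 z + ti a s s 1 z
      + ti a t 0 1 z + ti a 0 t 1 z - ti a s t 1 z - ti a t s 1 z + ti a t t 1 z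
      - ti a 0 0 t z + ti a s 0 t z + ti a 0 s t z)
      (by filter_upwards [hnx, hny] with z h1 h2 using indic a s t ha hs hst ht z h1 h2)]
  have H := fun p q r => hasInt a p q r ha0
  have := (add_aux (add_aux (sub_aux (add_aux (sub_aux (sub_aux (add_aux (add_aux (add_aux
    (sub_aux (sub_aux (add_aux (H 0 0 s) (H 0 0 1)) (H s 0 1)) (H 0 s 1)) (H s s 1))
    (H t 0 1)) (H 0 t 1)) (H s t 1)) (H t s 1)) (H t t 1)) (H 0 0 t)) (H s 0 t)) (H 0 s t)).2
  rw [this]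
  simp only [sub_zero, mul_zero]

lemma f_nn (u : ℝ) : 0 ≤ (max 0 u) ^ 2 := by positivity
lemma f_pos {u : ℝ} (h : 0 ≤ u) : (max 0 u) ^ 2 = u ^ 2 := by rw [max_eq_right h]
lemma f_neg {u : ℝ} (h : u ≤ 0) : (max 0 u) ^ 2 = 0 := by rw [max_eq_left h]; norm_num
lemma f_mono {u v : ℝ} (h : u ≤ v) : (max 0 u) ^ 2 ≤ (max 0 v) ^ 2 := by
  have : max 0 u ≤ max 0 v := max_le_max le_rfl h
  have : 0 ≤ max 0 u := le_max_left _ _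
  gcongr
lemma f_diff {u v k : ℝ} (h : v ≤ u) (hk : 0 ≤ k) (hh : 0 ≤ u → 2 * u * (u - v) ≤ k) :
    (max 0 u) ^ 2 - (max 0 v) ^ 2 ≤ k := by
  rcases le_total u 0 with hu | hu
  · rw [f_neg hu, f_neg (h.trans hu)]; simpa using hk
  · rw [f_pos hu]
    have := hh hu
    rcases le_total v 0 with hv | hv
    · rw [f_neg hv]; nlinarith
    · rw [f_pos hv]; nlinarith

noncomputable def EE (a s t : ℝ) : ℝ := (1 - (t - s)) ^ 2 - (max 0 (1 - a * s)) ^ 2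
  + (max 0 (1 - s - a * s)) ^ 2 + (max 0 (1 - a * t)) ^ 2 - (max 0 (1 - s - a * t)) ^ 2
  - (max 0 (1 - t - a * s)) ^ 2 + (max 0 (1 - t - a * t)) ^ 2 + (max 0 (t - a * s)) ^ 2

lemma case7 (a s t : ℝ) (ha : 1 ≤ a) (hb : a ≤ 47/40) (hs : 0 ≤ s) (hst : s ≤ t) (ht : t ≤ 1)
    (h7 : t - a * s ≤ 0) (hs1 : s ≤ 1) : 2 / 11 ≤ EE a s t := by
  have g1 : (max 0 (1 - t - a * s)) ^ 2 ≤ (max 0 (1 - s - a * s)) ^ 2 := f_mono (by linarith)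
  have hts : t - s ≤ (a - 1) * s := by linarith
  have hts0 : 0 ≤ t - s := by linarith
  have hts1 : t - s ≤ 7/40 := by nlinarith
  have g2 : (max 0 (1 - a * s)) ^ 2 - (max 0 (1 - a * t)) ^ 2 ≤ 1/10 := by
    refine f_diff (by nlinarith) (by norm_num) fun hu => ?_
    have e : 1 - a * s - (1 - a * t) ≤ a * s * (a - 1) := by nlinarith
    have e1 : a * s * (1 - a * s) ≤ 1/4 := by nlinarith [sq_nonneg (a * s - 1/2)]
    have e2 : 0 ≤ a * s * (1 - a * s) := by positivity
    have := mul_le_mul_of_nonneg_left e hu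
    nlinarith
  have g3 : (max 0 (1 - s - a * t)) ^ 2 - (max 0 (1 - t - a * t)) ^ 2 ≤ 1/10 := by
    refine f_diff (by nlinarith) (by norm_num) fun hu => ?_
    have e : 1 - s - a * t - (1 - t - a * t) ≤ s * (a - 1) := by nlinarith
    have e1 : s * (1 - s - a * t) ≤ 1/4 := by nlinarith [sq_nonneg (s - 1/2), mul_nonneg hs (by positivity : 0 ≤ a), mul_nonneg hs (mul_nonneg (by positivity : 0 ≤ a) (hs.trans hst))]
    have e2 : 0 ≤ s * (1 - s - a * t) := mul_nonneg hs hu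
    have := mul_le_mul_of_nonneg_left e hu
    nlinarith
  have g4 := f_nn (t - a * s)
  unfold EE
  nlinarith

lemma case2 (a s t : ℝ) (ha : 1 ≤ a) (hb : a ≤ 47/40) (hs : 0 ≤ s) (hst : s ≤ t) (ht : t ≤ 1)
    (h7 : 0 ≤ t - a * s) (h2 : 1 - s - a * s ≤ 0) : 2 / 11 ≤ EE a s t := by
  unfold EE
  rw [f_neg h2, f_pos h7, f_pos (by linarith : 0 ≤ 1 - a * s), f_neg (by nlinarith : 1 - s - a * t ≤ 0),
    f_neg (by linarith : 1 - t - a * s ≤ 0)]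
  have g1 := f_nn (1 - a * t)
  have g2 := f_nn (1 - t - a * t)
  have : 40 / 87 ≤ s := by nlinarith
  nlinarith [mul_nonneg (sub_nonneg.2 ht) (by linarith : 0 ≤ (1 + a) * s - 1), sq_nonneg (1 - t)]

lemma univ1 (a : ℝ) (ha : 1 ≤ a) (hb : a ≤ 47/40) :
  0 ≤ 2*(a-1)^2*(2*a+1)*(40/87) - a^3 - 2/11*a*(3+2*a) + 2*(2*a-1) := by
  obtain ⟨u, rfl⟩ : ∃ u, a = 1 + u := ⟨a - 1, by ring⟩
  have h0 : 0 ≤ u := by linarith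
  have h1 : u ≤ 7/40 := by linarith
  nlinarith [mul_nonneg h0 h0, mul_nonneg h0 (sub_nonneg.2 h1), mul_nonneg (mul_nonneg h0 h0) (sub_nonneg.2 h1), pow_nonneg h0 3]

lemma quad_nn (A B C s : ℝ) (hA : 0 < A) (h : B ^ 2 ≤ 4 * A * C) : 0 ≤ A * s ^ 2 - B * s + C := by
  have : 0 ≤ 4 * A * (A * s ^ 2 - B * s + C) := by nlinarith [sq_nonneg (2 * A * s - B)]
  exact nonneg_of_mul_nonneg_right this (by linarith)

lemma univ2 (u : ℝ) (h0 : 0 ≤ u) (h1 : u ≤ 7/40) : (2*(1+u)^3-2*(1+u)^2+4*(1+u)+2)^2 ≤ 4 * ((1+u)^4+5*(1+u)^2+4*(1+u)+2) * ((1+u)^2-2*(1+u)+2-2/11) := by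
  have h2 : 0 ≤ 7/40 - u := by linarith
  nlinarith [mul_nonneg h0 h2, mul_nonneg (mul_nonneg h0 h0) h2, mul_nonneg (pow_nonneg h0 3) h2, mul_nonneg (pow_nonneg h0 4) h2, mul_nonneg (pow_nonneg h0 5) h2, pow_nonneg h0 6, pow_nonneg h0 2, pow_nonneg h0 3]

lemma univ3 (u : ℝ) (h0 : 0 ≤ u) (h1 : u ≤ 7/40) : (2*(1+u)^3-2*(1+u)^2+4*(1+u)+2 - 7/47*(2+6*(1+u)+2*(1+u)^3))^2 ≤ 4 * ((1+u)^4+5*(1+u)^2+4*(1+u)+2) * ((1+u)^2-2*(1+u)+2-2/11+7/47*(2*(1+u)-2-2*(1+u)^2)) := by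
  have h2 : 0 ≤ 7/40 - u := by linarith
  nlinarith [mul_nonneg h0 h2, mul_nonneg (mul_nonneg h0 h0) h2, mul_nonneg (pow_nonneg h0 3) h2, mul_nonneg (pow_nonneg h0 4) h2, mul_nonneg (pow_nonneg h0 5) h2, pow_nonneg h0 6, pow_nonneg h0 2, pow_nonneg h0 3]

lemma caseC1 (a s t : ℝ) (ha : 1 ≤ a) (hb : a ≤ 47/40) (hs : 0 ≤ s) (hst : s ≤ t) (ht : t ≤ 1)
    (h4 : 0 ≤ 1 - s - a * t) (h6 : 1 - t - a * t ≤ 0) :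
    2 / 11 ≤ (1 - (t - s)) ^ 2 - (1 - a * s) ^ 2 + (1 - s - a * s) ^ 2 + (1 - a * t) ^ 2
      - (1 - s - a * t) ^ 2 - (1 - t - a * s) ^ 2 + (t - a * s) ^ 2 := by
  have k1 : 2 / 11 ≤ t ^ 2 + 2 * a * s - 2 * s * t - 4 * a * s * t + (3 + 2 * a) * s ^ 2 := by
    have k2 : 2 / 11 * (3 + 2 * a) ≤ (3 + 2 * a) * t ^ 2 - (t * (1 + 2 * a) - a) ^ 2 := by
      have k3 : 0 ≤ (1 - a * t) * (t + a * t - 1) := mul_nonneg (by linarith) (by linarith)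
      have k4 : 40 / 87 ≤ t := by nlinarith
      have k5 : 0 ≤ 2*(a-1)^2*(2*a+1) := by positivity
      have k6 := mul_le_mul_of_nonneg_left k4 k5
      have k7 := univ1 a ha hb
      have k8 := mul_nonneg (by linarith : 0 ≤ 2 * (2 * a - 1)) k3
      have k9 : a * (2 / 11 * (3 + 2 * a)) ≤ a * ((3 + 2 * a) * t ^ 2 - (t * (1 + 2 * a) - a) ^ 2) := by
        linear_combination k8 + k6 + k7
      exact le_of_mul_le_mul_left k9 (by linarith)
    have k5 := sq_nonneg ((3 + 2 * a) * s - (t * (1 + 2 * a) - a))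
    have : 0 < 3 + 2 * a := by linarith
    refine le_of_mul_le_mul_left ?_ this
    nlinarith
  nlinarith [mul_nonneg hs h4]

lemma caseC3 (a s t : ℝ) (ha : 1 ≤ a) (hb : a ≤ 47/40) (hs : 0 ≤ s) (hst : s ≤ t) (ht : t ≤ 1)
    (h3 : 0 ≤ 1 - a * t) (h4 : 1 - s - a * t ≤ 0) (h5 : 0 ≤ 1 - t - a * s) :
    2 / 11 ≤ (1 - (t - s)) ^ 2 - (1 - a * s) ^ 2 + (1 - s - a * s) ^ 2 + (1 - a * t) ^ 2
      - (1 - t - a * s) ^ 2 + (t - a * s) ^ 2 := by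
  obtain ⟨r, hr⟩ : ∃ r, r = 1 - t - a * s := ⟨_, rfl⟩
  rw [← hr] at h5
  obtain rfl : t = 1 - a * s - r := by linarith
  have hr1 : r ≤ 7 / 47 := by
    have : 0 ≤ (a - 1) * (a + 1) * s := by
      have : 0 ≤ a - 1 := by linarith
      positivity
    nlinarith
  obtain ⟨u, rfl⟩ : ∃ u, a = 1 + u := ⟨a - 1, by ring⟩
  have h0 : 0 ≤ u := by linarith
  have h1 : u ≤ 7/40 := by linarith
  have A0 : 0 < (1+u)^4+5*(1+u)^2+4*(1+u)+2 := by positivity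
  have q1 := quad_nn _ _ _ s A0 (univ2 u h0 h1)
  have q2 := quad_nn _ _ _ s A0 (univ3 u h0 h1)
  have q3 : 0 ≤ (1 + (1+u)^2) * r ^ 2 := by positivity
  rcases le_total 0 (2*(1+u) - 2*(1+(1+u)^2) + s*(2+6*(1+u)+2*(1+u)^3)) with hc | hc
  · have := mul_nonneg h5 hc
    linear_combination q1 + q3 + this
  · have := mul_nonneg_of_nonpos_of_nonpos (sub_nonpos.2 hr1) hc
    linear_combination q2 + q3 + this

lemma caseC6 (a s t : ℝ) (ha : 1 ≤ a) (hb : a ≤ 47/40) (hs : 0 ≤ s) (hst : s ≤ t) (ht : t ≤ 1)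
    (h3 : 1 - a * t ≤ 0) (h5 : 0 ≤ 1 - t - a * s) :
    2 / 11 ≤ (1 - (t - s)) ^ 2 - (1 - a * s) ^ 2 + (1 - s - a * s) ^ 2
      - (1 - t - a * s) ^ 2 + (t - a * s) ^ 2 := by
  have e : 40 / 47 ≤ t := by nlinarith
  have e1 : s ≤ 7 / 47 := by nlinarith
  have e2 : (2 + 4 * a) * (s * t) - 2 * a * s - (2 + 2 * a) * s ^ 2 ≤ 1 / 2 := by
    have : a * s ≤ 1 - t := by linarith
    have h1 : s ≤ 1 - t := by nlinarith
    have : a * s * t ≤ (1 - t) * t := by nlinarith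
    have : s * t ≤ (1 - t) * t := by nlinarith
    nlinarith
  nlinarith

lemma caseAll (a s t : ℝ) (ha : 1 ≤ a) (hb : a ≤ 47/40) (hs : 0 ≤ s) (hst : s ≤ t) (ht : t ≤ 1)
    (h6 : 0 ≤ 1 - t - a * t) :
    1 / (a ^ 2 + 2 * a + 2) ≤ (1 - (t - s)) ^ 2 - (1 - a * s) ^ 2 + (1 - s - a * s) ^ 2 + (1 - a * t) ^ 2
      - (1 - s - a * t) ^ 2 - (1 - t - a * s) ^ 2 + (1 - t - a * t) ^ 2 + (t - a * s) ^ 2 := by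
  have hp : 0 < a ^ 2 + 2 * a + 2 := by positivity
  have k : 0 ≤ 2 + 2 * a - (2 + 6 * a) * t := by
    have : 0 ≤ (1 + a) * (2 + 2 * a - (2 + 6 * a) * t) := by nlinarith
    exact nonneg_of_mul_nonneg_right this (by linarith)
  have k1 : 1 / (a ^ 2 + 2 * a + 2) ≤ 1 - (2 + 2 * a) * t + (a ^ 2 + 2 * a + 2) * t ^ 2 := by
    rw [div_le_iff₀ hp]
    nlinarith [sq_nonneg ((a ^ 2 + 2 * a + 2) * t - (1 + a))]
  have k2 := mul_nonneg hs k
  have k3 : 0 ≤ a * s ^ 2 := by positivity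
  nlinarith [sq_nonneg s]

lemma tight (a s t s0 t0 : ℝ) (e1 : (a ^ 2 + 2 * a + 2) * s0 = (1 + a) * t0)
    (e2 : (a ^ 2 + 2) * t0 - (1 + a) * s0 = 1 + a) :
    (1 - (t - s)) ^ 2 - (1 - a * s) ^ 2 + (1 - s - a * s) ^ 2 + (1 - a * t) ^ 2
      + (t - a * s) ^ 2 = 2 - (1 + a) * t0 + ((1 + a) * (s - s0) - (t - t0)) ^ 2 + (s - s0) ^ 2 +
        (t - t0) ^ 2 + a ^ 2 * (t - t0) ^ 2 := by
  linear_combination (2 * s - s0) * e1 + (2 * t - t0) * e2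

lemma main_ineq (a s t s0 t0 : ℝ) (ha : 1 ≤ a) (hb : a ≤ 47/40) (hs : 0 ≤ s) (hst : s ≤ t) (ht : t ≤ 1)
    (e1 : (a ^ 2 + 2 * a + 2) * s0 = (1 + a) * t0)
    (e2 : (a ^ 2 + 2) * t0 - (1 + a) * s0 = 1 + a) (e3 : a * t0 ≤ 1)
    (m1 : 2 - (1 + a) * t0 ≤ 2 / 11) (m2 : 2 - (1 + a) * t0 ≤ 1 / (a ^ 2 + 2 * a + 2)) :
    2 - (1 + a) * t0 ≤ EE a s t := by
  rcases le_total (t - a * s) 0 with h7 | h7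
  · exact m1.trans (case7 a s t ha hb hs hst ht h7 (hst.trans ht))
  rcases le_total (1 - s - a * s) 0 with h2 | h2
  · exact m1.trans (case2 a s t ha hb hs hst ht h7 h2)
  have h1 : 0 ≤ 1 - a * s := by linarith
  have h45 : 1 - s - a * t ≤ 1 - t - a * s := by nlinarith
  have h64 : 1 - t - a * t ≤ 1 - s - a * t := by linarith
  rw [EE, f_pos h7, f_pos h2, f_pos h1]
  rcases le_total (1 - t - a * s) 0 with h5 | h5
  · rw [f_neg h5, f_neg (h45.trans h5), f_neg (h64.trans (h45.trans h5))]
    have T := tight a s t s0 t0 e1 e2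
    rcases le_total (1 - a * t) 0 with h3 | h3
    · rw [f_neg h3]
      nlinarith [sq_nonneg ((1 + a) * (s - s0) - (t - t0)), sq_nonneg (s - s0), sq_nonneg (t - t0),
        mul_nonneg (sub_nonneg.2 e3) (by linarith : 0 ≤ (a * t - 1) + (a * t - a * t0))]
    · rw [f_pos h3]
      nlinarith [sq_nonneg ((1 + a) * (s - s0) - (t - t0)), sq_nonneg (s - s0), sq_nonneg (t - t0),
        sq_nonneg (a * (t - t0))]
  rw [f_pos h5]
  rcases le_total (1 - s - a * t) 0 with h4 | h4
  · rw [f_neg h4, f_neg (h64.trans h4)]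
    rcases le_total (1 - a * t) 0 with h3 | h3
    · rw [f_neg h3]
      have := caseC6 a s t ha hb hs hst ht h3 h5
      linarith
    · rw [f_pos h3]
      have := caseC3 a s t ha hb hs hst ht h3 h4 h5
      linarith
  rw [f_pos h4, f_pos (by linarith : 0 ≤ 1 - a * t)]
  rcases le_total (1 - t - a * t) 0 with h6 | h6
  · rw [f_neg h6]
    have := caseC1 a s t ha hb hs hst ht h4 h6
    linarith
  · rw [f_pos h6]
    have := caseAll a s t ha hb hs hst ht h6
    linarith

lemma area_EE (a s t : ℝ) (ha : 1 ≤ a) (hs : 0 ≤ s) (hst : s ≤ t) (ht : t ≤ 1) :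
    areaA a s t = EE a s t / (2 * a) := by
  rw [area_eq a s t ha hs hst ht]
  unfold T EE
  rw [f_pos hs, f_pos (zero_le_one' ℝ), f_pos (by linarith : 0 ≤ 1 - s),
    f_pos (by linarith : 0 ≤ 1 - t), f_pos (hs.trans hst), f_pos (by linarith : 0 ≤ t - s)]
  ring

set_option maxHeartbeats 1000000 in
/-- For `1 ≤ a ≤ α₈` (the root of `a³ + a² − 3` in `[1,2]`), the minimum of
`A(s,t,a)` over `0 ≤ s ≤ t ≤ 1` is `(a⁴ − a² − 2a + 4)/(2a(a⁴+2a³+3a²+2a+3))`,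
attained at `s₀ = (a+1)²/(a⁴+2a³+3a²+2a+3)`,
`t₀ = (a+1)(a²+2a+2)/(a⁴+2a³+3a²+2a+3)`. -/
theorem area_min_middle_a (α : ℝ) (hα : α ∈ Set.Icc (1 : ℝ) 2)
    (hroot : α ^ 3 + α ^ 2 - 3 = 0) (a : ℝ) (ha1 : 1 ≤ a) (ha2 : a ≤ α) :
    (∀ s t : ℝ, 0 ≤ s → s ≤ t → t ≤ 1 →
      (a ^ 4 - a ^ 2 - 2 * a + 4) /
          (2 * a * (a ^ 4 + 2 * a ^ 3 + 3 * a ^ 2 + 2 * a + 3)) ≤ areaA a s t) ∧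
    areaA a ((a + 1) ^ 2 / (a ^ 4 + 2 * a ^ 3 + 3 * a ^ 2 + 2 * a + 3))
        ((a + 1) * (a ^ 2 + 2 * a + 2) / (a ^ 4 + 2 * a ^ 3 + 3 * a ^ 2 + 2 * a + 3)) =
      (a ^ 4 - a ^ 2 - 2 * a + 4) /
        (2 * a * (a ^ 4 + 2 * a ^ 3 + 3 * a ^ 2 + 2 * a + 3)) := by
  have ha0 : 0 < a := by linarith
  have hc : a ^ 3 + a ^ 2 ≤ 3 := by
    have h1 : a ^ 3 ≤ α ^ 3 := by gcongr
    have h2 : a ^ 2 ≤ α ^ 2 := by gcongr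
    linarith
  have hb : a ≤ 47 / 40 := by
    by_contra h
    push Not at h
    have h1 : (47 / 40 : ℝ) ^ 3 ≤ a ^ 3 := by gcongr
    have h2 : (47 / 40 : ℝ) ^ 2 ≤ a ^ 2 := by gcongr
    norm_num at h1 h2
    linarith
  have hu0 : 0 ≤ a - 1 := by linarith
  have hu1 : 0 ≤ 47 / 40 - a := by linarith
  obtain ⟨D, hD⟩ : ∃ D, D = a ^ 4 + 2 * a ^ 3 + 3 * a ^ 2 + 2 * a + 3 := ⟨_, rfl⟩
  have hD0 : 0 < D := by rw [hD]; positivity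
  rw [← hD]
  obtain ⟨s0, hs0⟩ : ∃ s0, s0 = (a + 1) ^ 2 / D := ⟨_, rfl⟩
  obtain ⟨t0, ht0⟩ : ∃ t0, t0 = (a + 1) * (a ^ 2 + 2 * a + 2) / D := ⟨_, rfl⟩
  rw [← hs0, ← ht0]
  have e1 : (a ^ 2 + 2 * a + 2) * s0 = (1 + a) * t0 := by rw [hs0, ht0]; ring
  have e2 : (a ^ 2 + 2) * t0 - (1 + a) * s0 = 1 + a := by
    rw [hs0, ht0]; field_simp; rw [hD]; ring
  have eM : (a ^ 4 - a ^ 2 - 2 * a + 4) / (2 * a * D) = (2 - (1 + a) * t0) / (2 * a) := by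
    rw [ht0]; field_simp; rw [hD]; ring
  have eM' : 2 - (1 + a) * t0 = (a ^ 4 - a ^ 2 - 2 * a + 4) / D := by
    rw [ht0]; field_simp; rw [hD]; ring
  have e3 : a * t0 ≤ 1 := by
    rw [ht0, ← mul_div_assoc, div_le_one hD0, hD]; nlinarith
  have m1 : 2 - (1 + a) * t0 ≤ 2 / 11 := by
    rw [eM', div_le_iff₀ hD0, hD]
    nlinarith [mul_nonneg hu0 hu1, mul_nonneg (mul_nonneg hu0 hu0) hu1,
      mul_nonneg (pow_nonneg hu0 3) hu1, pow_nonneg hu0 2, pow_nonneg hu0 3]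
  have m2 : 2 - (1 + a) * t0 ≤ 1 / (a ^ 2 + 2 * a + 2) := by
    rw [eM', div_le_div_iff₀ hD0 (by positivity), hD]
    nlinarith [mul_nonneg hu0 hu1, mul_nonneg (mul_nonneg hu0 hu0) hu1,
      mul_nonneg (pow_nonneg hu0 3) hu1, mul_nonneg (pow_nonneg hu0 4) hu1,
      mul_nonneg (pow_nonneg hu0 5) hu1, pow_nonneg hu0 2, pow_nonneg hu0 3]
  rw [eM]
  constructor
  · intro s t hs hst ht
    rw [area_EE a s t ha1 hs hst ht]
    have := main_ineq a s t s0 t0 ha1 hb hs hst ht e1 e2 e3 m1 m2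
    gcongr
  · have es : D * s0 = (a + 1) ^ 2 := by rw [hs0]; field_simp
    have et : D * t0 = (a + 1) * (a ^ 2 + 2 * a + 2) := by rw [ht0]; field_simp
    have key : ∀ x : ℝ, 0 ≤ D * x → 0 ≤ x := fun x h => nonneg_of_mul_nonneg_right h hD0
    have a2 : 1 ≤ a ^ 2 := by nlinarith
    have a3 : 1 ≤ a ^ 3 := by nlinarith
    have a4 : a ^ 4 ≤ 2 := by
      have : a ^ 4 ≤ (47 / 40) ^ 4 := by gcongr
      norm_num at this; linarith
    have a4' : 1 ≤ a ^ 4 := by nlinarith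
    have p0 : 0 ≤ s0 := by rw [hs0]; positivity
    have p1 : 0 ≤ t0 - s0 := key _ (by nlinarith)
    have p2 : 0 ≤ 1 - t0 := key _ (by nlinarith)
    have p3 : 0 ≤ t0 - a * s0 := key _ (by nlinarith)
    have p4 : 0 ≤ 1 - s0 - a * s0 := by
      refine key _ ?_
      have : D * (1 - s0 - a * s0) = a ^ 4 + a ^ 3 - a + 2 := by
        linear_combination hD - (1 + a) * es
      rw [this]; linarith
    have p5 : 0 ≤ -(1 - t0 - a * s0) := by
      refine key _ ?_
      have : D * (-(1 - t0 - a * s0)) = - a ^ 4 + 2 * a ^ 2 + 3 * a - 1 := by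
        linear_combination - hD + et + a * es
      rw [this]; linarith
    have p6 : 1 - s0 - a * t0 ≤ 1 - t0 - a * s0 := by
      have := mul_nonneg hu0 p1
      linarith
    rw [area_EE a s0 t0 ha1 p0 (by linarith) (by linarith), EE, f_pos p3, f_pos p4,
      f_neg (by linarith : 1 - t0 - a * s0 ≤ 0), f_neg (by linarith : 1 - s0 - a * t0 ≤ 0),
      f_neg (by linarith : 1 - t0 - a * t0 ≤ 0), f_pos (by linarith : 0 ≤ 1 - a * t0),
      f_pos (by linarith : 0 ≤ 1 - a * s0)]
    have T := tight a s0 t0 s0 t0 e1 e2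
    congr 1
    linear_combination T
end

section
/- Let α₆ = (√129 − 1)/16 (the positive root of 8a² + a − 4) and let α₇ be the unique real root of 7a³ − 5a − 1 in [0,1] (α₇ ≈ 0.931478). For every real a with α₆ ≤ a ≤ α₇ and all real s, t with 0 ≤ s ≤ t ≤ 1, the area A(s,t,a) satisfies A(s,t,a) ≥ (−2a² + 3a + 2)/(2(a+1)(7a+1)), and equality holds at s₀ = (2a+1)/(7a+1), t₀ = (8a² + 6a + 1)/(7a² + 8a + 1). -/
open MeasureTheory

/-- squared positive part -/
noncomputable def sqp (u : ℝ) : ℝ := (max u 0) ^ 2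

lemma sqp_pos {u : ℝ} (h : 0 ≤ u) : sqp u = u ^ 2 := by simp [sqp, h]
lemma sqp_neg {u : ℝ} (h : u ≤ 0) : sqp u = 0 := by simp [sqp, h]
lemma sqp_nonneg (u : ℝ) : 0 ≤ sqp u := by unfold sqp; positivity
lemma sqp_add (u v : ℝ) (h : v = -u) : sqp u + sqp v = u ^ 2 := by
  subst h
  rcases le_total u 0 with h | h
  · rw [sqp_neg h, sqp_pos (by linarith)]; ring
  · rw [sqp_pos h, sqp_neg (by linarith)]; ring

lemma hasDerivAt_sqp (u : ℝ) : HasDerivAt sqp (2 * max u 0) u := by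
  rcases lt_trichotomy u 0 with h | h | h
  · have : HasDerivAt (fun _ : ℝ => (0:ℝ)) (2 * max u 0) u := by
      rw [max_eq_right h.le, mul_zero]; exact hasDerivAt_const _ _
    refine this.congr_of_eventuallyEq ?_
    filter_upwards [Iio_mem_nhds h] with x hx
    exact sqp_neg (le_of_lt hx)
  · subst h
    rw [hasDerivAt_iff_isLittleO]
    have h1 : (fun x : ℝ => sqp x - sqp 0 - (x - 0) • (2 * max (0:ℝ) 0)) =O[nhds 0] fun x => (x - 0)^2 := by
      refine Asymptotics.IsBigO.of_bound 1 (Filter.Eventually.of_forall fun x => ?_)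
      rcases le_total x 0 with h | h
      · rw [sqp_neg h, sqp_neg le_rfl]; simp [sq_nonneg]
      · rw [sqp_pos h, sqp_neg le_rfl]; simp
    refine h1.trans_isLittleO ?_
    have := Asymptotics.isLittleO_pow_id (𝕜 := ℝ) (n := 2) (by norm_num)
    simpa using this
  · have : HasDerivAt (fun x : ℝ => x ^ 2) (2 * max u 0) u := by
      rw [max_eq_left h.le]; simpa using hasDerivAt_pow 2 u
    refine this.congr_of_eventuallyEq ?_
    filter_upwards [Ioi_mem_nhds h] with x hx
    exact sqp_pos (le_of_lt hx)

lemma hasDerivAt_sqp_lin (α β y : ℝ) :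
    HasDerivAt (fun y => sqp (α + β * y)) (2 * β * max (α + β * y) 0) y := by
  have h := (hasDerivAt_sqp (α + β * y)).comp y (((hasDerivAt_id y).const_mul β).const_add α)
  exact h.congr_deriv (by ring)

lemma sqp_continuous : Continuous sqp := by unfold sqp; fun_prop

noncomputable def fr (a s t y : ℝ) : ℝ :=
  max (s + (-a) * y) 0 + max ((s - t) + a * y) 0 - max (-t + a * y) 0 - max ((s - 1) + a * y) 0
    + max ((1 - t) + (-a) * y) 0
noncomputable def fb (a s t y : ℝ) : ℝ := max ((t - s) + (-a) * y) 0

lemma slice_red (a s t y : ℝ) (hs : 0 ≤ s) (hst : s ≤ t) (ht : t ≤ 1) (h0 : 0 ≤ a * y)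
    (h1 : a * y ≤ 1) :
    volume {x : ℝ | x ∈ Set.Icc 0 s ∪ Set.Ioc t 1 ∧ x + a * y ∈ Set.Icc 0 s ∪ Set.Ioc t 1}
      = ENNReal.ofReal (fr a s t y) := by
  set c := a * y with hc
  have e : {x : ℝ | x ∈ Set.Icc 0 s ∪ Set.Ioc t 1 ∧ x + c ∈ Set.Icc 0 s ∪ Set.Ioc t 1}
      = (Set.Icc 0 (s - c) ∪ (Set.Icc 0 s ∩ Set.Ioc (t - c) (1 - c))) ∪ Set.Ioc t (1 - c) := by
    ext x
    simp only [Set.mem_ofPred_eq, Set.mem_union, Set.mem_Icc, Set.mem_Ioc, Set.mem_inter_iff]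
    constructor
    · rintro ⟨⟨h1, h2⟩ | ⟨h1, h2⟩, ⟨h3, h4⟩ | ⟨h3, h4⟩⟩
      · left; left; constructor <;> linarith
      · left; right; refine ⟨⟨?_, ?_⟩, ?_, ?_⟩ <;> linarith
      · exfalso; linarith
      · right; constructor <;> linarith
    · rintro ((⟨h1, h2⟩ | ⟨⟨h1, h2⟩, h3, h4⟩) | ⟨h1, h2⟩)
      · exact ⟨Or.inl ⟨h1, by linarith⟩, Or.inl ⟨by linarith, by linarith⟩⟩
      · exact ⟨Or.inl ⟨h1, by linarith⟩, Or.inr ⟨by linarith, by linarith⟩⟩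
      · exact ⟨Or.inr ⟨h1, by linarith⟩, Or.inr ⟨by linarith, by linarith⟩⟩
  have d1 : Disjoint (Set.Icc 0 (s - c) ∪ (Set.Icc 0 s ∩ Set.Ioc (t - c) (1 - c))) (Set.Ioc t (1 - c)) := by
    rw [Set.disjoint_left]
    rintro x (⟨h1, h2⟩ | ⟨⟨h1, h2⟩, h3, h4⟩) ⟨h5, h6⟩ <;> linarith
  have d2 : Disjoint (Set.Icc 0 (s - c)) (Set.Icc 0 s ∩ Set.Ioc (t - c) (1 - c)) := by
    rw [Set.disjoint_left]
    rintro x ⟨h1, h2⟩ ⟨⟨h1, h2⟩, h3, h4⟩; linarith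
  have v : volume (Set.Icc 0 s ∩ Set.Ioc (t - c) (1 - c))
      = ENNReal.ofReal (min s (1 - c) - max 0 (t - c)) := by
    have : (Set.Icc 0 s ∩ Set.Ioc (t - c) (1 - c) : Set ℝ) =ᵐ[volume]
        (Set.Ioc 0 s ∩ Set.Ioc (t - c) (1 - c) : Set ℝ) :=
      Filter.EventuallyEq.inter Ioc_ae_eq_Icc.symm (Filter.EventuallyEq.rfl)
    rw [measure_congr this, Set.Ioc_inter_Ioc, Real.volume_Ioc]
  rw [e, measure_union d1 measurableSet_Ioc,
    measure_union d2 (measurableSet_Icc.inter measurableSet_Ioc), v, Real.volume_Icc, Real.volume_Ioc]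
  have k : ∀ x : ℝ, ENNReal.ofReal x = ENNReal.ofReal (max x 0) := by
    intro x; rcases le_total x 0 with h | h <;> simp [h]
  rw [k (s - c - 0), k (min s (1 - c) - _), k (1 - c - t), ← ENNReal.ofReal_add (by positivity) (by positivity),
    ← ENNReal.ofReal_add (by positivity) (by positivity)]
  congr 1
  unfold fr
  have e1 : -a * y = -c := by rw [hc]; ring
  rw [e1, ← hc]
  have q : max (min s (1 - c) - max 0 (t - c)) 0 = max ((s - t) + c) 0 - max (-t + c) 0 - max ((s - 1) + c) 0 := by
    simp only [max_def, min_def]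
    split_ifs <;> linarith
  rw [q]
  have e2 : s - c - 0 = s + -c := by ring
  have e3 : 1 - c - t = 1 - t + -c := by ring
  rw [e2, e3]; ring

lemma slice_blue (a s t y : ℝ) (h0 : 0 ≤ a * y) :
    volume {x : ℝ | x ∈ Set.Ioc s t ∧ x + a * y ∈ Set.Ioc s t} = ENNReal.ofReal (fb a s t y) := by
  have e : {x : ℝ | x ∈ Set.Ioc s t ∧ x + a * y ∈ Set.Ioc s t} = Set.Ioc s (t - a * y) := by
    ext x
    simp only [Set.mem_ofPred_eq, Set.mem_Ioc]
    constructor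
    · rintro ⟨⟨h1, h2⟩, h3, h4⟩; constructor <;> linarith
    · rintro ⟨h1, h2⟩; refine ⟨⟨?_, ?_⟩, ?_, ?_⟩ <;> linarith
  rw [e, Real.volume_Ioc]
  have k : ∀ x : ℝ, ENNReal.ofReal x = ENNReal.ofReal (max x 0) := by
    intro x; rcases le_total x 0 with h | h <;> simp [h]
  rw [k]; unfold fb; congr 2; ring

lemma fr_cont (a s t : ℝ) : Continuous (fr a s t) := by unfold fr; fun_prop
lemma fb_cont (a s t : ℝ) : Continuous (fb a s t) := by unfold fb; fun_prop

noncomputable def Hr (a s t y : ℝ) : ℝ :=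
  -sqp (s + (-a) * y) + sqp ((s - t) + a * y) - sqp (-t + a * y) - sqp ((s - 1) + a * y)
    - sqp ((1 - t) + (-a) * y)
noncomputable def Hb (a s t y : ℝ) : ℝ := - sqp ((t - s) + (-a) * y)

lemma int_fr (a s t p q : ℝ) (ha : 0 < a) :
    ∫ y in p..q, fr a s t y = (Hr a s t q - Hr a s t p) / (2 * a) := by
  rw [intervalIntegral.integral_eq_sub_of_hasDerivAt (f := fun y => Hr a s t y / (2 * a))]
  · ring
  · intro y _
    have := (((((hasDerivAt_sqp_lin s (-a) y).neg.add (hasDerivAt_sqp_lin (s-t) a y)).sub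
      (hasDerivAt_sqp_lin (-t) a y)).sub (hasDerivAt_sqp_lin (s-1) a y)).sub
      (hasDerivAt_sqp_lin (1-t) (-a) y)).div_const (2 * a)
    exact HasDerivAt.congr_deriv this (by unfold fr; field_simp; ring)
  · exact (fr_cont a s t).intervalIntegrable _ _

lemma int_fb (a s t p q : ℝ) (ha : 0 < a) :
    ∫ y in p..q, fb a s t y = (Hb a s t q - Hb a s t p) / (2 * a) := by
  rw [intervalIntegral.integral_eq_sub_of_hasDerivAt (f := fun y => Hb a s t y / (2 * a))]
  · ring
  · intro y _
    have := (hasDerivAt_sqp_lin (t-s) (-a) y).neg.div_const (2 * a)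
    exact HasDerivAt.congr_deriv this (by unfold fb; field_simp)
  · exact (fb_cont a s t).intervalIntegrable _ _

lemma fr_nonneg (a s t y : ℝ) (hs : 0 ≤ s) (hst : s ≤ t) (ht : t ≤ 1) (h1 : a * y ≤ 1) : 0 ≤ fr a s t y := by
  have q : max ((s - t) + a * y) 0 - max (-t + a * y) 0 - max ((s - 1) + a * y) 0 + max (-1 + a * y) 0 ≥ 0 := by
    simp only [max_def]
    split_ifs <;> linarith
  have e1 : -a * y = -(a * y) := by ring
  unfold fr
  simp only [e1]
  generalize a * y = c at *
  simp only [max_def] at *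
  split_ifs at * <;> linarith

lemma area_formula (a s t : ℝ) (ha : 0 < a) (ha1 : a ≤ 1) (hs : 0 ≤ s) (hst : s ≤ t) (ht : t ≤ 1) :
    areaA a s t = (Hr a s t s - Hr a s t 0 + (Hr a s t 1 - Hr a s t t) + (Hb a s t t - Hb a s t s)) / (2 * a) := by
  set F : ℝ → ℝ := fun y => (Set.Icc 0 s).indicator (fr a s t) y + (Set.Ioc t 1).indicator (fr a s t) y
    + (Set.Ioc s t).indicator (fb a s t) y with hF
  have hfr := fr_cont a s t
  have hfb := fb_cont a s t
  have hFn : ∀ y, 0 ≤ F y := by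
    intro y
    have h1 : ∀ y, y ≤ 1 → 0 ≤ fr a s t y := fun y hy => fr_nonneg a s t y hs hst ht (by nlinarith)
    have h2 : ∀ y, 0 ≤ fb a s t y := fun y => by unfold fb; positivity
    exact add_nonneg (add_nonneg (Set.indicator_nonneg (fun y hy => h1 y (by linarith [hy.2])) _)
      (Set.indicator_nonneg (fun y hy => h1 y hy.2) _)) (Set.indicator_nonneg (fun y _ => h2 y) _)
  have hI1 : Integrable ((Set.Icc 0 s).indicator (fr a s t)) :=
    (hfr.integrableOn_Icc).integrable_indicator measurableSet_Icc
  have hI2 : Integrable ((Set.Ioc t 1).indicator (fr a s t)) :=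
    (hfr.integrableOn_Ioc).integrable_indicator measurableSet_Ioc
  have hI3 : Integrable ((Set.Ioc s t).indicator (fb a s t)) :=
    (hfb.integrableOn_Ioc).integrable_indicator measurableSet_Ioc
  have hint : ∫ y, F y = (Hr a s t s - Hr a s t 0 + (Hr a s t 1 - Hr a s t t) + (Hb a s t t - Hb a s t s)) / (2 * a) := by
    have e1 : ∫ y, F y = (∫ y, (Set.Icc 0 s).indicator (fr a s t) y) + (∫ y, (Set.Ioc t 1).indicator (fr a s t) y)
        + ∫ y, (Set.Ioc s t).indicator (fb a s t) y := by
      have := integral_add (hI1.add hI2) hI3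
      have h2 := integral_add hI1 hI2
      simp only [Pi.add_apply] at this h2
      rw [hF, this, h2]
    rw [e1, integral_indicator measurableSet_Icc, integral_indicator measurableSet_Ioc,
      integral_indicator measurableSet_Ioc, integral_Icc_eq_integral_Ioc,
      ← intervalIntegral.integral_of_le hs, ← intervalIntegral.integral_of_le hst,
      ← intervalIntegral.integral_of_le ht, int_fr _ _ _ _ _ ha, int_fr _ _ _ _ _ ha, int_fb _ _ _ _ _ ha]
    ring
  rw [← hint, integral_eq_lintegral_of_nonneg_ae (Filter.Eventually.of_forall hFn)
    ((hI1.add hI2).add hI3).aestronglyMeasurable]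
  unfold areaA
  congr 1
  rw [Measure.volume_eq_prod, Measure.prod_apply_symm]
  · refine lintegral_congr fun y => ?_
    simp only [Set.preimage_ofPred_eq]
    by_cases hy : y ∈ Set.Icc 0 s ∪ Set.Ioc t 1
    · have hyb : y ∉ Set.Ioc s t := by
        rintro ⟨h1, h2⟩
        rcases hy with ⟨h3, h4⟩ | ⟨h3, h4⟩ <;> linarith
      have hy01 : 0 ≤ y ∧ y ≤ 1 := by
        rcases hy with ⟨h3, h4⟩ | ⟨h3, h4⟩ <;> constructor <;> linarith
      have hFy : F y = fr a s t y := by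
        simp only [hF]
        rw [Set.indicator_of_notMem hyb]
        rcases hy with h | h
        · have : y ∉ Set.Ioc t 1 := by rintro ⟨h1, h2⟩; linarith [h.2]
          rw [Set.indicator_of_mem h, Set.indicator_of_notMem this]; ring
        · have : y ∉ Set.Icc 0 s := by rintro ⟨h1, h2⟩; linarith [h.1]
          rw [Set.indicator_of_mem h, Set.indicator_of_notMem this]; ring
      rw [hFy, ← slice_red a s t y hs hst ht (by nlinarith) (by nlinarith)]
      congr 1; ext x; simp only [Set.mem_ofPred_eq]; tauto
    · by_cases hyb : y ∈ Set.Ioc s t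
      · have hy0 : 0 ≤ y := by linarith [hyb.1]
        have hFy : F y = fb a s t y := by
          simp only [hF]
          rw [Set.indicator_of_mem hyb, Set.indicator_of_notMem (fun h => hy (Or.inl h)),
            Set.indicator_of_notMem (fun h => hy (Or.inr h))]; ring
        rw [hFy, ← slice_blue a s t y (by positivity)]
        congr 1; ext x; simp only [Set.mem_ofPred_eq]; tauto
      · have hFy : F y = 0 := by
          simp only [hF]
          rw [Set.indicator_of_notMem hyb, Set.indicator_of_notMem (fun h => hy (Or.inl h)),
            Set.indicator_of_notMem (fun h => hy (Or.inr h))]; ring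
        rw [hFy, ENNReal.ofReal_zero]
        convert measure_empty (μ := volume)
        ext x; simp only [Set.mem_ofPred_eq, Set.mem_empty_iff_false]; tauto
  · have m1 : Measurable (fun p : ℝ × ℝ => p.1 + a * p.2) := by fun_prop
    have mr : MeasurableSet (Set.Icc 0 s ∪ Set.Ioc t 1) := measurableSet_Icc.union measurableSet_Ioc
    have mb : MeasurableSet (Set.Ioc s t) := measurableSet_Ioc
    exact ((measurable_fst mr).inter ((measurable_snd mr).inter (m1 mr))).union
      ((measurable_fst mb).inter ((measurable_snd mb).inter (m1 mb)))

noncomputable def RR (a s t : ℝ) : ℝ :=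
  1 + 2*a - (2+4*a)*t + (1+4*a)*s^2 + (2+2*a)*t^2 - (2+2*a)*s*t
    + sqp (1-a-s) - sqp (1-a-t) + sqp (1-t-a*t) - sqp (a-t) - sqp (s-a) - sqp ((1+a)*s-1)
    - sqp (1-s-a*t) - sqp (1-t-a*s) - sqp (t-s-a)

noncomputable def RS (a s t : ℝ) : ℝ :=
  (1+4*a)*s - (1+a)*t - max (1-a-s) 0 - max (s-a) 0 - (1+a) * max ((1+a)*s-1) 0 + max (1-s-a*t) 0
    + a * max (1-t-a*s) 0 + max (t-s-a) 0

noncomputable def RT (a s t : ℝ) : ℝ :=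
  (2+2*a)*t - (1+2*a) - (1+a)*s + max (1-a-t) 0 - (1+a) * max (1-t-a*t) 0 + max (a-t) 0
    + a * max (1-s-a*t) 0 + max (1-t-a*s) 0 - max (t-s-a) 0

lemma area_RR (a s t : ℝ) (ha : 0 < a) (ha1 : a ≤ 1) (hs : 0 ≤ s) (hst : s ≤ t) (ht : t ≤ 1) :
    areaA a s t = (RR a s t + sqp (s - a*t)) / (2*a) := by
  rw [area_formula a s t ha ha1 hs hst ht]
  congr 1
  unfold Hr Hb RR
  rw [show s + -a * s = s - a*s by ring, show s - t + a*s = -(t-s-a*s) by ring,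
    show -t + a * s = a*s-t by ring, show s - 1 + a*s = (1+a)*s-1 by ring,
    show 1 - t + -a*s = 1-t-a*s by ring, show s + -a*0 = s by ring, show s - t + a*0 = s - t by ring,
    show -t + a*0 = -t by ring, show s - 1 + a*0 = s-1 by ring, show 1 - t + -a*0 = 1-t by ring,
    show s + -a*1 = s-a by ring, show s - t + a*1 = -(t-s-a) by ring, show -t + a*1 = a-t by ring,
    show s-1+a*1 = -(1-a-s) by ring, show 1-t+ -a*1 = 1-a-t by ring,
    show s + -a*t = s-a*t by ring, show s-t+a*t = -(t-s-a*t) by ring, show -t+a*t = a*t-t by ring,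
    show s-1+a*t = -(1-s-a*t) by ring, show 1-t+ -a*t = 1-t-a*t by ring,
    show t-s+ -a*t = t-s-a*t by ring, show t-s+ -a*s = t-s-a*s by ring]
  have h1 := sqp_add (t-s-a*s) _ rfl
  have h2 := sqp_add (t-s-a) _ rfl
  have h3 := sqp_add (1-a-s) _ rfl
  have h4 := sqp_add (t-s-a*t) _ rfl
  have h5 := sqp_add (1-s-a*t) _ rfl
  have k1 : sqp (s-a*s) = (s-a*s)^2 := sqp_pos (by nlinarith)
  have k2 : sqp (a*s-t) = 0 := sqp_neg (by nlinarith)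
  have k3 : sqp s = s^2 := sqp_pos hs
  have k4 : sqp (s-t) = 0 := sqp_neg (by linarith)
  have k5 : sqp (-t) = 0 := sqp_neg (by linarith)
  have k6 : sqp (s-1) = 0 := sqp_neg (by linarith)
  have k7 : sqp (1-t) = (1-t)^2 := sqp_pos (by linarith)
  have k8 : sqp (a*t-t) = 0 := sqp_neg (by nlinarith)
  rw [k1, k2, k3, k4, k5, k6, k7, k8]
  linear_combination h1 + h2 - h3 - h4 + h5

lemma sqpd (g : ℝ → ℝ) (α β : ℝ) (hg : ∀ y, g y = α + β * y) (x : ℝ) :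
    HasDerivAt (fun y => sqp (g y)) (2 * β * max (g x) 0) x := by
  have : g = fun y => α + β * y := funext hg
  subst this
  exact hasDerivAt_sqp_lin α β x

lemma deriv_S (a s t : ℝ) : HasDerivAt (fun s => RR a s t) (2 * RS a s t) s := by
  have p : HasDerivAt (fun s : ℝ => 1 + 2*a - (2+4*a)*t + (1+4*a)*s^2 + (2+2*a)*t^2 - (2+2*a)*s*t)
      ((1+4*a)*(2*s) - (2+2*a)*t) s := by
    have h1 := (hasDerivAt_pow 2 s).const_mul (1+4*a)
    have h2 := ((hasDerivAt_id s).const_mul (2+2*a)).mul_const t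
    have := ((h1.const_add (1 + 2*a - (2+4*a)*t)).add_const ((2+2*a)*t^2)).sub h2
    exact this.congr_deriv (by simp)
  have c1 := hasDerivAt_const s (sqp (1-a-t))
  have c2 := hasDerivAt_const s (sqp (1-t-a*t))
  have c3 := hasDerivAt_const s (sqp (a-t))
  have d1 := sqpd (fun s => 1-a-s) (1-a) (-1) (by intro; ring) s
  have d2 := sqpd (fun s => s-a) (-a) 1 (by intro; ring) s
  have d3 := sqpd (fun s => (1+a)*s-1) (-1) (1+a) (by intro; ring) s
  have d4 := sqpd (fun s => 1-s-a*t) (1-a*t) (-1) (by intro; ring) s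
  have d5 := sqpd (fun s => 1-t-a*s) (1-t) (-a) (by intro; ring) s
  have d6 := sqpd (fun s => t-s-a) (t-a) (-1) (by intro; ring) s
  have := ((((((((p.add d1).sub c1).add c2).sub c3).sub d2).sub d3).sub d4).sub d5).sub d6
  exact HasDerivAt.congr_deriv this (by unfold RS; ring)

lemma deriv_T (a s t : ℝ) : HasDerivAt (fun t => RR a s t) (2 * RT a s t) t := by
  have p : HasDerivAt (fun t : ℝ => 1 + 2*a - (2+4*a)*t + (1+4*a)*s^2 + (2+2*a)*t^2 - (2+2*a)*s*t)
      (-(2+4*a) + (2+2*a)*(2*t) - (2+2*a)*s) t := by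
    have h0 := (hasDerivAt_id t).const_mul (2+4*a)
    have h1 := (hasDerivAt_pow 2 t).const_mul (2+2*a)
    have h2 := ((hasDerivAt_id t).const_mul ((2+2*a)*s))
    have := (((h0.const_sub (1+2*a)).add_const ((1+4*a)*s^2)).add h1).sub h2
    exact this.congr_deriv (by simp)
  have c1 := hasDerivAt_const t (sqp (1-a-s))
  have c2 := hasDerivAt_const t (sqp (s-a))
  have c3 := hasDerivAt_const t (sqp ((1+a)*s-1))
  have d1 := sqpd (fun t => 1-a-t) (1-a) (-1) (by intro; ring) t
  have d2 := sqpd (fun t => 1-t-a*t) 1 (-(1+a)) (by intro; ring) t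
  have d3 := sqpd (fun t => a-t) a (-1) (by intro; ring) t
  have d4 := sqpd (fun t => 1-s-a*t) (1-s) (-a) (by intro; ring) t
  have d5 := sqpd (fun t => 1-t-a*s) (1-a*s) (-1) (by intro; ring) t
  have d6 := sqpd (fun t => t-s-a) (-s-a) 1 (by intro; ring) t
  have := ((((((((p.add c1).sub d1).add d2).sub d3).sub c2).sub c3).sub d4).sub d5).sub d6
  exact HasDerivAt.congr_deriv this (by unfold RT; ring)

/-- normalised minimum -/
noncomputable def KK (a : ℝ) : ℝ := a * (-2*a^2+3*a+2) / ((a+1)*(7*a+1))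

lemma KK_le (a : ℝ) (h1 : 0.647 ≤ a) (h2 : a ≤ 0.932) : KK a ≤ 0.2786 - 0.085*a := by
  unfold KK
  rw [div_le_iff₀ (by positivity)]
  nlinarith [mul_nonneg (sub_nonneg.2 h1) (sub_nonneg.2 h2), mul_nonneg (mul_nonneg (sub_nonneg.2 h1) (sub_nonneg.2 h2)) (by linarith : 0 ≤ a), sq_nonneg (a-0.8)]

lemma KK_quad (a s t : ℝ) (h1 : 0.647 ≤ a) :
    1 + 2*a - (2+4*a)*t + (1+4*a)*s^2 + (2+2*a)*t^2 - (2+2*a)*s*t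
    = KK a + ((2+2*a)*(t - (8*a^2+6*a+1)/(7*a^2+8*a+1))^2 + (1+4*a)*(s-(2*a+1)/(7*a+1))^2
      - (2+2*a)*(s-(2*a+1)/(7*a+1))*(t - (8*a^2+6*a+1)/(7*a^2+8*a+1))) := by
  unfold KK
  have h7 : (7*a+1) ≠ 0 := by positivity
  have h8 : (a+1) ≠ 0 := by positivity
  rw [show 7*a^2+8*a+1 = (a+1)*(7*a+1) by ring]
  field_simp
  ring

/-- one of the exact inequalities near the optimum -/
lemma near (a s t : ℝ) (h1 : 0.647 ≤ a) (h2 : a ≤ 0.932) (h6 : 0 ≤ 8*a^2+a-4) (h7 : 7*a^3-5*a-1 ≤ 0) :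
    KK a ≤ 1 + 2*a - (2+4*a)*t + (1+4*a)*s^2 + (2+2*a)*t^2 - (2+2*a)*s*t ∧
    (0 ≤ 1-s-a*t → KK a ≤ 1 + 2*a - (2+4*a)*t + (1+4*a)*s^2 + (2+2*a)*t^2 - (2+2*a)*s*t - (1-s-a*t)^2) ∧
    (0 ≤ a-t → KK a ≤ 1 + 2*a - (2+4*a)*t + (1+4*a)*s^2 + (2+2*a)*t^2 - (2+2*a)*s*t - (a-t)^2) := by
  rw [KK_quad a s t h1]
  have e1 : 1 - (2*a+1)/(7*a+1) - a*((8*a^2+6*a+1)/(7*a^2+8*a+1)) ≤ 0 := by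
    rw [show 1 - (2*a+1)/(7*a+1) - a*((8*a^2+6*a+1)/(7*a^2+8*a+1)) = -(a*(8*a^2+a-4))/((a+1)*(7*a+1)) by
      rw [show 7*a^2+8*a+1 = (a+1)*(7*a+1) by ring]; field_simp; ring]
    apply div_nonpos_of_nonpos_of_nonneg
    · nlinarith
    · positivity
  have e2 : a ≤ (8*a^2+6*a+1)/(7*a^2+8*a+1) := by
    rw [le_div_iff₀ (by positivity)]; nlinarith
  set s0 := (2*a+1)/(7*a+1)
  set t0 := (8*a^2+6*a+1)/(7*a^2+8*a+1)
  obtain ⟨S, hS⟩ : ∃ S, S = s - s0 := ⟨_, rfl⟩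
  obtain ⟨T, hT⟩ : ∃ T, T = t - t0 := ⟨_, rfl⟩
  rw [← hS, ← hT]
  refine ⟨?_, ?_, ?_⟩
  · nlinarith [sq_nonneg (S-T), sq_nonneg S, sq_nonneg T, mul_nonneg (by linarith : 0 ≤ a) (sq_nonneg (S-T)), mul_nonneg (by linarith : 0 ≤ a) (sq_nonneg S), mul_nonneg (by linarith : 0 ≤ a) (sq_nonneg T)]
  · intro h
    have b : (1-s-a*t)^2 ≤ (S+a*T)^2 := by
      have : 1-s-a*t ≤ -(S+a*T) := by
        have : 1-s-a*t+(S+a*T) = 1 - s0 - a*t0 := by rw [hS, hT]; ring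
        linarith
      nlinarith
    have : 0 ≤ (2+2*a)*T^2+(1+4*a)*S^2-(2+2*a)*S*T - (S+a*T)^2 := by
      have key : 0 ≤ 4*a*((2+2*a)*T^2+(1+4*a)*S^2-(2+2*a)*S*T - (S+a*T)^2) := by
        have : 4*a*((2+2*a)*T^2+(1+4*a)*S^2-(2+2*a)*S*T - (S+a*T)^2)
          = (4*a*S - (1+2*a)*T)^2 + (4*a+4*a^2-4*a^3-1)*T^2 := by ring
        rw [this]
        have : 0 ≤ 4*a+4*a^2-4*a^3-1 := by nlinarith [mul_nonneg (sq_nonneg a) (by linarith : 0 ≤ 1 - a)]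
        positivity
      exact nonneg_of_mul_nonneg_right key (by positivity)
    linarith
  · intro h
    have b : (a-t)^2 ≤ T^2 := by nlinarith
    have : 0 ≤ (2+2*a)*T^2+(1+4*a)*S^2-(2+2*a)*S*T - T^2 := by
      nlinarith [sq_nonneg (S-T), sq_nonneg S, sq_nonneg T, mul_nonneg (by linarith : 0 ≤ a) (sq_nonneg (S-T)), mul_nonneg (by linarith : 0 ≤ a) (sq_nonneg S), mul_nonneg (by linarith : 0 ≤ a) (sq_nonneg T)]
    linarith

lemma cell_i (a s t : ℝ) (h1 : 0.647 ≤ a) (h2 : a ≤ 0.932) (g1 : 1-a-s ≤ 0)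
    (hS : (1+a)+(4*a-a^2)*s-(1+3*a)*t = 0) (hT : -a+(1+2*a-a^2)*t-(1+3*a)*s = 0) : False := by
  have e : s*(1+2*a+2*a^2+6*a^3-a^4) = 1+2*a-2*a^2-a^3 := by
    linear_combination -(1+3*a)*hT - (1+2*a-a^2)*hS
  have p : 0 < 1+2*a+2*a^2+6*a^3-a^4 := by
    have : a^4 ≤ a^3 := pow_le_pow_of_le_one (by linarith) (by linarith) (by norm_num)
    have : 0 ≤ a^3 := by positivity
    nlinarith
  have q : (1-a)*(1+2*a+2*a^2+6*a^3-a^4) ≤ 1+2*a-2*a^2-a^3 := by rw [← e]; nlinarith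
  have r : 1-2*a-5*a^2+7*a^3-a^4 < 0 := by
    nlinarith [mul_nonneg (sub_nonneg.2 h1) (sub_nonneg.2 h2), mul_nonneg (mul_nonneg (sub_nonneg.2 h1) (sub_nonneg.2 h2)) (by linarith : 0 ≤ a), mul_nonneg (mul_nonneg (sub_nonneg.2 h1) (sub_nonneg.2 h2)) (sq_nonneg a)]
  nlinarith

lemma cell_ii (a s t : ℝ) (h1 : 0.647 ≤ a) (h2 : a ≤ 0.932) (g1 : 1-a-s ≤ 0)
    (hS : (1+a)+(4*a-a^2)*s-(1+3*a)*t = 0) (hT : (2*a-a^2)*t-(1+3*a)*s = 0) :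
    0.2786 - 0.085*a ≤ -(1-a)^2+(1+a)*s := by
  have e : s*(1+6*a+a^2+6*a^3-a^4) = 2*a+a^2-a^3 := by
    linear_combination -(1+3*a)*hT - (2*a-a^2)*hS
  have p : 0 < 1+6*a+a^2+6*a^3-a^4 := by
    have : a^4 ≤ a^3 := pow_le_pow_of_le_one (by linarith) (by linarith) (by norm_num)
    have : 0 ≤ a^3 := by positivity
    nlinarith
  rcases le_total a 0.75 with ha | ha
  · nlinarith
  · have : 0 ≤ (-(1-a)^2+(1+a)*s - (0.2786 - 0.085*a)) * (1+6*a+a^2+6*a^3-a^4) := by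
      have : (-(1-a)^2+(1+a)*s - (0.2786 - 0.085*a)) * (1+6*a+a^2+6*a^3-a^4)
        = (-(1-a)^2 - (0.2786 - 0.085*a)) * (1+6*a+a^2+6*a^3-a^4) + (1+a)*(2*a+a^2-a^3) := by
        linear_combination (1+a)*e
      rw [this]
      obtain ⟨b, rfl⟩ : ∃ b, a = 0.75+b := ⟨a-0.75, by ring⟩
      have hb0 : 0 ≤ b := by linarith
      have hb1 : b ≤ 0.182 := by linarith
      have : 0 ≤ b * (0.182-b) := by nlinarith
      have : 0 ≤ b^2 * (0.182-b) := by have : 0 ≤ 0.182 - b := by linarith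
                                       positivity
      have : 0 ≤ b^3 * (0.182-b) := by have : 0 ≤ 0.182 - b := by linarith
                                       positivity
      have : 0 ≤ b^4 * (0.182-b) := by have : 0 ≤ 0.182 - b := by linarith
                                       positivity
      have : 0 ≤ b^5 * (0.182-b) := by have : 0 ≤ 0.182 - b := by linarith
                                       positivity
      nlinarith
    have := nonneg_of_mul_nonneg_left this p
    linarith

lemma cell_iii (a s t : ℝ) (h1 : 0.647 ≤ a) (h2 : a ≤ 0.932) (hs : 0 ≤ s) (hs1 : s ≤ 1)
    (hS : (1+a)+(4*a-a^2)*s-(1+3*a)*t = 0) (hT : -(1+a)+(1+4*a)*t-(1+3*a)*s = 0) : False := by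
  have e : s*(1+2*a-6*a^2+4*a^3) = a+a^2 := by
    linear_combination -(1+3*a)*hT - (1+4*a)*hS
  have r : 1+a-7*a^2+4*a^3 < 0 := by
    nlinarith [mul_nonneg (sub_nonneg.2 h1) (sub_nonneg.2 h2), mul_nonneg (mul_nonneg (sub_nonneg.2 h1) (sub_nonneg.2 h2)) (by linarith : 0 ≤ a)]
  have ap : 0 < a + a^2 := by positivity
  rcases le_total 0 (1+2*a-6*a^2+4*a^3) with c | c
  · have := mul_le_mul_of_nonneg_right hs1 c
    linarith
  · have := mul_nonpos_of_nonneg_of_nonpos hs c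
    linarith

lemma cell_iv (a s t : ℝ) (h1 : 0.647 ≤ a) (h2 : a ≤ 0.932)
    (hS : 2*a+(1+4*a-a^2)*s-(1+3*a)*t = 0) (hT : -a+(1+2*a-a^2)*t-(1+3*a)*s = 0) :
    0.2786 - 0.085*a ≤ a^2+2*a*s-a*t := by
  have ap : 0 < a := by linarith
  have e1 : s*(a*(3+6*a-a^2)) = 1+a-2*a^2 := by
    apply mul_left_cancel₀ ap.ne'
    linear_combination -(1+3*a)*hT - (1+2*a-a^2)*hS
  have e2 : t*(a*(3+6*a-a^2)) = (1+a)^2 := by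
    apply mul_left_cancel₀ ap.ne'
    linear_combination -(1+3*a)*hS - (1+4*a-a^2)*hT
  have p : 0 < a*(3+6*a-a^2) := by
    have : 0 < 3+6*a-a^2 := by nlinarith
    positivity
  have : 0 ≤ (a^2+2*a*s-a*t - (0.2786 - 0.085*a)) * (a*(3+6*a-a^2)) := by
    have : (a^2+2*a*s-a*t - (0.2786 - 0.085*a)) * (a*(3+6*a-a^2))
        = a*((a^2 - (0.2786 - 0.085*a)) * (3+6*a-a^2) + (2*(1+a-2*a^2) - (1+a)^2)) := by
      linear_combination 2*a*e1 - a*e2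
    rw [this]
    apply mul_nonneg ap.le
    obtain ⟨b, rfl⟩ : ∃ b, a = 0.647+b := ⟨a-0.647, by ring⟩
    have hb0 : 0 ≤ b := by linarith
    have hb1 : 0 ≤ 0.285 - b := by linarith
    have : 0 ≤ b * (0.285-b) := by positivity
    have : 0 ≤ b^2 * (0.285-b) := by positivity
    have : 0 ≤ b^3 * (0.285-b) := by positivity
    nlinarith
  have := nonneg_of_mul_nonneg_left this p
  linarith

lemma cell_v (a s t : ℝ) (h1 : 0.647 ≤ a) (h2 : a ≤ 0.932)
    (hS : 2*a+(1+4*a-a^2)*s-(1+3*a)*t = 0) (hT : (2*a-a^2)*t-(1+3*a)*s = 0) :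
    0.2786 - 0.085*a ≤ 2*a*s := by
  have ap : 0 < a := by linarith
  have e : s*(1+4*a+2*a^2+6*a^3-a^4) = 4*a^2-2*a^3 := by
    linear_combination -(1+3*a)*hT - (2*a-a^2)*hS
  have p : 0 < 1+4*a+2*a^2+6*a^3-a^4 := by
    have : a^4 ≤ a^3 := pow_le_pow_of_le_one (by linarith) (by linarith) (by norm_num)
    have : 0 ≤ a^3 := by positivity
    nlinarith
  have : 0 ≤ (2*a*s - (0.2786 - 0.085*a)) * (1+4*a+2*a^2+6*a^3-a^4) := by
    have : (2*a*s - (0.2786 - 0.085*a)) * (1+4*a+2*a^2+6*a^3-a^4)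
        = 2*a*(4*a^2-2*a^3) - (0.2786 - 0.085*a) * (1+4*a+2*a^2+6*a^3-a^4) := by
      linear_combination 2*a*e
    rw [this]
    obtain ⟨b, rfl⟩ : ∃ b, a = 0.647+b := ⟨a-0.647, by ring⟩
    have hb0 : 0 ≤ b := by linarith
    have hb1 : 0 ≤ 0.285 - b := by linarith
    have : 0 ≤ b * (0.285-b) := by positivity
    have : 0 ≤ b^2 * (0.285-b) := by positivity
    have : 0 ≤ b^3 * (0.285-b) := by positivity
    have : 0 ≤ b^4 * (0.285-b) := by positivity
    nlinarith
  have := nonneg_of_mul_nonneg_left this p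
  linarith

lemma cell_vi (a s t : ℝ) (h1 : 0.647 ≤ a) (h2 : a ≤ 0.932) (hs : 0 ≤ s) :
    0.2786 - 0.085*a ≤ 1+4*a*s-(2+2*a)*t+(1+4*a-a^2)*s^2+(1+4*a)*t^2-(2+6*a)*s*t := by
  have p : 0 < 1+4*a := by linarith
  have : 0 ≤ (1+4*a)*(1+4*a*s-(2+2*a)*t+(1+4*a-a^2)*s^2+(1+4*a)*t^2-(2+6*a)*s*t - (0.2786 - 0.085*a)) := by
    have : (1+4*a)*(1+4*a*s-(2+2*a)*t+(1+4*a-a^2)*s^2+(1+4*a)*t^2-(2+6*a)*s*t - (0.2786 - 0.085*a))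
      = ((1+4*a)*t-(1+a)-(1+3*a)*s)^2 + ((2*a-a^2 - (1+4*a)*(0.2786 - 0.085*a)) + (10*a^2-4*a-2)*s + (2*a+6*a^2-4*a^3)*s^2) := by ring
    rw [this]
    have q1 : -0.41 ≤ 10*a^2-4*a-2 := by nlinarith
    have q2 : 2 ≤ 2*a+6*a^2-4*a^3 := by
      nlinarith [mul_nonneg (sq_nonneg a) (sub_nonneg.2 h2)]
    have q3 : 0.05 ≤ 2*a-a^2 - (1+4*a)*(0.2786 - 0.085*a) := by nlinarith
    nlinarith [mul_nonneg hs (sub_nonneg.2 q1), mul_nonneg (sq_nonneg s) (sub_nonneg.2 q2), sq_nonneg (s-0.1), sq_nonneg ((1+4*a)*t-(1+a)-(1+3*a)*s)]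
  have := nonneg_of_mul_nonneg_right this p
  linarith

set_option maxHeartbeats 2000000 in
lemma crit (a s t : ℝ) (h1 : 0.647 ≤ a) (h2 : a ≤ 0.932) (h6 : 0 ≤ 8*a^2+a-4) (h7 : 7*a^3-5*a-1 ≤ 0)
    (hs : 0 ≤ s) (hst : s < t) (ht : t ≤ 1) (hS : 0 < s → RS a s t = 0) (hT : t < 1 → RT a s t = 0) :
    KK a ≤ RR a s t := by
  have hK := KK_le a h1 h2
  obtain ⟨n1, n2, n3⟩ := near a s t h1 h2 h6 h7
  have hsa : 0 ≤ a*s := by positivity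
  have hsa1 : a*s ≤ 0.932*s := by nlinarith
  have hsa2 : 0.647*s ≤ a*s := by nlinarith
  have hta1 : a*t ≤ 0.932*t := by nlinarith
  have hta2 : 0.647*t ≤ a*t := by nlinarith
  have hd : a*s ≤ a*t := by nlinarith
  have hd1 : a*t - a*s ≤ t - s := by nlinarith
  rcases le_total (1-t-a*s) 0 with g8 | g8
  · have g2 : 1-a-t ≤ 0 := by nlinarith
    have g3 : 1-t-a*t ≤ 0 := by nlinarith
    rcases lt_or_ge 0 ((1+a)*s-1) with g6 | g6
    · exfalso
      have sp : 0 < s := by nlinarith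
      have := hS sp
      unfold RS at this
      have s5 : 0.517 ≤ s := by nlinarith
      have g1 : 1-a-s ≤ 0 := by linarith
      have g7 : 1-s-a*t ≤ 0 := by linarith
      have g9 : t-s-a ≤ 0 := by linarith
      rw [max_eq_right g1, max_eq_left g6.le, max_eq_right g7, max_eq_right g8, max_eq_right g9] at this
      rcases le_total (s-a) 0 with g5 | g5
      · rw [max_eq_right g5] at this
        nlinarith
      · rw [max_eq_left g5] at this
        nlinarith
    · have g5 : s-a ≤ 0 := by nlinarith
      have p1 := sqp_nonneg (1-a-s)
      rcases lt_or_ge 0 (t-s-a) with g9 | g9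
      · have g1 : 0 ≤ 1-a-s := by linarith
        have g4 : a-t ≤ 0 := by linarith
        have g7 : 0 ≤ 1-s-a*t := by nlinarith
        rcases eq_or_lt_of_le hs with s0 | sp
        · subst s0
          have : t = 1 := by linarith
          subst this
          unfold RR
          rw [sqp_pos g1, sqp_neg g2, sqp_neg g3, sqp_neg g4, sqp_neg g5, sqp_neg g6, sqp_pos g7, sqp_neg g8, sqp_pos g9.le]
          nlinarith
        · exfalso
          have hS := hS sp
          unfold RS at hS
          rw [max_eq_left g1, max_eq_right g5, max_eq_right g6, max_eq_left g7, max_eq_right g8, max_eq_left g9.le] at hS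
          have : t = 2*s := by
            have : a*(t-2*s) = 0 := by linarith
            rcases mul_eq_zero.1 this with h | h <;> linarith
          linarith
      · have r : RR a s t = 1 + 2*a - (2+4*a)*t + (1+4*a)*s^2 + (2+2*a)*t^2 - (2+2*a)*s*t
            + sqp (1-a-s) - sqp (a-t) - sqp (1-s-a*t) := by
          unfold RR
          rw [sqp_neg g2, sqp_neg g3, sqp_neg g5, sqp_neg g6, sqp_neg g8, sqp_neg g9]; ring
        rw [r]
        rcases le_total (1-s-a*t) 0 with g7 | g7
        · rcases le_total (a-t) 0 with g4 | g4
          · rw [sqp_neg g7, sqp_neg g4]; linarith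
          · rw [sqp_neg g7, sqp_pos g4]; linarith [n3 g4]
        · rcases le_total (a-t) 0 with g4 | g4
          · rw [sqp_pos g7, sqp_neg g4]; linarith [n2 g7]
          · exfalso
            have g1 : 1-a-s ≤ 0 := by nlinarith
            have sp : 0 < s := by linarith
            have hS := hS sp
            have hT := hT (by linarith)
            unfold RS at hS
            unfold RT at hT
            rw [max_eq_right g1, max_eq_right g5, max_eq_right g6, max_eq_left g7, max_eq_right g8, max_eq_right g9] at hS
            rw [max_eq_right g2, max_eq_right g3, max_eq_left g4, max_eq_left g7, max_eq_right g8, max_eq_right g9] at hT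
            have e : s * (4*a^2-4*a^3-1) = a^2 := by
              linear_combination (1+2*a-a^2) * hS + (1+2*a)*hT
            have : 4*a^2-4*a^3-1 < 0 := by nlinarith only [mul_nonneg (sq_nonneg (a-2/3)) (by linarith : 0 ≤ a + 1/3)]
            nlinarith only [e, this, sp, sq_nonneg a]
  · have g7 : 0 ≤ 1-s-a*t := by linarith
    have g6 : (1+a)*s-1 ≤ 0 := by linarith
    have g5 : s-a ≤ 0 := by nlinarith
    have t1 : t = 1 → s = 0 := by intro h; nlinarith
    rcases lt_or_ge 0 (t-s-a) with g9 | g9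
    · have g1 : 0 ≤ 1-a-s := by linarith
      have g4 : a-t ≤ 0 := by linarith
      have g3 : 1-t-a*t ≤ 0 := by nlinarith
      have g2 : 1-a-t ≤ 0 := by linarith
      rcases eq_or_lt_of_le ht with e | tl
      · have := t1 e
        subst this; subst e
        unfold RR
        rw [sqp_pos g1, sqp_neg g2, sqp_neg g3, sqp_neg g4, sqp_neg g5, sqp_neg g6, sqp_pos g7, sqp_pos g8, sqp_pos g9.le]
        nlinarith
      · exfalso
        have hT := hT tl
        unfold RT at hT
        rw [max_eq_right g2, max_eq_right g3, max_eq_right g4, max_eq_left g7, max_eq_left g8, max_eq_left g9.le] at hT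
        have : (2-a)*t = 3*s := by
          have : a*((2-a)*t-3*s) = 0 := by linarith
          rcases mul_eq_zero.1 this with h | h <;> linarith
        nlinarith
    · have tl : t < 1 := by
        rcases eq_or_lt_of_le ht with e | tl
        · have := t1 e
          linarith
        · exact tl
      have hT := hT tl
      unfold RT at hT
      unfold RR
      rw [max_eq_left g7, max_eq_left g8, max_eq_right g9] at hT
      rw [sqp_neg g5, sqp_neg g6, sqp_pos g7, sqp_pos g8, sqp_neg g9]
      have hS' : 0 < s → RS a s t = (1+4*a)*s - (1+a)*t - max (1-a-s) 0 + (1-s-a*t) + a * (1-t-a*s) := by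
        intro sp
        unfold RS
        rw [max_eq_right g5, max_eq_right g6, max_eq_left g7, max_eq_left g8, max_eq_right g9]; ring
      rcases le_total (1-a-s) 0 with g1 | g1
      · have g2 : 1-a-t ≤ 0 := by linarith
        have sp : 0 < s := by linarith
        rw [max_eq_right g2] at hT
        rw [hS sp, max_eq_right g1] at hS'
        have hS' := hS' sp
        rw [sqp_neg g1, sqp_neg g2]
        rcases le_total (1-t-a*t) 0 with g3 | g3
        · rw [max_eq_right g3] at hT
          rw [sqp_neg g3]
          rcases le_total (a-t) 0 with g4 | g4
          · rw [max_eq_right g4] at hT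
            rw [sqp_neg g4]
            exact (cell_i a s t h1 h2 g1 (by linarith) (by linarith)).elim
          · rw [max_eq_left g4] at hT
            rw [sqp_pos g4]
            have c := cell_ii a s t h1 h2 g1 (by linarith) (by linarith)
            linear_combination c + hK + s * hS' - t * hT
        · have g4 : 0 ≤ a - t := by nlinarith
          rw [max_eq_left g4, max_eq_left g3] at hT
          rw [sqp_pos g3, sqp_pos g4]
          exact (cell_iii a s t h1 h2 hs (by linarith) (by linarith) (by linarith)).elim
      · rw [max_eq_left g1] at hS'
        rw [sqp_pos g1]
        rcases le_total (1-t-a*t) 0 with g3 | g3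
        · have g2 : 1-a-t ≤ 0 := by nlinarith
          rw [max_eq_right g3, max_eq_right g2] at hT
          rw [sqp_neg g3, sqp_neg g2]
          rcases le_total (a-t) 0 with g4 | g4
          · rw [max_eq_right g4] at hT
            rw [sqp_neg g4]
            rcases eq_or_lt_of_le hs with s0 | sp
            · exfalso
              subst s0
              nlinarith
            · have hS' := hS' sp
              rw [hS sp] at hS'
              have c := cell_iv a s t h1 h2 (by linarith) (by linarith)
              linear_combination c + hK + s * hS' - t * hT
          · rw [max_eq_left g4] at hT
            rw [sqp_pos g4]
            rcases eq_or_lt_of_le hs with s0 | sp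
            · exfalso
              subst s0
              nlinarith
            · have hS' := hS' sp
              rw [hS sp] at hS'
              have c := cell_v a s t h1 h2 (by linarith) (by linarith)
              linear_combination c + hK + s * hS' - t * hT
        · have g4 : 0 ≤ a - t := by nlinarith
          rw [max_eq_left g4, max_eq_left g3] at hT
          rw [sqp_pos g3, sqp_pos g4]
          rcases lt_or_ge 0 (1-a-t) with g2 | g2
          · exfalso
            rw [max_eq_left g2.le] at hT
            nlinarith
          · rw [sqp_neg g2]
            have c := cell_vi a s t h1 h2 hs
            linear_combination c + hK

lemma diag_bound (a x : ℝ) (h1 : 0.647 ≤ a) (h2 : a ≤ 0.932) (hx : 0 ≤ x) (hx1 : x ≤ 1) :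
    KK a ≤ RR a x x := by
  have e : RR a x x = 2*a - a^2 - (1-a)^2*x^2 := by
    unfold RR
    have k1 := sqp_add (1-x-a*x) ((1+a)*x-1) (by ring)
    have k2 := sqp_add (a-x) (x-a) (by ring)
    have k3 : sqp (x-x-a) = 0 := sqp_neg (by linarith)
    rw [k3]
    linear_combination -k1 - k2
  have hk := KK_le a h1 h2
  rw [e]
  have hxx : x^2 ≤ 1 := by nlinarith
  nlinarith [mul_le_mul_of_nonneg_left hxx (sq_nonneg (1-a)), mul_nonneg (sub_nonneg.2 h1) (sub_nonneg.2 h2)]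

lemma RR_continuous (a : ℝ) : Continuous (fun p : ℝ × ℝ => RR a p.1 p.2) := by
  have := sqp_continuous
  unfold RR
  fun_prop

lemma RR_lower (a s t : ℝ) (h1 : 0.647 ≤ a) (h2 : a ≤ 0.932) (h6 : 0 ≤ 8*a^2+a-4)
    (h7 : 7*a^3-5*a-1 ≤ 0) (hs : 0 ≤ s) (hst : s ≤ t) (ht : t ≤ 1) : KK a ≤ RR a s t := by
  have hc : IsCompact {p : ℝ × ℝ | 0 ≤ p.1 ∧ p.1 ≤ p.2 ∧ p.2 ≤ 1} := by
    refine (isCompact_Icc (a := ((0:ℝ),(0:ℝ))) (b := ((1:ℝ),(1:ℝ)))).of_isClosed_subset ?_ ?_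
    · exact (isClosed_le continuous_const continuous_fst).inter
        ((isClosed_le continuous_fst continuous_snd).inter (isClosed_le continuous_snd continuous_const))
    · rintro ⟨x, y⟩ ⟨hx, hxy, hy⟩
      simp only at hx hxy hy
      exact ⟨⟨hx, hx.trans hxy⟩, ⟨hxy.trans hy, hy⟩⟩
  obtain ⟨⟨s1, t1⟩, ⟨hs1, hst1, ht1⟩, hmin⟩ :=
    hc.exists_isMinOn ⟨(s, t), hs, hst, ht⟩ (RR_continuous a).continuousOn
  simp only at hs1 hst1 ht1
  have hm : ∀ x y : ℝ, 0 ≤ x → x ≤ y → y ≤ 1 → RR a s1 t1 ≤ RR a x y :=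
    fun x y hx hxy hy => hmin (a := (x, y)) ⟨hx, hxy, hy⟩
  refine le_trans ?_ (hm s t hs hst ht)
  rcases hst1.eq_or_lt with he | hlt
  · subst he
    exact diag_bound a s1 h1 h2 hs1 ht1
  · refine crit a s1 t1 h1 h2 h6 h7 hs1 hlt ht1 ?_ ?_
    · intro h0
      have hl : IsLocalMin (fun s => RR a s t1) s1 := by
        filter_upwards [Ioo_mem_nhds h0 hlt] with x hx
        exact hm x t1 hx.1.le hx.2.le ht1
      have := hl.hasDerivAt_eq_zero (deriv_S a s1 t1)
      linarith
    · intro h0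
      have hl : IsLocalMin (fun t => RR a s1 t) t1 := by
        filter_upwards [Ioo_mem_nhds hlt h0] with x hx
        exact hm s1 x hs1 hx.1.le hx.2.le
      have := hl.hasDerivAt_eq_zero (deriv_T a s1 t1)
      linarith

lemma RR_opt (a : ℝ) (h1 : 0.647 ≤ a) (h2 : a ≤ 0.932) (h6 : 0 ≤ 8*a^2+a-4)
    (h7 : 7*a^3-5*a-1 ≤ 0) (s t : ℝ) (es : s = (2*a+1)/(7*a+1))
    (et : t = (8*a^2+6*a+1)/(7*a^2+8*a+1)) :
    0 ≤ s ∧ s ≤ t ∧ t ≤ 1 ∧ sqp (s - a*t) = 0 ∧ RR a s t = KK a := by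
  have hp : 0 < 7*a+1 := by linarith
  have hq : 0 < 7*a^2+8*a+1 := by positivity
  have fs : (7*a+1)*s = 2*a+1 := by rw [es]; field_simp
  have ft : (7*a^2+8*a+1)*t = 8*a^2+6*a+1 := by rw [et]; field_simp
  have fs' : (7*a^2+8*a+1)*s = (2*a+1)*(a+1) := by linear_combination (a+1)*fs
  have key : ∀ u : ℝ, (7*a^2+8*a+1)*u ≤ 0 → u ≤ 0 := fun u hu => by
    by_contra h
    push Not at h
    have := mul_pos hq h
    linarith
  have key' : ∀ u v : ℝ, (7*a^2+8*a+1)*u = v → v ≤ 0 → u ≤ 0 := fun u v h hv => key u (by linarith)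
  have m := mul_nonneg (sub_nonneg.2 h1) (sub_nonneg.2 h2)
  have m2 : 0.647*0.647 ≤ a^2 := by nlinarith
  have m3 : a^2 * 0.647 ≤ a^3 := by nlinarith [sq_nonneg a]
  have m4 : a^3 ≤ a^2*0.932 := by nlinarith [sq_nonneg a]
  have b1 : 0 ≤ s := by rw [es]; positivity
  have b2 : s - t ≤ 0 := key' _ ((2*a+1)*(a+1) - (8*a^2+6*a+1)) (by linear_combination fs' - ft) (by nlinarith)
  have b3 : t - 1 ≤ 0 := key' _ ((8*a^2+6*a+1) - (7*a^2+8*a+1)) (by linear_combination ft) (by nlinarith)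
  have b4 : s - a*t ≤ 0 := key' _ ((2*a+1)*(a+1) - a*(8*a^2+6*a+1)) (by linear_combination fs' - a*ft) (by nlinarith)
  have c1 : 1-a-s ≤ 0 := key' _ ((1-a)*(7*a^2+8*a+1)-(2*a+1)*(a+1)) (by linear_combination -fs') (by nlinarith)
  have c2 : 1-a-t ≤ 0 := by linarith
  have c3 : 1-t-a*t ≤ 0 := key' _ ((7*a^2+8*a+1)-(1+a)*(8*a^2+6*a+1)) (by linear_combination -(1+a)*ft) (by nlinarith)
  have c4 : a-t ≤ 0 := key' _ (a*(7*a^2+8*a+1)-(8*a^2+6*a+1)) (by linear_combination -ft) (by nlinarith)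
  have c5 : s-a ≤ 0 := key' _ ((2*a+1)*(a+1)-a*(7*a^2+8*a+1)) (by linear_combination fs') (by nlinarith)
  have c6 : (1+a)*s-1 ≤ 0 := key' _ ((1+a)*((2*a+1)*(a+1))-(7*a^2+8*a+1)) (by linear_combination (1+a)*fs') (by nlinarith)
  have c7 : 1-s-a*t ≤ 0 := key' _ ((7*a^2+8*a+1)-(2*a+1)*(a+1)-a*(8*a^2+6*a+1)) (by linear_combination -fs'-a*ft) (by nlinarith)
  have c8 : 1-t-a*s ≤ 0 := key' _ ((7*a^2+8*a+1)-(8*a^2+6*a+1)-a*((2*a+1)*(a+1))) (by linear_combination -ft-a*fs') (by nlinarith)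
  have c9 : t-s-a ≤ 0 := key' _ ((8*a^2+6*a+1)-(2*a+1)*(a+1)-a*(7*a^2+8*a+1)) (by linear_combination ft-fs') (by nlinarith)
  refine ⟨b1, by linarith, by linarith, sqp_neg b4, ?_⟩
  unfold RR
  rw [sqp_neg c1, sqp_neg c2, sqp_neg c3, sqp_neg c4, sqp_neg c5, sqp_neg c6, sqp_neg c7,
    sqp_neg c8, sqp_neg c9, KK_quad a s t h1, ← es, ← et]
  ring

/-- For `α₆ ≤ a ≤ α₇`, where `α₆ = (√129 − 1)/16` (positive root of `8a² + a − 4`)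
and `α₇` is the root of `7a³ − 5a − 1` in `[0,1]`, the minimum of `A(s,t,a)` over
`0 ≤ s ≤ t ≤ 1` is `(−2a² + 3a + 2)/(2(a+1)(7a+1))`, attained at
`s₀ = (2a+1)/(7a+1)`, `t₀ = (8a²+6a+1)/(7a²+8a+1)`. -/
theorem area_min_alpha6_alpha7 (β : ℝ) (hβ : β ∈ Set.Icc (0 : ℝ) 1)
    (hroot : 7 * β ^ 3 - 5 * β - 1 = 0) (a : ℝ)
    (ha1 : (Real.sqrt 129 - 1) / 16 ≤ a) (ha2 : a ≤ β) :
    (∀ s t : ℝ, 0 ≤ s → s ≤ t → t ≤ 1 →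
      (-2 * a ^ 2 + 3 * a + 2) / (2 * (a + 1) * (7 * a + 1)) ≤ areaA a s t) ∧
    areaA a ((2 * a + 1) / (7 * a + 1))
        ((8 * a ^ 2 + 6 * a + 1) / (7 * a ^ 2 + 8 * a + 1)) =
      (-2 * a ^ 2 + 3 * a + 2) / (2 * (a + 1) * (7 * a + 1)) := by
  have hsq : Real.sqrt 129 ≤ 16*a+1 := by linarith
  have hs0 := Real.sq_sqrt (show (0:ℝ) ≤ 129 by norm_num)
  have hsn := Real.sqrt_nonneg 129
  have h6 : 0 ≤ 8*a^2+a-4 := by nlinarith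
  have ha0 : 0 ≤ a := by
    have : (1:ℝ) ≤ Real.sqrt 129 := Real.one_le_sqrt.2 (by norm_num)
    linarith
  have h1 : 0.647 ≤ a := by nlinarith
  obtain ⟨hb0, hb1⟩ := hβ
  have hb2 : β ≤ 0.932 := by
    by_contra h
    push Not at h
    have hb3 : 0.868 < β^2 := by nlinarith
    nlinarith
  have h2 : a ≤ 0.932 := ha2.trans hb2
  have h7 : 7*a^3-5*a-1 ≤ 0 := by
    have h3 : 0 ≤ 7*(β^2+a*β+a^2) - 5 := by nlinarith
    nlinarith [mul_nonneg (sub_nonneg.2 ha2) h3]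
  have ha : 0 < a := by linarith
  have eK : (-2 * a ^ 2 + 3 * a + 2) / (2 * (a + 1) * (7 * a + 1)) = KK a / (2*a) := by
    unfold KK
    field_simp
  rw [eK]
  constructor
  · intro s t hs hst ht
    rw [area_RR a s t ha (by linarith) hs hst ht]
    have k1 := RR_lower a s t h1 h2 h6 h7 hs hst ht
    have k2 := sqp_nonneg (s - a*t)
    gcongr
    linarith
  · obtain ⟨k1, k2, k3, k4, k5⟩ := RR_opt a h1 h2 h6 h7 _ _ rfl rfl
    rw [area_RR a _ _ ha (by linarith) k1 k2 k3, k4, k5, add_zero]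
end

section
/- Let a > 0 and 0 ≤ s ≤ t ≤ 1 be real numbers with a·s > 1. Then the area A(s,t,a) equals (s² − 2ts + 2s + t² − 2t + 1)/(2a). -/
open MeasureTheory Set in
theorem aux_lint (b c : ℝ) (h : b ≤ c) (g : ℝ → ℝ) (hg : Continuous g)
    (h0 : ∀ x ∈ Icc b c, 0 ≤ g x) :
    ∫⁻ x in Ioc b c, ENNReal.ofReal (g x) = ENNReal.ofReal (∫ x in b..c, g x) := by
  rw [intervalIntegral.integral_of_le h, ofReal_integral_eq_lintegral_ofReal]
  · exact (hg.integrableOn_Ioc)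
  · filter_upwards [ae_restrict_mem measurableSet_Ioc] with x hx
    exact h0 x ⟨hx.1.le, hx.2⟩

open MeasureTheory Set in
/-- In region (R₁), i.e. when `as > 1`, the area is
`A(s,t,a) = (s² − 2ts + 2s + t² − 2t + 1)/(2a)`. -/
theorem area_region_R1 (a s t : ℝ) (ha : 0 < a) (hs : 0 ≤ s) (hst : s ≤ t)
    (ht : t ≤ 1) (hC1 : 1 < a * s) :
    areaA a s t = (s ^ 2 - 2 * t * s + 2 * s + t ^ 2 - 2 * t + 1) / (2 * a) := by
  unfold areaA
  have hm : MeasurableSet {p : ℝ × ℝ |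
    ((p.1 ∈ Set.Icc 0 s ∪ Set.Ioc t 1) ∧ (p.2 ∈ Set.Icc 0 s ∪ Set.Ioc t 1) ∧
      (p.1 + a * p.2 ∈ Set.Icc 0 s ∪ Set.Ioc t 1)) ∨
    (p.1 ∈ Set.Ioc s t ∧ p.2 ∈ Set.Ioc s t ∧ p.1 + a * p.2 ∈ Set.Ioc s t)} := by
    have hR : MeasurableSet (Set.Icc 0 s ∪ Set.Ioc t 1) := measurableSet_Icc.union measurableSet_Ioc
    have hB : MeasurableSet (Set.Ioc s t) := measurableSet_Ioc
    have h3 : Measurable (fun p : ℝ × ℝ => p.1 + a * p.2) := by fun_prop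
    exact ((measurable_fst hR).inter ((measurable_snd hR).inter (h3 hR))).union
      ((measurable_fst hB).inter ((measurable_snd hB).inter (h3 hB)))
  have hy : ∀ x y : ℝ, 0 ≤ x → x + a * y ≤ 1 → y ≤ s := by
    intro x y hx h
    by_contra hc
    push Not at hc
    nlinarith [mul_lt_mul_of_pos_left hc ha]
  rw [Measure.volume_eq_prod, Measure.prod_apply hm]
  have key : ∀ x : ℝ, volume (Prod.mk x ⁻¹' {p : ℝ × ℝ |
    ((p.1 ∈ Set.Icc 0 s ∪ Set.Ioc t 1) ∧ (p.2 ∈ Set.Icc 0 s ∪ Set.Ioc t 1) ∧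
      (p.1 + a * p.2 ∈ Set.Icc 0 s ∪ Set.Ioc t 1)) ∨
    (p.1 ∈ Set.Ioc s t ∧ p.2 ∈ Set.Ioc s t ∧ p.1 + a * p.2 ∈ Set.Ioc s t)}) =
    (Icc 0 s).indicator (fun x => ENNReal.ofReal ((s - x) / a + (1 - t) / a)) x +
    (Ioc t 1).indicator (fun x => ENNReal.ofReal ((1 - x) / a)) x := by
    intro x
    by_cases h1 : x ∈ Icc 0 s
    · have h2 : x ∉ Ioc t 1 := fun h => absurd h.1 (not_lt.2 (h1.2.trans hst))
      have e : (Prod.mk x ⁻¹' {p : ℝ × ℝ |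
        ((p.1 ∈ Set.Icc 0 s ∪ Set.Ioc t 1) ∧ (p.2 ∈ Set.Icc 0 s ∪ Set.Ioc t 1) ∧
          (p.1 + a * p.2 ∈ Set.Icc 0 s ∪ Set.Ioc t 1)) ∨
        (p.1 ∈ Set.Ioc s t ∧ p.2 ∈ Set.Ioc s t ∧ p.1 + a * p.2 ∈ Set.Ioc s t)}) =
        Icc 0 ((s - x) / a) ∪ Ioc ((t - x) / a) ((1 - x) / a) := by
        ext y
        simp only [mem_preimage, mem_setOf_eq, mem_union, mem_Icc, mem_Ioc, le_div_iff₀ ha,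
          div_lt_iff₀ ha] at *
        have := hy x y h1.1
        constructor
        · rintro (⟨_, hyy, hz⟩ | ⟨h, _⟩)
          · have : 0 ≤ y := by rcases hyy with h | h <;> linarith [h.1]
            rcases hz with hz | hz
            · left; constructor <;> linarith
            · right; constructor <;> linarith
          · linarith
        · rintro (⟨h0, h⟩ | ⟨h, h'⟩)
          · have := mul_nonneg ha.le h0
            exact Or.inl ⟨Or.inl h1, Or.inl ⟨h0, hy x y h1.1 (by linarith)⟩,
              Or.inl ⟨by linarith, by linarith⟩⟩
          · have h0 : 0 ≤ y := by
              by_contra hc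
              push Not at hc
              nlinarith [mul_pos_of_neg_of_neg hc (neg_lt_zero.2 ha)]
            exact Or.inl ⟨Or.inl h1, Or.inl ⟨h0, hy x y h1.1 (by linarith)⟩,
              Or.inr ⟨by linarith, by linarith⟩⟩
      have hd : Disjoint (Icc 0 ((s - x) / a)) (Ioc ((t - x) / a) ((1 - x) / a)) := by
        rw [Set.disjoint_left]
        intro y hy1 hy2
        have h3 := hy1.2
        have h4 := hy2.1
        have : (s - x) / a ≤ (t - x) / a := by gcongr
        linarith
      rw [e, measure_union hd measurableSet_Ioc, Real.volume_Icc, Real.volume_Ioc,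
        indicator_of_mem h1, indicator_of_notMem h2, add_zero, ENNReal.ofReal_add
          (div_nonneg (by linarith [h1.2]) ha.le) (div_nonneg (by linarith) ha.le)]
      congr 2 <;> ring
    · rw [indicator_of_notMem h1, zero_add]
      by_cases h2 : x ∈ Ioc t 1
      · have e : (Prod.mk x ⁻¹' {p : ℝ × ℝ |
          ((p.1 ∈ Set.Icc 0 s ∪ Set.Ioc t 1) ∧ (p.2 ∈ Set.Icc 0 s ∪ Set.Ioc t 1) ∧
            (p.1 + a * p.2 ∈ Set.Icc 0 s ∪ Set.Ioc t 1)) ∨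
          (p.1 ∈ Set.Ioc s t ∧ p.2 ∈ Set.Ioc s t ∧ p.1 + a * p.2 ∈ Set.Ioc s t)}) =
          Icc 0 ((1 - x) / a) := by
          ext y
          simp only [mem_preimage, mem_setOf_eq, mem_union, mem_Icc, mem_Ioc, le_div_iff₀ ha] at *
          constructor
          · rintro (⟨_, hyy, hz⟩ | ⟨h, _⟩)
            · have : 0 ≤ y := by rcases hyy with h | h <;> linarith [h.1]
              rcases hz with hz | hz <;> constructor <;> linarith
            · linarith
          · rintro ⟨h0, h⟩
            have := mul_nonneg ha.le h0
            exact Or.inl ⟨Or.inr h2, Or.inl ⟨h0, hy x y (by linarith) (by linarith)⟩,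
              Or.inr ⟨by linarith, by linarith⟩⟩
        rw [e, Real.volume_Icc, indicator_of_mem h2, sub_zero]
      · rw [indicator_of_notMem h2]
        convert measure_empty (μ := (volume : Measure ℝ))
        ext y
        simp only [mem_preimage, mem_setOf_eq, mem_empty_iff_false, iff_false]
        rintro (⟨h | h, _⟩ | ⟨h, h', h''⟩)
        · exact h1 h
        · exact h2 h
        · have := hy x y (by linarith [h.1]) (by linarith [h''.2])
          linarith [h'.1]
  simp_rw [key]
  rw [lintegral_add_right _ (Measurable.indicator (by fun_prop) measurableSet_Ioc),
    lintegral_indicator measurableSet_Icc, lintegral_indicator measurableSet_Ioc,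
    setLIntegral_congr Ioc_ae_eq_Icc.symm,
    aux_lint _ _ hs _ (by fun_prop) (fun x hx => add_nonneg
      (div_nonneg (by linarith [hx.2]) ha.le) (div_nonneg (by linarith) ha.le)),
    aux_lint _ _ ht _ (by fun_prop) (fun x hx => div_nonneg (by linarith [hx.2]) ha.le)]
  have i1 : ∫ x in (0:ℝ)..s, ((s - x) / a + (1 - t) / a) = (s^2/2 + s * (1 - t)) / a := by
    have : ∀ x : ℝ, (s - x) / a + (1 - t) / a = (s + 1 - t - x) / a := fun x => by ring
    simp_rw [this]
    rw [intervalIntegral.integral_div, intervalIntegral.integral_sub (by simp) (by simp)]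
    simp
    ring
  have i2 : ∫ x in t..1, ((1 - x) / a) = ((1 - t)^2/2) / a := by
    rw [intervalIntegral.integral_div, intervalIntegral.integral_sub (by simp) (by simp)]
    simp
    ring
  have : 0 ≤ 1 - t := by linarith
  rw [i1, i2, ← ENNReal.ofReal_add (by positivity) (by positivity),
    ENNReal.toReal_ofReal (by positivity)]
  field_simp
  ring
end

section
/- Let a > 0 and 0 ≤ s ≤ t ≤ 1 be real numbers satisfying 1 − as − s ≥ 0, 1 − as − t < 0, t − as ≥ 0, and 1 − at < 0. Then the area A(s,t,a) equals (a²s² + 2as² + 2s² − 2ats − 2ts + 2t² − 2t + 1)/(2a). -/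
open MeasureTheory Set in
lemma tri_dec (T : Set (ℝ × ℝ)) (hT : MeasurableSet T) (a c d : ℝ) (ha : 0 < a) (hcd : c ≤ d)
    (h1 : ∀ x, c < x → x < d → volume (Prod.mk x ⁻¹' T) = ENNReal.ofReal ((d - x) / a))
    (h2 : ∀ x, x < c ∨ d < x → Prod.mk x ⁻¹' T = ∅) :
    volume T = ENNReal.ofReal ((d - c) ^ 2 / (2 * a)) := by
  rw [Measure.volume_eq_prod, Measure.prod_apply hT]
  have e : (fun x => volume (Prod.mk x ⁻¹' T)) =ᵐ[volume]
      (Ioc c d).indicator (fun x => ENNReal.ofReal ((d - x) / a)) := by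
    have hc : ∀ᵐ x : ℝ, x ≠ c := by simp [ae_iff]
    have hd : ∀ᵐ x : ℝ, x ≠ d := by simp [ae_iff]
    filter_upwards [hc, hd] with x hxc hxd
    by_cases hx : x ∈ Ioc c d
    · rw [indicator_of_mem hx]
      exact h1 x hx.1 (lt_of_le_of_ne hx.2 hxd)
    · rw [indicator_of_notMem hx, h2 x, measure_empty]
      by_contra! hh
      exact hx ⟨lt_of_le_of_ne hh.1 (Ne.symm hxc), hh.2⟩
  rw [lintegral_congr_ae e, lintegral_indicator measurableSet_Ioc,
    ← ofReal_integral_eq_lintegral_ofReal]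
  · rw [← intervalIntegral.integral_of_le hcd]
    congr 1
    rw [intervalIntegral.integral_div, intervalIntegral.integral_sub (by simp) (by simp)]
    simp only [intervalIntegral.integral_const, integral_id, smul_eq_mul]
    field_simp
    ring
  · have : Continuous (fun x : ℝ => (d - x) / a) := by fun_prop
    exact (this.integrableOn_Icc (a := c) (b := d)).mono_set Ioc_subset_Icc_self
  · filter_upwards [ae_restrict_mem measurableSet_Ioc] with x hx
    exact div_nonneg (by linarith [hx.2]) ha.le

open MeasureTheory Set in
lemma tri_inc (T : Set (ℝ × ℝ)) (hT : MeasurableSet T) (a c d : ℝ) (ha : 0 < a) (hcd : c ≤ d)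
    (h1 : ∀ x, c < x → x < d → volume (Prod.mk x ⁻¹' T) = ENNReal.ofReal ((x - c) / a))
    (h2 : ∀ x, x < c ∨ d < x → Prod.mk x ⁻¹' T = ∅) :
    volume T = ENNReal.ofReal ((d - c) ^ 2 / (2 * a)) := by
  rw [Measure.volume_eq_prod, Measure.prod_apply hT]
  have e : (fun x => volume (Prod.mk x ⁻¹' T)) =ᵐ[volume]
      (Ioc c d).indicator (fun x => ENNReal.ofReal ((x - c) / a)) := by
    have hc : ∀ᵐ x : ℝ, x ≠ c := by simp [ae_iff]
    have hd : ∀ᵐ x : ℝ, x ≠ d := by simp [ae_iff]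
    filter_upwards [hc, hd] with x hxc hxd
    by_cases hx : x ∈ Ioc c d
    · rw [indicator_of_mem hx]
      exact h1 x hx.1 (lt_of_le_of_ne hx.2 hxd)
    · rw [indicator_of_notMem hx, h2 x, measure_empty]
      by_contra! hh
      exact hx ⟨lt_of_le_of_ne hh.1 (Ne.symm hxc), hh.2⟩
  rw [lintegral_congr_ae e, lintegral_indicator measurableSet_Ioc,
    ← ofReal_integral_eq_lintegral_ofReal]
  · rw [← intervalIntegral.integral_of_le hcd]
    congr 1
    rw [intervalIntegral.integral_div, intervalIntegral.integral_sub (by simp) (by simp)]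
    simp only [intervalIntegral.integral_const, integral_id, smul_eq_mul]
    field_simp
    ring
  · have : Continuous (fun x : ℝ => (x - c) / a) := by fun_prop
    exact (this.integrableOn_Icc (a := c) (b := d)).mono_set Ioc_subset_Icc_self
  · filter_upwards [ae_restrict_mem measurableSet_Ioc] with x hx
    exact div_nonneg (by linarith [hx.1]) ha.le

open MeasureTheory Set in
lemma meas_box (a : ℝ) (I J K : Set ℝ) (hI : MeasurableSet I) (hJ : MeasurableSet J)
    (hK : MeasurableSet K) :
    MeasurableSet {p : ℝ × ℝ | p.1 ∈ I ∧ p.2 ∈ J ∧ p.1 + a * p.2 ∈ K} := by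
  have h : Measurable (fun p : ℝ × ℝ => p.1 + a * p.2) := by fun_prop
  exact (measurable_fst hI).inter ((measurable_snd hJ).inter (h hK))

/-- In region (R₇), characterized by `1 − as − s ≥ 0`, `1 − as − t < 0`,
`t − as ≥ 0` and `1 − at < 0`, the area is
`A(s,t,a) = (a²s² + 2as² + 2s² − 2ats − 2ts + 2t² − 2t + 1)/(2a)`. -/
theorem area_region_R7 (a s t : ℝ) (ha : 0 < a) (hs : 0 ≤ s) (hst : s ≤ t)
    (ht : t ≤ 1) (hC2 : 0 ≤ 1 - a * s - s) (hC3 : 1 - a * s - t < 0)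
    (hC4 : 0 ≤ t - a * s) (hC6 : 1 - a * t < 0) :
    areaA a s t = (a ^ 2 * s ^ 2 + 2 * a * s ^ 2 + 2 * s ^ 2 - 2 * a * t * s -
      2 * t * s + 2 * t ^ 2 - 2 * t + 1) / (2 * a) := by
  have ha1 : 1 < a := by nlinarith
  have hs1 : s ≤ 1 := by linarith
  have has : 0 ≤ a * s := by positivity
  have hss : s ≤ a * s := by nlinarith
  let B : Set ℝ → Set ℝ → Set ℝ → Set (ℝ × ℝ) := fun I J K =>
    {p : ℝ × ℝ | p.1 ∈ I ∧ p.2 ∈ J ∧ p.1 + a * p.2 ∈ K}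
  have hB : B = fun I J K => {p : ℝ × ℝ | p.1 ∈ I ∧ p.2 ∈ J ∧ p.1 + a * p.2 ∈ K} := rfl
  have m1 : MeasurableSet (B (Set.Icc 0 s) (Set.Icc 0 s) (Set.Icc 0 s)) :=
    meas_box a _ _ _ measurableSet_Icc measurableSet_Icc measurableSet_Icc
  have m2 : MeasurableSet (B (Set.Icc 0 s) (Set.Icc 0 s) (Set.Ioc t 1)) :=
    meas_box a _ _ _ measurableSet_Icc measurableSet_Icc measurableSet_Ioc
  have m3 : MeasurableSet (B (Set.Ioc t 1) (Set.Icc 0 s) (Set.Ioc t 1)) :=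
    meas_box a _ _ _ measurableSet_Ioc measurableSet_Icc measurableSet_Ioc
  have m4 : MeasurableSet (B (Set.Ioc s t) (Set.Ioc s t) (Set.Ioc s t)) :=
    meas_box a _ _ _ measurableSet_Ioc measurableSet_Ioc measurableSet_Ioc
  have v1 : MeasureTheory.volume (B (Set.Icc 0 s) (Set.Icc 0 s) (Set.Icc 0 s))
      = ENNReal.ofReal ((s - 0) ^ 2 / (2 * a)) := by
    refine tri_dec _ m1 a 0 s ha hs ?_ ?_
    · intro x hx0 hxs
      have : Prod.mk x ⁻¹' (B (Set.Icc 0 s) (Set.Icc 0 s) (Set.Icc 0 s))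
          = Set.Icc 0 ((s - x) / a) := by
        ext y
        simp only [hB, Set.mem_preimage, Set.mem_ofPred_eq, Set.mem_Icc, le_div_iff₀ ha]
        constructor
        · rintro ⟨-, ⟨h1, h2⟩, h3, h4⟩
          exact ⟨h1, by linarith⟩
        · rintro ⟨h1, h2⟩
          exact ⟨⟨hx0.le, hxs.le⟩, ⟨h1, by nlinarith⟩, by nlinarith, by linarith⟩
      rw [this, Real.volume_Icc, sub_zero]
    · intro x hx
      ext y
      simp only [hB, Set.mem_preimage, Set.mem_ofPred_eq, Set.mem_Icc, Set.mem_empty_iff_false,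
        iff_false]
      rintro ⟨⟨h1, h2⟩, -⟩
      rcases hx with hx | hx <;> linarith
  have v3 : MeasureTheory.volume (B (Set.Ioc t 1) (Set.Icc 0 s) (Set.Ioc t 1))
      = ENNReal.ofReal ((1 - t) ^ 2 / (2 * a)) := by
    refine tri_dec _ m3 a t 1 ha ht ?_ ?_
    · intro x hx0 hxs
      have : Prod.mk x ⁻¹' (B (Set.Ioc t 1) (Set.Icc 0 s) (Set.Ioc t 1))
          = Set.Icc 0 ((1 - x) / a) := by
        ext y
        simp only [hB, Set.mem_preimage, Set.mem_ofPred_eq, Set.mem_Icc, Set.mem_Ioc,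
          le_div_iff₀ ha]
        constructor
        · rintro ⟨-, ⟨h1, h2⟩, h3, h4⟩
          exact ⟨h1, by linarith⟩
        · rintro ⟨h1, h2⟩
          exact ⟨⟨hx0, hxs.le⟩, ⟨h1, by nlinarith⟩, by nlinarith, by linarith⟩
      rw [this, Real.volume_Icc, sub_zero]
    · intro x hx
      ext y
      simp only [hB, Set.mem_preimage, Set.mem_ofPred_eq, Set.mem_Ioc, Set.mem_empty_iff_false,
        iff_false]
      rintro ⟨⟨h1, h2⟩, -⟩
      rcases hx with hx | hx <;> linarith
  have v24 : MeasureTheory.volume (B (Set.Icc 0 s) (Set.Icc 0 s) (Set.Ioc t 1))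
      + MeasureTheory.volume (B (Set.Ioc s t) (Set.Ioc s t) (Set.Ioc s t))
      = ENNReal.ofReal ((s - (t - a * s)) ^ 2 / (2 * a)) := by
    rcases le_total (t - a * s) s with hc | hc
    · have e4 : B (Set.Ioc s t) (Set.Ioc s t) (Set.Ioc s t) = ∅ := by
        ext ⟨x, y⟩
        simp only [hB, Set.mem_ofPred_eq, Set.mem_Ioc, Set.mem_empty_iff_false, iff_false]
        rintro ⟨⟨h1, h2⟩, ⟨h3, h4⟩, h5, h6⟩
        nlinarith
      rw [e4, MeasureTheory.measure_empty, add_zero]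
      refine tri_inc _ m2 a (t - a * s) s ha hc ?_ ?_
      · intro x hx0 hxs
        have : Prod.mk x ⁻¹' (B (Set.Icc 0 s) (Set.Icc 0 s) (Set.Ioc t 1))
            = Set.Ioc ((t - x) / a) s := by
          ext y
          simp only [hB, Set.mem_preimage, Set.mem_ofPred_eq, Set.mem_Icc, Set.mem_Ioc,
            div_lt_iff₀ ha]
          constructor
          · rintro ⟨-, ⟨h1, h2⟩, h3, h4⟩
            exact ⟨by linarith, h2⟩
          · rintro ⟨h1, h2⟩
            exact ⟨⟨by linarith, hxs.le⟩, ⟨by nlinarith, h2⟩, by linarith, by nlinarith⟩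
        rw [this, Real.volume_Ioc]
        congr 1
        field_simp
        ring
      · intro x hx
        ext y
        simp only [hB, Set.mem_preimage, Set.mem_ofPred_eq, Set.mem_Icc, Set.mem_Ioc,
          Set.mem_empty_iff_false, iff_false]
        rintro ⟨⟨h1, h2⟩, ⟨h3, h4⟩, h5, h6⟩
        rcases hx with hx | hx <;> nlinarith
    · have e2 : B (Set.Icc 0 s) (Set.Icc 0 s) (Set.Ioc t 1) = ∅ := by
        ext ⟨x, y⟩
        simp only [hB, Set.mem_ofPred_eq, Set.mem_Icc, Set.mem_Ioc, Set.mem_empty_iff_false,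
          iff_false]
        rintro ⟨⟨h1, h2⟩, ⟨h3, h4⟩, h5, h6⟩
        nlinarith
      rw [e2, MeasureTheory.measure_empty, zero_add,
        show (s - (t - a * s)) ^ 2 = ((t - a * s) - s) ^ 2 by ring]
      refine tri_dec _ m4 a s (t - a * s) ha hc ?_ ?_
      · intro x hx0 hxs
        have : Prod.mk x ⁻¹' (B (Set.Ioc s t) (Set.Ioc s t) (Set.Ioc s t))
            = Set.Ioc s ((t - x) / a) := by
          ext y
          simp only [hB, Set.mem_preimage, Set.mem_ofPred_eq, Set.mem_Ioc, le_div_iff₀ ha]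
          constructor
          · rintro ⟨-, ⟨h1, h2⟩, h3, h4⟩
            exact ⟨h1, by linarith⟩
          · rintro ⟨h1, h2⟩
            exact ⟨⟨hx0, by linarith⟩, ⟨h1, by nlinarith⟩, by nlinarith, by linarith⟩
        rw [this, Real.volume_Ioc]
        congr 1
        field_simp
        ring
      · intro x hx
        ext y
        simp only [hB, Set.mem_preimage, Set.mem_ofPred_eq, Set.mem_Ioc,
          Set.mem_empty_iff_false, iff_false]
        rintro ⟨⟨h1, h2⟩, ⟨h3, h4⟩, h5, h6⟩
        rcases hx with hx | hx <;> nlinarith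
  have hU : {p : ℝ × ℝ |
    ((p.1 ∈ Set.Icc 0 s ∪ Set.Ioc t 1) ∧ (p.2 ∈ Set.Icc 0 s ∪ Set.Ioc t 1) ∧
      (p.1 + a * p.2 ∈ Set.Icc 0 s ∪ Set.Ioc t 1)) ∨
    (p.1 ∈ Set.Ioc s t ∧ p.2 ∈ Set.Ioc s t ∧ p.1 + a * p.2 ∈ Set.Ioc s t)}
      = B (Set.Icc 0 s) (Set.Icc 0 s) (Set.Icc 0 s) ∪
        (B (Set.Ioc t 1) (Set.Icc 0 s) (Set.Ioc t 1) ∪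
        (B (Set.Icc 0 s) (Set.Icc 0 s) (Set.Ioc t 1) ∪
          B (Set.Ioc s t) (Set.Ioc s t) (Set.Ioc s t))) := by
    ext ⟨x, y⟩
    simp only [hB, Set.mem_union, Set.mem_ofPred_eq]
    constructor
    · rintro (⟨hx, hy, hz⟩ | h)
      · have hx0 : 0 ≤ x := by
          rcases hx with h | h
          · exact h.1
          · linarith [h.1]
        have hy' : y ∈ Set.Icc 0 s := by
          rcases hy with h | h
          · exact h
          · exfalso
            have h1 := h.1
            have h2 : x + a * y ≤ 1 := by
              rcases hz with h | h
              · linarith [h.2]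
              · exact h.2
            nlinarith
        have hay : 0 ≤ a * y := mul_nonneg ha.le hy'.1
        rcases hx with hx | hx <;> rcases hz with hz | hz
        · exact Or.inl ⟨hx, hy', hz⟩
        · exact Or.inr (Or.inr (Or.inl ⟨hx, hy', hz⟩))
        · exfalso
          linarith [hx.1, hz.2]
        · exact Or.inr (Or.inl ⟨hx, hy', hz⟩)
      · exact Or.inr (Or.inr (Or.inr h))
    · tauto
  have d1 : Disjoint (B (Set.Icc 0 s) (Set.Icc 0 s) (Set.Icc 0 s))
        (B (Set.Ioc t 1) (Set.Icc 0 s) (Set.Ioc t 1) ∪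
        (B (Set.Icc 0 s) (Set.Icc 0 s) (Set.Ioc t 1) ∪
          B (Set.Ioc s t) (Set.Ioc s t) (Set.Ioc s t))) := by
    rw [Set.disjoint_left]
    rintro ⟨x, y⟩
    simp only [hB, Set.mem_union, Set.mem_ofPred_eq, Set.mem_Icc, Set.mem_Ioc]
    rintro ⟨h1, h2, h3⟩ (h | h | h) <;> obtain ⟨h4, h5, h6⟩ := h <;>
      linarith [h3.2, h6.1]
  have d2 : Disjoint (B (Set.Ioc t 1) (Set.Icc 0 s) (Set.Ioc t 1))
        (B (Set.Icc 0 s) (Set.Icc 0 s) (Set.Ioc t 1) ∪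
          B (Set.Ioc s t) (Set.Ioc s t) (Set.Ioc s t)) := by
    rw [Set.disjoint_left]
    rintro ⟨x, y⟩
    simp only [hB, Set.mem_union, Set.mem_ofPred_eq, Set.mem_Icc, Set.mem_Ioc]
    rintro ⟨h1, h2, h3⟩ (h | h) <;> obtain ⟨h4, h5, h6⟩ := h <;>
      linarith [h1.1, h4.2]
  have d3 : Disjoint (B (Set.Icc 0 s) (Set.Icc 0 s) (Set.Ioc t 1))
          (B (Set.Ioc s t) (Set.Ioc s t) (Set.Ioc s t)) := by
    rw [Set.disjoint_left]
    rintro ⟨x, y⟩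
    simp only [hB, Set.mem_ofPred_eq, Set.mem_Icc, Set.mem_Ioc]
    rintro ⟨h1, h2, h3⟩ ⟨h4, h5, h6⟩
    linarith [h1.2, h4.1]
  unfold areaA
  rw [hU, MeasureTheory.measure_union d1 (m3.union (m2.union m4)),
    MeasureTheory.measure_union d2 (m2.union m4), MeasureTheory.measure_union d3 m4, v1, v3, v24,
    ← ENNReal.ofReal_add (by positivity) (by positivity),
    ← ENNReal.ofReal_add (by positivity) (by positivity),
    ENNReal.toReal_ofReal (by positivity)]
  field_simp
  ring
end
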